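/- Let $k$ be an algebraically closed field of arbitrary characteristic, let $X$ be a projective variety over $k$ (a reduced and irreducible projective $k$-scheme) of dimension $n$, let $L$ be a line bundle on $X$, and let $H$ be a reduced irreducible effective Cartier divisor on $X$ not contained in the singular locus of $X$. Let $W$ be a closed subscheme of $X$ not containing $H$, and let $m_1,\dots,m_r$ be positive integers. Write $W''=\mathrm{Tr}_H(W)=H\cap W$ for the trace of $W$ on $H$, i.e. the closed subscheme of $H$ with ideal sheaf $(\mathcal I_H+\mathcal I_W)/\mathcal I_H$, and $W'=\mathrm{Res}_H(W)$ for the residual, i.e. the closed subscheme of $X$ with ideal sheaf the conductor $(\mathcal I_W:\mathcal I_H)$. For a closed point $P$ of $X$ let $P^m$ be the subscheme of $X$ defined by $\mathcal I_P^m$, and for a closed point $z$ of $H$ let $D_m(z)=z^m\cap (m-1)H$, i.e. the subscheme of $X$ defined by $\mathcal I_z^m+\mathcal I_H^{m-1}$. A property is said to hold for generic points $P_1,\dots,P_r$ of a $k$-variety $Y$ if it holds for all $r$-tuples of closed points of $Y$ lying in some dense open subset of $Y^r=Y\times_k\cdots\times_k Y$. Suppose that for generic points $Q_1,\dots,Q_r$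 of $H$ (Dime) $H^0(H,\mathcal I_{W''\cup Q_1\cup\cdots\cup Q_r}\otimes L|_H)=0$, and (Degue) $H^0(X,\mathcal I_{W'\cup D_{m_1}(Q_1)\cup\cdots\cup D_{m_r}(Q_r)}\otimes L(-H))=0$. Then for generic points $P_1,\dots,P_r$ of $X$ $$H^0(X,\mathcal I_{W\cup P_1^{m_1}\cup\cdots\cup P_r^{m_r}}\otimes L)=0.$$ -/

import Mathlib

open AlgebraicGeometry CategoryTheory Limits

universe u

namespace DiffHorace

noncomputable section

attribute [local instance] MvPolynomial.gradedAlgebra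

/-- `f : X ⟶ Spec k` is projective: `X` is isomorphic, over `k`, to a closed subscheme of some
projective space `Proj k[x₀, …, x_N]`. -/
def IsProjective {k : Type u} [Field k] {X : Scheme.{u}} (f : X ⟶ Spec (.of k)) : Prop :=
  ∃ (N : ℕ) (i : X ⟶ Proj (MvPolynomial.homogeneousSubmodule (Fin (N + 1)) k)),
    IsClosedImmersion i ∧
      i ≫ Proj.toSpecZero (MvPolynomial.homogeneousSubmodule (Fin (N + 1)) k) ≫
        Spec.map (CommRingCat.ofHom
          (algebraMap k (MvPolynomial.homogeneousSubmodule (Fin (N + 1)) k 0))) = f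

/-- A line bundle: a sheaf of `𝒪_X`-modules that is locally isomorphic to `𝒪_X`. -/
def IsLineBundle {X : Scheme.{u}} (L : X.Modules) : Prop :=
  ∀ x : X, ∃ U : X.Opens, x ∈ U ∧
    Nonempty (L.restrict U.ι ≅
      (SheafOfModules.unit U.toScheme.ringCatSheaf : U.toScheme.Modules))

/-! A closed subscheme of `X` is given by its (quasi-coherent) ideal sheaf, an element of
`X.IdealSheafData`. Hence the union of subschemes is the infimum `⊓`, `⨅` of ideal sheaves, the
schematic intersection is the supremum `⊔`, and `V` contains `Z` iff `V ≤ Z`. -/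

/-- The closed subscheme with ideal sheaf `H` is an effective Cartier divisor: locally its ideal is
generated by one nonzerodivisor. -/
def IsEffectiveCartier {X : Scheme.{u}} (H : X.IdealSheafData) : Prop :=
  ∀ x : X, ∃ U : X.affineOpens, x ∈ U.1 ∧
    ∃ h ∈ nonZeroDivisors Γ(X, U.1), H.ideal U = Ideal.span {h}

/-- The singular locus of `X`: the points whose local ring is not regular. -/
def singularLocus (X : Scheme.{u}) : Set X :=
  {x | ¬ IsRegularLocalRing (X.presheaf.stalk x)}

/-- The residual `Res_H(W)`: the closed subscheme of `X` with the conductor ideal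
`(𝓘_W : 𝓘_H)`, computed on affine opens. -/
def residualScheme {X : Scheme.{u}} (H W : X.IdealSheafData) : X.IdealSheafData :=
  Scheme.IdealSheafData.ofIdeals fun U => (W.ideal U).colon (H.ideal U : Set Γ(X, U.1))

/-- The trace `Tr_H(W) = H ∩ W`, as a closed subscheme of `H`. -/
def traceScheme {X : Scheme.{u}} (H W : X.IdealSheafData) : H.subscheme.IdealSheafData :=
  W.comap H.subschemeι

/-- Rational points of an `S`-scheme `f : X ⟶ S`; for `S = Spec k` with `k` algebraically closed and
`X` of finite type these are the closed points of `X`. -/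
abbrev RatPoint {X S : Scheme.{u}} (f : X ⟶ S) : Type u :=
  {p : S ⟶ X // p ≫ f = 𝟙 S}

/-- The fat point `P^m`, with ideal sheaf `𝓘_P ^ m`. -/
def fatPoint {X S : Scheme.{u}} (p : S ⟶ X) (m : ℕ) : X.IdealSheafData :=
  p.ker ^ m

/-- The `m`-th simple residue `D_m(z) = z^m ∩ (m - 1)H`, for `m ≥ 1`. -/
def simpleResidue {X S : Scheme.{u}} (H : X.IdealSheafData) (z : S ⟶ X) (m : ℕ) :
    X.IdealSheafData :=
  fatPoint z m ⊔ H ^ (m - 1)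

/-- The `r`-fold fibre power `X ×_S ⋯ ×_S X`. -/
abbrev fibrePower {X S : Scheme.{u}} (f : X ⟶ S) (r : ℕ) : Scheme.{u} :=
  widePullback S (fun _ : Fin r => X) (fun _ => f)

/-- The rational point of the fibre power given by an `r`-tuple of rational points. -/
def tuplePoint {X S : Scheme.{u}} (f : X ⟶ S) {r : ℕ} (p : Fin r → RatPoint f) :
    S ⟶ fibrePower f r :=
  WidePullback.lift (𝟙 S) (fun i => (p i).1) (fun i => (p i).2)

/-- `Φ` holds for generic points `P₁, …, P_r` of the `k`-scheme `X`: it holds for all `r`-tuples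
of rational points that belong to some dense open subset of `X ×_k ⋯ ×_k X`. -/
def ForGeneric {k : Type u} [Field k] {X : Scheme.{u}} (f : X ⟶ Spec (.of k)) (r : ℕ)
    (Φ : (Fin r → RatPoint f) → Prop) : Prop :=
  ∃ U : (fibrePower f r).Opens, Dense (U : Set (fibrePower f r)) ∧
    ∀ p : Fin r → RatPoint f, tuplePoint f p (IsLocalRing.closedPoint k) ∈ U → Φ p

/-- `H⁰(X, 𝓘 ⊗ L)` for an ideal sheaf `𝓘` and a line bundle `L`. Since `L` is invertible, `𝓘 ⊗ L` is
the subsheaf `𝓘 · L` of `L`; its global sections are the global sections of `L` which on every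
affine open `U` lie in `𝓘(U) · L(U)`. -/
def H0 {X : Scheme.{u}} (I : X.IdealSheafData) (L : X.Modules) :
    Submodule Γ(X, ⊤) Γ(L, ⊤) where
  carrier := {s | ∀ U : X.affineOpens, L.presheaf.map (homOfLE (le_top : U.1 ≤ ⊤)).op s ∈
    I.ideal U • (⊤ : Submodule Γ(X, U.1) Γ(L, U.1))}
  add_mem' ha hb U := by
    rw [map_add]
    exact add_mem (ha U) (hb U)
  zero_mem' U := by
    rw [map_zero]
    exact zero_mem _
  smul_mem' c s hs U := by
    rw [Scheme.Modules.map_smul]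
    exact Submodule.smul_mem _ _ (hs U)

/-- `H⁰(X, 𝓘 ⊗ L(-H))` for an ideal sheaf `𝓘`, a line bundle `L` and an effective Cartier divisor
`H`. Here `L(-H) = 𝓘_H ⊗ L`, and since `𝓘_H` and `L` are invertible, `𝓘 ⊗ L(-H)` is the subsheaf
`𝓘 · 𝓘_H · L` of `L`. -/
def H0Twist {X : Scheme.{u}} (I : X.IdealSheafData) (L : X.Modules) (H : X.IdealSheafData) :
    Submodule Γ(X, ⊤) Γ(L, ⊤) :=
  H0 (I * H) L

/-- The restriction `L|_H` of a sheaf of modules to the closed subscheme `H`. -/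
def restrictTo {X : Scheme.{u}} (L : X.Modules) (H : X.IdealSheafData) : H.subscheme.Modules :=
  (Scheme.Modules.pullback H.subschemeι).obj L

end

end DiffHorace

open DiffHorace

/-!
Express the sections of `𝓘_W ⊗ L`, in a frame on an affine open set with étale coordinates one of
which is an equation `x` of `H`, as a space `V` of functions; (Dime) and (Degue) bound its dimension
and give a basis consisting of functions `x * u_j` and of functions `v_j` independent on `H`. The
Taylor coefficients of these functions at the generic `r`-tuple of points form a matrix over the
`r`-fold tensor power of the coordinate ring. If it has a left inverse up to a nonzero factor `D`,
the conclusion holds wherever `D` does not vanish. Otherwise its kernel contains a nonzero vector,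
which is specialised along formal arcs at points `Q_i` of `H` on which `x` becomes `c_i t ^ e_i`,
with `e_i * m_i = N` independent of `i`, and divided by a power of `t` to become primitive. Moving
the `i`-th point by `-c_i t ^ e_i` in the direction `X` of `x` brings it to `H`, with an error of
order `t ^ N`, so (Dime) makes the coefficients of the `v_j` divisible by `t ^ N`. Modulo functions
vanishing to order `m_i` at the `i`-th point, `t ^ N` is proportional to
`X ^ m_i - (-c_i t ^ e_i) ^ m_i`, which is divisible by `x = X + c_i t ^ e_i` with quotient
`X ^ (m_i - 1)` at `t = 0`. Hence the limit at `t = 0` of the combination of the `u_j` vanishes on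
`D_{m_i}(Q_i)`, so it is zero by (Degue), which contradicts primitivity.
-/

namespace DiffHorace

section EtaleCoordinates

theorem isAdicComplete_of_pow_eq_bot {R : Type*} [CommRing R] {I : Ideal R} {m : ℕ}
    (hI : I ^ m = ⊥) : IsAdicComplete I R where
  haus' x hx := by
    have hxm := hx m
    rwa [hI, Submodule.bot_smul, SModEq.bot] at hxm
  prec' f hf := by
    refine ⟨f m, fun n => ?_⟩
    obtain h | h := le_total n m
    · exact hf h
    · have hmn := hf h
      rw [hI, Submodule.bot_smul, SModEq.bot] at hmn
      rw [hmn]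

variable {σ k A : Type*} [Field k] [CommRing A] [Algebra k A]

/-- The elements `z l` of the `k`-algebra `A` are formally étale coordinates: `A` is formally étale
over the polynomial ring in the variables indexed by `σ`. -/
def IsEtaleCoordinates (k : Type*) [Field k] [Algebra k A] (z : σ → A) : Prop :=
  (MvPolynomial.aeval z : MvPolynomial σ k →ₐ[k] A).toRingHom.FormallyEtale

namespace IsEtaleCoordinates

variable {z : σ → A} (hz : IsEtaleCoordinates k z)
  {R : Type*} [CommRing R] [Algebra k R]
include hz

theorem exists_lift (I : Ideal R) [IsAdicComplete I R] (w : σ → R)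
    (γ : A →ₐ[k] R ⧸ I) (h : ∀ l, γ (z l) = Ideal.Quotient.mk I (w l)) :
    ∃ γ' : A →ₐ[k] R, (∀ a, Ideal.Quotient.mk I (γ' a) = γ a) ∧ ∀ l, γ' (z l) = w l := by
  let := (MvPolynomial.aeval z : MvPolynomial σ k →ₐ[k] A).toRingHom.toAlgebra
  let := (MvPolynomial.aeval w : MvPolynomial σ k →ₐ[k] R).toRingHom.toAlgebra
  have : IsScalarTower k (MvPolynomial σ k) A := .of_algHom (MvPolynomial.aeval z)
  have : IsScalarTower k (MvPolynomial σ k) R := .of_algHom (MvPolynomial.aeval w)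
  have : Algebra.FormallyEtale (MvPolynomial σ k) A := hz
  have hγ : γ.comp (MvPolynomial.aeval z) =
      (Ideal.Quotient.mkₐ k I).comp (MvPolynomial.aeval w) :=
    MvPolynomial.algHom_ext fun l => by simp [h]
  obtain ⟨γ', hγ'⟩ := Algebra.FormallySmooth.exists_mkₐ_comp_eq_of_isAdicComplete (I := I)
    ({ γ.toRingHom with commutes' := fun p => congr($hγ p) } : A →ₐ[MvPolynomial σ k] R ⧸ I)
  refine ⟨γ'.restrictScalars k, fun a => congr($hγ' a), fun l => ?_⟩
  have hl : γ' (MvPolynomial.aeval z (MvPolynomial.X l)) =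
    MvPolynomial.aeval w (MvPolynomial.X l) := γ'.commutes (.X l)
  rwa [MvPolynomial.aeval_X, MvPolynomial.aeval_X] at hl

theorem algHom_ext {I : Ideal R} (hI : IsNilpotent I) {γ γ' : A →ₐ[k] R}
    (h : ∀ a, γ a - γ' a ∈ I) (h' : ∀ l, γ (z l) = γ' (z l)) : γ = γ' := by
  let := (MvPolynomial.aeval z : MvPolynomial σ k →ₐ[k] A).toRingHom.toAlgebra
  let := (γ.comp (MvPolynomial.aeval z : MvPolynomial σ k →ₐ[k] A)).toRingHom.toAlgebra
  have : Algebra.FormallyEtale (MvPolynomial σ k) A := hz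
  have hγ' : γ'.comp (MvPolynomial.aeval z) = γ.comp (MvPolynomial.aeval z) :=
    MvPolynomial.algHom_ext fun l => by simp [h']
  have hext := Algebra.FormallyUnramified.ext I hI
    (g₁ := ({ γ.toRingHom with commutes' := fun _ => rfl } : A →ₐ[MvPolynomial σ k] R))
    (g₂ := { γ'.toRingHom with commutes' := fun p => congr($hγ' p) })
    fun a => Ideal.Quotient.eq.2 (h a)
  exact AlgHom.ext fun a => congr($hext a)

end IsEtaleCoordinates

end EtaleCoordinates

/-- Polynomials in the variables `σ` modulo those of order at least `m`. -/
abbrev TruncPoly (σ R : Type*) [CommRing R] (m : ℕ) : Type _ :=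
  MvPolynomial σ R ⧸ MvPolynomial.idealOfVars σ R ^ m

namespace TruncPoly

variable {σ R : Type*} [CommRing R] {m : ℕ}

-- `rw` does not unify the two scalar actions on the quotient in `Algebra.smul_def`.
theorem smul_def (a : R) (p : TruncPoly σ R m) : a • p = algebraMap R _ a * p :=
  Algebra.smul_def a p

/-- The coefficient of a truncated polynomial at a monomial of degree less than `m`. -/
noncomputable def coeff (α : σ →₀ ℕ) (hα : α.degree < m) : TruncPoly σ R m →ₗ[R] R :=
  Submodule.liftQ ((MvPolynomial.idealOfVars σ R ^ m).restrictScalars R) (MvPolynomial.lcoeff R α)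
    fun p hp => by
      simpa using (MvPolynomial.mem_pow_idealOfVars_iff' m p).1 hp α hα

theorem coeff_mk (α : σ →₀ ℕ) (hα : α.degree < m) (p : MvPolynomial σ R) :
    coeff α hα (Ideal.Quotient.mk (MvPolynomial.idealOfVars σ R ^ m) p) = MvPolynomial.coeff α p :=
  rfl

theorem eq_zero_of_coeff {p : TruncPoly σ R m}
    (h : ∀ (α : σ →₀ ℕ) (hα : α.degree < m), coeff α hα p = 0) : p = 0 := by
  obtain ⟨p, rfl⟩ := Ideal.Quotient.mk_surjective p
  rw [Ideal.Quotient.eq_zero_iff_mem, MvPolynomial.mem_pow_idealOfVars_iff']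
  exact h

theorem eq_zero_of_smul_eq_zero [IsDomain R] {a : R} (ha : a ≠ 0) {p : TruncPoly σ R m}
    (h : a • p = 0) : p = 0 := by
  refine eq_zero_of_coeff fun α hα => ?_
  have : a * coeff α hα p = 0 := by rw [← smul_eq_mul, ← map_smul, h, map_zero]
  exact (mul_eq_zero.1 this).resolve_left ha

variable (σ R m) in
/-- The ideal of truncated polynomials without constant term. -/
noncomputable def augIdeal : Ideal (TruncPoly σ R m) :=
  (MvPolynomial.idealOfVars σ R).map (Ideal.Quotient.mk (MvPolynomial.idealOfVars σ R ^ m))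

/-- The class of the variable `X l`. -/
noncomputable def var (l : σ) : TruncPoly σ R m :=
  Ideal.Quotient.mk (MvPolynomial.idealOfVars σ R ^ m) (MvPolynomial.X l)

theorem augIdeal_pow : augIdeal σ R m ^ m = ⊥ := by
  rw [augIdeal, ← Ideal.map_pow, Ideal.map_quotient_self]

theorem augIdeal_eq_span : augIdeal σ R m = Ideal.span (Set.range var) :=
  (Ideal.map_span _ _).trans (congrArg Ideal.span (Set.range_comp _ _).symm)

theorem var_mem_augIdeal (l : σ) : (var l : TruncPoly σ R m) ∈ augIdeal σ R m :=
  Ideal.mem_map_of_mem _ (Ideal.subset_span ⟨l, rfl⟩)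

theorem var_pow (l : σ) : (var l : TruncPoly σ R m) ^ m = 0 := by
  have := Ideal.pow_mem_pow (var_mem_augIdeal (R := R) (m := m) l) m
  rwa [augIdeal_pow, Ideal.mem_bot] at this

section Lift

variable {S : Type*} [CommRing S] [Algebra R S] {J : Ideal S} (hJ : J ^ m = ⊥) {w : σ → S}
  (hw : ∀ l, w l ∈ J)

/-- The substitution of elements of an ideal with vanishing `m`-th power for the variables. -/
noncomputable def lift : TruncPoly σ R m →ₐ[R] S :=
  Ideal.Quotient.liftₐ _ (MvPolynomial.aeval w) fun p hp => by
    have hle : MvPolynomial.idealOfVars σ R ≤ J.comap (MvPolynomial.aeval w) := by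
      rw [MvPolynomial.idealOfVars, Ideal.span_le]
      rintro _ ⟨l, rfl⟩
      simp [hw]
    have hp' := Ideal.le_comap_pow _ m (Ideal.pow_right_mono hle m hp)
    rwa [hJ, Ideal.mem_comap, Ideal.mem_bot] at hp'

theorem lift_mk (p : MvPolynomial σ R) :
    lift hJ hw (Ideal.Quotient.mk _ p) = MvPolynomial.aeval w p :=
  rfl

@[simp]
theorem lift_var (l : σ) : lift (R := R) hJ hw (var l) = w l :=
  MvPolynomial.aeval_X w l

theorem lift_mem {p : TruncPoly σ R m} (hp : p ∈ augIdeal σ R m) : lift hJ hw p ∈ J := by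
  have hle : augIdeal σ R m ≤ J.comap (lift hJ hw) := by
    rw [augIdeal_eq_span, Ideal.span_le]
    rintro _ ⟨l, rfl⟩
    simp [hw]
  exact hle hp

end Lift

section Map

variable {k : Type*} [CommRing k] [Algebra k R] {S : Type*} [CommRing S] [Algebra k S]
  (ψ : R →ₐ[k] S)

/-- The homomorphism of truncated polynomial algebras given by a homomorphism of coefficients. -/
noncomputable def map : TruncPoly σ R m →ₐ[k] TruncPoly σ S m :=
  Ideal.Quotient.liftₐ _ ((Ideal.Quotient.mkₐ k _).comp (MvPolynomial.mapAlgHom ψ)) (by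
    intro p hp
    refine Ideal.Quotient.eq_zero_iff_mem.2 ?_
    rw [MvPolynomial.mem_pow_idealOfVars_iff'] at hp ⊢
    intro α hα
    simp [MvPolynomial.coeff_map, hp α hα])

theorem map_mk (p : MvPolynomial σ R) :
    map (m := m) ψ (Ideal.Quotient.mk _ p) =
      Ideal.Quotient.mk _ (MvPolynomial.map (ψ : R →+* S) p) :=
  rfl

@[simp]
theorem map_var (l : σ) : map (m := m) ψ (var l) = var l := by
  rw [var, map_mk, MvPolynomial.map_X, var]

@[simp]
theorem map_algebraMap (a : R) :
    map (m := m) ψ (algebraMap R (TruncPoly σ R m) a) = algebraMap S _ (ψ a) :=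
  congrArg (Ideal.Quotient.mk _) (MvPolynomial.map_C _ a)

theorem map_smul (a : R) (p : TruncPoly σ R m) : map ψ (a • p) = ψ a • map ψ p := by
  rw [smul_def, map_mul, map_algebraMap, smul_def]

theorem coeff_map (p : TruncPoly σ R m) (α : σ →₀ ℕ) (hα : α.degree < m) :
    coeff α hα (map ψ p) = ψ (coeff α hα p) := by
  obtain ⟨p, rfl⟩ := Ideal.Quotient.mk_surjective p
  rw [map_mk, coeff_mk, coeff_mk, MvPolynomial.coeff_map]
  rfl

theorem map_mem_augIdeal {p : TruncPoly σ R m} (hp : p ∈ augIdeal σ R m) :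
    map ψ p ∈ augIdeal σ S m := by
  have hle : augIdeal σ R m ≤ (augIdeal σ S m).comap (map ψ) := by
    rw [augIdeal_eq_span, Ideal.span_le]
    rintro _ ⟨l, rfl⟩
    simpa using var_mem_augIdeal l
  exact hle hp

end Map

end TruncPoly

section Taylor

variable {σ k A : Type*} [Field k] [CommRing A] [Algebra k A] {z : σ → A}
  {R : Type*} [CommRing R] [Algebra k R] {m : ℕ}

/-- `T` is the Taylor expansion of order `m` along the point `γ : A →ₐ[k] R`, with respect to the
coordinates `z`. -/
structure IsTaylor (z : σ → A) (γ : A →ₐ[k] R) (T : A →ₐ[k] TruncPoly σ R m) : Prop where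
  sub_mem : ∀ a, T a - algebraMap R _ (γ a) ∈ TruncPoly.augIdeal σ R m
  coord : ∀ l, T (z l) = algebraMap R _ (γ (z l)) + TruncPoly.var l

theorem IsEtaleCoordinates.exists_isTaylor (hz : IsEtaleCoordinates k z) (γ : A →ₐ[k] R) (m : ℕ) :
    ∃ T : A →ₐ[k] TruncPoly σ R m, IsTaylor z γ T := by
  have := isAdicComplete_of_pow_eq_bot (TruncPoly.augIdeal_pow (σ := σ) (R := R) (m := m))
  obtain ⟨T, hT, hTz⟩ := hz.exists_lift (TruncPoly.augIdeal σ R m)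
    (fun l => algebraMap R _ (γ (z l)) + TruncPoly.var l)
    ((Ideal.Quotient.mkₐ k _).comp ((IsScalarTower.toAlgHom k R (TruncPoly σ R m)).comp γ))
    fun l => Ideal.Quotient.eq.2 (by simpa using TruncPoly.var_mem_augIdeal l)
  exact ⟨T, fun a => Ideal.Quotient.eq.1 (hT a), hTz⟩

namespace IsTaylor

variable {γ : A →ₐ[k] R} {T : A →ₐ[k] TruncPoly σ R m} (hT : IsTaylor z γ T)
include hT

theorem map {S : Type*} [CommRing S] [Algebra k S] (ψ : R →ₐ[k] S) :
    IsTaylor z (ψ.comp γ) ((TruncPoly.map ψ).comp T) where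
  sub_mem a := by simpa using TruncPoly.map_mem_augIdeal ψ (hT.sub_mem a)
  coord l := by simp [hT.coord]

theorem apply_eq_zero_of_mem_ker_pow {a : A} (ha : a ∈ RingHom.ker γ ^ m) : T a = 0 := by
  have hle : RingHom.ker γ ≤ (TruncPoly.augIdeal σ R m).comap T := fun b hb => by
    simpa [(RingHom.mem_ker).1 hb] using hT.sub_mem b
  have hTa := Ideal.le_comap_pow T m (Ideal.pow_right_mono hle m ha)
  rwa [TruncPoly.augIdeal_pow] at hTa

end IsTaylor

theorem map_mk_ker_pow_eq_bot (Q : A →ₐ[k] k) (m : ℕ) :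
    (RingHom.ker Q).map (Ideal.Quotient.mk (RingHom.ker Q ^ m)) ^ m = ⊥ := by
  rw [← Ideal.map_pow, Ideal.map_quotient_self]

/-- The substitution of `z l - z l (Q)` for `X l`, with values in the functions modulo the `m`-th
power of the ideal of the rational point `Q`. -/
noncomputable def pointComparison (z : σ → A) (Q : A →ₐ[k] k) (m : ℕ) :
    TruncPoly σ k m →ₐ[k] A ⧸ RingHom.ker Q ^ m :=
  TruncPoly.lift (map_mk_ker_pow_eq_bot Q m)
    (w := fun l => Ideal.Quotient.mk _ (z l - algebraMap k A (Q (z l))))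
    fun l => Ideal.mem_map_of_mem _ (by simp [RingHom.mem_ker])

theorem IsEtaleCoordinates.pointComparison_apply (hz : IsEtaleCoordinates k z) {Q : A →ₐ[k] k}
    {T : A →ₐ[k] TruncPoly σ k m} (hT : IsTaylor z Q T) (a : A) :
    pointComparison z Q m (T a) = Ideal.Quotient.mk _ a := by
  let I := (RingHom.ker Q).map (Ideal.Quotient.mk (RingHom.ker Q ^ m))
  have hI : IsNilpotent I := ⟨m, map_mk_ker_pow_eq_bot Q m⟩
  suffices h : (pointComparison z Q m).comp T = Ideal.Quotient.mkₐ k (RingHom.ker Q ^ m) from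
    congr($h a)
  refine hz.algHom_ext hI (fun b => ?_) fun l => ?_
  · have hQ : Ideal.Quotient.mk _ (b - algebraMap k A (Q b)) ∈ I :=
      Ideal.mem_map_of_mem _ (by simp [RingHom.mem_ker])
    have hTb : pointComparison z Q m (T b - algebraMap k _ (Q b)) ∈ I :=
      TruncPoly.lift_mem _ _ (hT.sub_mem b)
    rw [map_sub, AlgHom.commutes] at hTb
    simpa using sub_mem hTb hQ
  · rw [AlgHom.comp_apply, hT.coord, map_add, AlgHom.commutes, pointComparison,
      TruncPoly.lift_var]
    simp

end Taylor

section Points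

open scoped TensorProduct

variable {k : Type u} [Field k] [IsAlgClosed k]

theorem exists_algHom_apply_ne_zero {A : Type*} [CommRing A] [IsReduced A] [Algebra k A]
    [Algebra.FiniteType k A] {a : A} (ha : a ≠ 0) : ∃ P : A →ₐ[k] k, P a ≠ 0 := by
  have : IsJacobsonRing A := isJacobsonRing_of_finiteType (A := k)
  have hjac : (⊥ : Ideal A).jacobson = ⊥ := IsJacobsonRing.out ‹_› Ideal.isRadical_bot
  obtain ⟨M, hM, haM⟩ : ∃ M : Ideal A, M.IsMaximal ∧ a ∉ M := by
    by_contra! h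
    exact ha (hjac.le (Ideal.mem_sInf.2 fun {M} hM => h M hM.2))
  let := Ideal.Quotient.field M
  have : Module.Finite k (A ⧸ M) := finite_of_finite_type_of_isJacobsonRing k _
  let e : (A ⧸ M) →ₐ[k] k := IsAlgClosed.lift
  exact ⟨e.comp (Ideal.Quotient.mkₐ k M),
    (map_ne_zero e).2 (Ideal.Quotient.eq_zero_iff_mem.not.2 haM)⟩

theorem isDomain_tensorProduct (A B : Type*) [CommRing A] [IsDomain A] [Algebra k A]
    [Algebra.FiniteType k A] [CommRing B] [IsDomain B] [Algebra k B] : IsDomain (A ⊗[k] B) := by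
  let b := Module.Basis.ofVectorSpace k B
  let bA := Algebra.TensorProduct.basis A b
  let ev (P : A →ₐ[k] k) : A ⊗[k] B →ₐ[k] B :=
    Algebra.TensorProduct.lift ((Algebra.ofId k B).comp P) (AlgHom.id k B) fun _ _ => .all _ _
  have repr_ev (P : A →ₐ[k] k) (x : A ⊗[k] B) i : b.repr (ev P x) i = P (bA.repr x i) := by
    induction x using TensorProduct.induction_on with
    | zero => simp
    | tmul a c =>
      simp [ev, bA, Algebra.ofId_apply, ← Algebra.smul_def, Finsupp.smul_apply]
    | add x y hx hy => simp [hx, hy]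
  have exists_repr_ne_zero (x : A ⊗[k] B) (hx : x ≠ 0) : ∃ i, bA.repr x i ≠ 0 :=
    Finsupp.ne_iff.1 ((map_ne_zero_iff _ bA.repr.injective).2 hx)
  have : Nontrivial (A ⊗[k] B) := by
    obtain ⟨P, -⟩ := exists_algHom_apply_ne_zero (k := k) (one_ne_zero (α := A))
    exact (ev P).toRingHom.domain_nontrivial
  refine @NoZeroDivisors.to_isDomain _ _ this ⟨fun {x y} hxy => ?_⟩
  by_contra! h
  obtain ⟨i, hi⟩ := exists_repr_ne_zero x h.1
  obtain ⟨j, hj⟩ := exists_repr_ne_zero y h.2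
  obtain ⟨P, hP⟩ := exists_algHom_apply_ne_zero (k := k) (mul_ne_zero hi hj)
  rw [map_mul, ← repr_ev, ← repr_ev] at hP
  have hev : ev P x * ev P y = 0 := by rw [← map_mul, hxy, map_zero]
  rcases mul_eq_zero.1 hev with h | h <;> simp [h] at hP

end Points

section TensorPower

open scoped TensorProduct

variable {k A B : Type u} [Field k] [CommRing A] [Algebra k A] [CommRing B] [Algebra k B] {r : ℕ}

/-- The homomorphisms `ι i : A →ₐ[k] B` exhibit `B` as the `r`-fold tensor power of `A` over `k`;
uniqueness in the universal property is expressed by generation. -/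
structure IsTensorPower (ι : Fin r → A →ₐ[k] B) : Prop where
  exists_desc : ∀ (C : Type u) [CommRing C] [Algebra k C] (φ : Fin r → A →ₐ[k] C),
    ∃ ψ : B →ₐ[k] C, ∀ i, ψ.comp (ι i) = φ i
  iSup_range : ⨆ i, (ι i).range = ⊤

namespace IsTensorPower

theorem hom_ext {ι : Fin r → A →ₐ[k] B} (hι : IsTensorPower ι) {C : Type*} [CommRing C]
    [Algebra k C] {φ ψ : B →ₐ[k] C} (h : ∀ i a, φ (ι i a) = ψ (ι i a)) : φ = ψ := by
  have hle : ⨆ i, (ι i).range ≤ AlgHom.equalizer φ ψ :=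
    iSup_le fun i => by rintro _ ⟨a, rfl⟩; exact h i a
  rw [hι.iSup_range] at hle
  exact AlgHom.ext fun b => hle (Algebra.mem_top (x := b))

theorem elim0 : IsTensorPower (Fin.elim0 : Fin 0 → A →ₐ[k] k) where
  exists_desc C _ _ _ := ⟨Algebra.ofId k C, fun i => i.elim0⟩
  iSup_range := Subsingleton.elim _ _

theorem cons {ι : Fin r → A →ₐ[k] B} (hι : IsTensorPower ι) :
    IsTensorPower (Fin.cons Algebra.TensorProduct.includeLeft
      fun i => Algebra.TensorProduct.includeRight.comp (ι i) : Fin (r + 1) → A →ₐ[k] A ⊗[k] B) where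
  exists_desc C _ _ φ := by
    obtain ⟨ψ, hψ⟩ := hι.exists_desc C (fun i => φ i.succ)
    refine ⟨Algebra.TensorProduct.lift (φ 0) ψ fun _ _ => .all _ _, Fin.cases (by simp) fun i => ?_⟩
    rw [← hψ i]
    ext
    simp
  iSup_range := by
    set κ : Fin (r + 1) → A →ₐ[k] A ⊗[k] B := Fin.cons Algebra.TensorProduct.includeLeft
      fun i => Algebra.TensorProduct.includeRight.comp (ι i)
    have hκ (i : Fin (r + 1)) (a : A) : κ i a ∈ ⨆ i, (κ i).range :=
      le_iSup (fun i => (κ i).range) i ⟨a, rfl⟩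
    have hright : ⨆ i, (ι i).range ≤
        (⨆ i, (κ i).range).comap Algebra.TensorProduct.includeRight :=
      iSup_le fun i => by rintro _ ⟨a, rfl⟩; exact hκ i.succ a
    rw [eq_top_iff, ← Algebra.TensorProduct.adjoin_tmul_eq_top, Algebra.adjoin_le_iff]
    rintro _ ⟨a, b, rfl⟩
    rw [hι.iSup_range] at hright
    have hab := mul_mem (hκ 0 a) (hright (Algebra.mem_top (x := b)))
    rwa [show κ 0 a = a ⊗ₜ 1 from rfl, AlgHom.coe_toRingHom,
      Algebra.TensorProduct.includeRight_apply, Algebra.TensorProduct.tmul_mul_tmul, mul_one,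
      one_mul] at hab

end IsTensorPower

theorem exists_isTensorPower [IsAlgClosed k] (A : Type u) [CommRing A] [IsDomain A] [Algebra k A]
    [Algebra.FiniteType k A] (r : ℕ) :
    ∃ (B : Type u) (_ : CommRing B) (_ : IsDomain B) (_ : Algebra k B) (_ : Algebra.FiniteType k B)
      (ι : Fin r → A →ₐ[k] B), IsTensorPower ι := by
  induction r with
  | zero => exact ⟨k, _, inferInstance, _, inferInstance, _, .elim0⟩
  | succ r ih =>
    obtain ⟨B, _, _, _, _, ι, hι⟩ := ih
    exact ⟨A ⊗[k] B, _, isDomain_tensorProduct A B, _,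
      .trans (S := A) inferInstance inferInstance, _, hι.cons⟩

theorem isEtaleCoordinates_of_existsUnique_lift {σ : Type u} {z : σ → A}
    (h : ∀ (R : Type u) [CommRing R] [Algebra k R] (I : Ideal R), I ^ 2 = ⊥ →
      ∀ (w : σ → R) (γ : A →ₐ[k] R ⧸ I), (∀ l, γ (z l) = Ideal.Quotient.mk I (w l)) →
        ∃! γ' : A →ₐ[k] R, (∀ a, Ideal.Quotient.mk I (γ' a) = γ a) ∧ ∀ l, γ' (z l) = w l) :
    IsEtaleCoordinates k z := by
  let := (MvPolynomial.aeval z : MvPolynomial σ k →ₐ[k] A).toRingHom.toAlgebra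
  have : IsScalarTower k (MvPolynomial σ k) A := .of_algHom (MvPolynomial.aeval z)
  change Algebra.FormallyEtale (MvPolynomial σ k) A
  refine Algebra.FormallyEtale.iff_comp_bijective.2 fun R _ _ I hI => ?_
  let := Algebra.compHom R (algebraMap k (MvPolynomial σ k))
  have : IsScalarTower k (MvPolynomial σ k) R := .of_algebraMap_eq fun _ => rfl
  have apply_coord {S : Type u} [CommRing S] [Algebra (MvPolynomial σ k) S]
      (g : A →ₐ[MvPolynomial σ k] S) (l : σ) :
      g (z l) = algebraMap _ S (MvPolynomial.X l : MvPolynomial σ k) := by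
    rw [← g.commutes]
    exact congrArg g (MvPolynomial.aeval_X z l).symm
  refine (Function.bijective_iff_existsUnique _).2 fun γ => ?_
  obtain ⟨γ', ⟨hγ', hz⟩, huniq⟩ := h R I hI
    (fun l => algebraMap _ R (MvPolynomial.X l : MvPolynomial σ k)) (γ.restrictScalars k)
    (apply_coord γ)
  have hcomm : γ'.comp (MvPolynomial.aeval z) = IsScalarTower.toAlgHom k (MvPolynomial σ k) R :=
    MvPolynomial.algHom_ext fun l => by simp [hz]
  refine ⟨{ γ'.toRingHom with commutes' := fun p => congr($hcomm p) }, AlgHom.ext hγ',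
    fun g hg => ?_⟩
  have := huniq (g.restrictScalars k) ⟨fun a => congr($hg a), apply_coord g⟩
  exact AlgHom.ext fun a => congr($this a)

theorem IsTensorPower.isEtaleCoordinates {σ : Type u} {z : σ → A} {ι : Fin r → A →ₐ[k] B}
    (hι : IsTensorPower ι) (hz : IsEtaleCoordinates k z) :
    IsEtaleCoordinates k fun l : Fin r × σ => ι l.1 (z l.2) := by
  refine isEtaleCoordinates_of_existsUnique_lift fun R _ _ I hI w γ h => ?_
  have := isAdicComplete_of_pow_eq_bot hI
  have hlift (i : Fin r) := hz.exists_lift I (fun l => w (i, l)) (γ.comp (ι i)) fun l => h (i, l)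
  choose φ hφ hφz using hlift
  obtain ⟨ψ, hψ⟩ := hι.exists_desc R φ
  have hψι (i : Fin r) (a : A) : ψ (ι i a) = φ i a := congr($(hψ i) a)
  have hψγ : (Ideal.Quotient.mkₐ k I).comp ψ = γ :=
    hι.hom_ext fun i a => (congrArg (Ideal.Quotient.mk I) (hψι i a)).trans (hφ i a)
  refine ⟨ψ, ⟨fun b => congr($hψγ b), fun l => (hψι _ _).trans (hφz _ _)⟩, fun χ hχ => ?_⟩
  have hcomp (i : Fin r) : χ.comp (ι i) = ψ.comp (ι i) :=
    hz.algHom_ext ⟨2, hI⟩ (fun a => Ideal.Quotient.eq.1 ((hχ.1 _).trans congr($hψγ.symm (ι i a))))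
      fun l => (hχ.2 (i, l)).trans ((hψι _ _).trans (hφz _ _)).symm
  exact hι.hom_ext fun i a => congr($(hcomp i) a)

end TensorPower

section Arcs

variable {k : Type*} [Field k]

/-- The value at `t = 0` of a formal power series, as a homomorphism of `k`-algebras. -/
noncomputable def constCoeffAlgHom (k : Type*) [Field k] : PowerSeries k →ₐ[k] k :=
  { PowerSeries.constantCoeff with commutes' := fun a => by simp }

@[simp]
theorem constCoeffAlgHom_apply (f : PowerSeries k) :
    constCoeffAlgHom k f = PowerSeries.constantCoeff f :=
  rfl

section WeightedHomogeneous

variable {τ : Type*} (w : τ → ℕ)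

theorem coeff_aeval_C_mul_X_pow (c : τ → k) (p : MvPolynomial τ k) (d : ℕ) :
    PowerSeries.coeff d (MvPolynomial.aeval
      (fun l => PowerSeries.C (c l) * (PowerSeries.X : PowerSeries k) ^ w l) p) =
    MvPolynomial.eval c (MvPolynomial.weightedHomogeneousComponent w d p) := by
  induction p using MvPolynomial.induction_on' with
  | add p q hp hq => simp [hp, hq]
  | monomial α a =>
    have haeval : (MvPolynomial.aeval
        (fun l => PowerSeries.C (c l) * (PowerSeries.X : PowerSeries k) ^ w l))
          (MvPolynomial.monomial α a) =
        PowerSeries.C (a * α.prod fun l n => c l ^ n) * PowerSeries.X ^ (Finsupp.weight w α) := by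
      rw [MvPolynomial.aeval_monomial, map_mul, map_finsuppProd]
      simp only [mul_pow, Finsupp.prod_mul, map_pow, ← pow_mul]
      rw [mul_assoc]
      congr 2
      rw [Finsupp.prod, Finset.prod_pow_eq_pow_sum, Finsupp.weight_apply, Finsupp.sum]
      simp [mul_comm]
    rw [haeval, MvPolynomial.weightedHomogeneousComponent_apply, PowerSeries.coeff_C_mul,
      PowerSeries.coeff_X_pow]
    classical
    by_cases ha : a = 0
    · simp [ha]
    rw [MvPolynomial.support_monomial, if_neg ha, Finset.filter_singleton]
    by_cases hd : d = Finsupp.weight w α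
    · simp [hd, MvPolynomial.eval_monomial]
    · simp [hd, Ne.symm hd]

theorem exists_eval_weightedHomogeneousComponent_ne_zero [Infinite k] {p : MvPolynomial τ k}
    {α : τ →₀ ℕ} (hα : p.coeff α ≠ 0) (s : Finset τ) :
    ∃ c : τ → k, (∀ l ∈ s, c l ≠ 0) ∧
      MvPolynomial.eval c (MvPolynomial.weightedHomogeneousComponent w (Finsupp.weight w α) p) ≠
        0 := by
  classical
  have hcomp : MvPolynomial.weightedHomogeneousComponent w (Finsupp.weight w α) p ≠ 0 := by
    refine fun h => hα ?_
    have hcoeff := congr(MvPolynomial.coeff α $h)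
    rwa [MvPolynomial.coeff_weightedHomogeneousComponent, if_pos rfl] at hcoeff
  have hprod : (∏ l ∈ s, MvPolynomial.X l : MvPolynomial τ k) ≠ 0 :=
    Finset.prod_ne_zero_iff.2 fun l _ => MvPolynomial.X_ne_zero l
  obtain ⟨c, hc⟩ : ∃ c : τ → k, MvPolynomial.eval c ((∏ l ∈ s, MvPolynomial.X l) *
      MvPolynomial.weightedHomogeneousComponent w (Finsupp.weight w α) p) ≠ 0 := by
    by_contra! h
    exact mul_ne_zero hprod hcomp (MvPolynomial.funext fun c => by simp [h c])
  rw [map_mul, map_prod] at hc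
  simp only [MvPolynomial.eval_X] at hc
  exact ⟨c, Finset.prod_ne_zero_iff.1 (left_ne_zero_of_mul hc), right_ne_zero_of_mul hc⟩

theorem weight_le_degree_mul {w : τ → ℕ} {E : ℕ} (hw : ∀ l, w l ≤ E) (α : τ →₀ ℕ) :
    Finsupp.weight w α ≤ α.degree * E := by
  rw [Finsupp.weight_apply, Finsupp.sum, Finsupp.degree_apply, Finset.sum_mul]
  exact Finset.sum_le_sum fun l _ => Nat.mul_le_mul_left _ (hw l)

end WeightedHomogeneous

variable {σ A : Type*} [CommRing A] [Algebra k A] {z : σ → A}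

theorem exists_coeff_ne_zero_of_sub_aeval_mem_ker_pow {b : A} {M n : ℕ} (Q : A →ₐ[k] k)
    (hMn : M ≤ n) (hb : b ∉ RingHom.ker Q ^ M) {p : MvPolynomial σ k}
    (hp : b - MvPolynomial.aeval (fun l => z l - algebraMap k A (Q (z l))) p ∈ RingHom.ker Q ^ n) :
    ∃ α : σ →₀ ℕ, α.degree < M ∧ p.coeff α ≠ 0 := by
  by_contra! h
  rw [← MvPolynomial.mem_pow_idealOfVars_iff'] at h
  have hle : MvPolynomial.idealOfVars σ k ≤ (RingHom.ker Q).comap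
      (MvPolynomial.aeval fun l => z l - algebraMap k A (Q (z l))) := by
    rw [MvPolynomial.idealOfVars, Ideal.span_le]
    rintro _ ⟨l, rfl⟩
    simp
  have hpM := Ideal.le_comap_pow _ M (Ideal.pow_right_mono hle M h)
  have hbM := add_mem (Ideal.pow_le_pow_right hMn hp) hpM
  exact hb (by rwa [sub_add_cancel] at hbM)

namespace IsEtaleCoordinates

variable (Q : A →ₐ[k] k)
variable (hz : IsEtaleCoordinates k z)
include hz

theorem exists_sub_aeval_mem_ker_pow (N : ℕ) (a : A) : ∃ p : MvPolynomial σ k,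
    a - MvPolynomial.aeval (fun l => z l - algebraMap k A (Q (z l))) p ∈ RingHom.ker Q ^ N := by
  obtain ⟨T, hT⟩ := hz.exists_isTaylor Q N
  obtain ⟨p, hp⟩ := Ideal.Quotient.mk_surjective (T a)
  refine ⟨p, ?_⟩
  have hmk : (Ideal.Quotient.mkₐ k _).comp (MvPolynomial.aeval
      fun l => z l - algebraMap k A (Q (z l))) = MvPolynomial.aeval fun l =>
        Ideal.Quotient.mk (RingHom.ker Q ^ N) (z l - algebraMap k A (Q (z l))) :=
    MvPolynomial.comp_aeval _ _
  rw [← Ideal.Quotient.eq, ← hz.pointComparison_apply hT, ← hp, pointComparison, TruncPoly.lift_mk]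
  exact congr($hmk.symm p)

theorem exists_arc (w : σ → PowerSeries k)
    (hw : ∀ l, PowerSeries.constantCoeff (w l) = Q (z l)) :
    ∃ γ : A →ₐ[k] PowerSeries k, (∀ a, PowerSeries.constantCoeff (γ a) = Q a) ∧
      ∀ l, γ (z l) = w l := by
  have mk_eq_mk (f g : PowerSeries k) : Ideal.Quotient.mk (.span {PowerSeries.X}) f =
      Ideal.Quotient.mk (.span {PowerSeries.X}) g ↔
        PowerSeries.constantCoeff f = PowerSeries.constantCoeff g := by
    rw [Ideal.Quotient.eq, Ideal.mem_span_singleton, PowerSeries.X_dvd_iff, map_sub, sub_eq_zero]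
  obtain ⟨γ, hγ, hγz⟩ := hz.exists_lift (.span {PowerSeries.X}) w
    (((Ideal.Quotient.mkₐ k _).comp (Algebra.ofId k _)).comp Q)
    fun l => (mk_eq_mk _ _).2 (by simp [hw])
  exact ⟨γ, fun a => ((mk_eq_mk _ _).1 (hγ a)).trans (by simp), hγz⟩

/- Modulo a high power of the ideal of `Q`, `b` is a polynomial `p` in the coordinates centred at
`Q`; the leading term of `b` along the arc is then the value at `c` of a weighted homogeneous
component of `p`, which is nonzero for general `c`. -/
theorem exists_arc_apply_ne_zero [Infinite k] [IsNoetherianRing A] [IsDomain A] {w : σ → ℕ} {E : ℕ}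
    (hw : ∀ l, 0 < w l) (hwE : ∀ l, w l ≤ E) (s : Finset σ) {b : A} (hb : b ≠ 0) :
    ∃ (γ : A →ₐ[k] PowerSeries k) (c : σ → k), (∀ l ∈ s, c l ≠ 0) ∧
      (∀ l, γ (z l) = PowerSeries.C (Q (z l)) + PowerSeries.C (c l) * PowerSeries.X ^ w l) ∧
      (∀ a, PowerSeries.constantCoeff (γ a) = Q a) ∧ γ b ≠ 0 := by
  let zQ : σ → A := fun l => z l - algebraMap k A (Q (z l))
  obtain ⟨M, hM⟩ : ∃ M, b ∉ RingHom.ker Q ^ M := by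
    by_contra! h
    have hinf : b ∈ ⨅ i, RingHom.ker Q ^ i := by simpa only [Submodule.mem_iInf] using h
    rw [Ideal.iInf_pow_eq_bot_of_isDomain _ (RingHom.ker_ne_top _)] at hinf
    exact hb hinf
  obtain ⟨p, hp⟩ := hz.exists_sub_aeval_mem_ker_pow Q (M + M * E) b
  obtain ⟨α, hαM, hα⟩ :=
    exists_coeff_ne_zero_of_sub_aeval_mem_ker_pow Q (Nat.le_add_right M (M * E)) hM hp
  obtain ⟨c, hcs, hc⟩ := exists_eval_weightedHomogeneousComponent_ne_zero w hα s
  obtain ⟨γ, hγ, hγz⟩ := hz.exists_arc Q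
    (fun l => PowerSeries.C (Q (z l)) + PowerSeries.C (c l) * PowerSeries.X ^ w l)
    fun l => by simp [(hw l).ne']
  refine ⟨γ, c, hcs, hγz, hγ, fun hγb => hc ?_⟩
  have hγker : RingHom.ker Q ≤ (Ideal.span {PowerSeries.X}).comap γ := fun a ha => by
    rwa [Ideal.mem_comap, Ideal.mem_span_singleton, PowerSeries.X_dvd_iff, hγ]
  have hdvd := Ideal.le_comap_pow γ _ (Ideal.pow_right_mono hγker _ hp)
  rw [Ideal.mem_comap, Ideal.span_singleton_pow, Ideal.mem_span_singleton,
    PowerSeries.X_pow_dvd_iff] at hdvd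
  have hweight : Finsupp.weight w α < M + M * E :=
    (weight_le_degree_mul hwE α).trans_lt (by nlinarith)
  have hγzQ : γ.comp (MvPolynomial.aeval zQ) = MvPolynomial.aeval
      fun l => PowerSeries.C (c l) * (PowerSeries.X : PowerSeries k) ^ w l :=
    MvPolynomial.algHom_ext fun l => by simp [zQ, hγz]
  have hcoeff := hdvd _ hweight
  rw [map_sub, hγb, zero_sub, map_neg, neg_eq_zero] at hcoeff
  rw [← coeff_aeval_C_mul_X_pow, ← hγzQ]
  exact hcoeff

end IsEtaleCoordinates

end Arcs

section Degeneration

namespace TruncPoly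

variable {σ R : Type*} [CommRing R] {m : ℕ}

open Classical in
/-- The substitution of `-τ` for `X o` and of `0` for the other variables. Applied to Taylor
expansions along a point whose coordinate `z o` is `τ`, it moves that point to the divisor
`z o = 0`. -/
noncomputable def moveTo (o : σ) (τ : R) : TruncPoly σ R m →ₐ[R] R ⧸ Ideal.span {τ ^ m} :=
  lift (J := Ideal.span {Ideal.Quotient.mk _ τ})
    (w := fun l => if l = o then -Ideal.Quotient.mk _ τ else 0)
    (by
      rw [Ideal.span_singleton_pow, ← map_pow,
        Ideal.Quotient.eq_zero_iff_mem.2 (Ideal.mem_span_singleton_self _),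
        Ideal.span_singleton_zero])
    fun l => by
      split_ifs
      · exact neg_mem (Ideal.mem_span_singleton_self _)
      · exact zero_mem _

theorem moveTo_var_self (o : σ) (τ : R) :
    moveTo (m := m) o τ (var o) = -Ideal.Quotient.mk _ τ := by
  simp [moveTo]

theorem exists_moveTo_eq (o : σ) (τ : R) {p : TruncPoly σ R m} (hp : p ∈ augIdeal σ R m) :
    ∃ q, moveTo o τ p = Ideal.Quotient.mk _ (τ * q) := by
  obtain ⟨q, hq⟩ : _ ∣ moveTo o τ p := Ideal.mem_span_singleton.1 (lift_mem _ _ hp)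
  obtain ⟨q, rfl⟩ := Ideal.Quotient.mk_surjective q
  exact ⟨q, hq.trans (map_mul _ _ _).symm⟩

end TruncPoly

variable {σ k A J₁ J₂ : Type*} [Field k] [CommRing A] [Algebra k A] {z : σ → A} {m : ℕ}
  [Fintype J₁] [Fintype J₂]

namespace IsTaylor

section Ring

variable {R : Type*} [CommRing R] [Algebra k R] {γ : A →ₐ[k] R} {T : A →ₐ[k] TruncPoly σ R m}
  (hT : IsTaylor z γ T)
include hT

theorem moveTo_coord (o : σ) : TruncPoly.moveTo o (γ (z o)) (T (z o)) = 0 := by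
  rw [hT.coord, map_add, TruncPoly.moveTo_var_self, AlgHom.commutes]
  exact add_neg_cancel _

theorem exists_moveTo_apply_eq (o : σ) (a : A) :
    ∃ q, TruncPoly.moveTo o (γ (z o)) (T a) = Ideal.Quotient.mk _ (γ a + γ (z o) * q) := by
  obtain ⟨q, hq⟩ := TruncPoly.exists_moveTo_eq o (γ (z o)) (hT.sub_mem a)
  refine ⟨q, ?_⟩
  rw [map_sub, AlgHom.commutes, sub_eq_iff_eq_add'] at hq
  rw [hq, map_add]
  rfl

theorem exists_pow_dvd_sum (o : σ) {u : J₁ → A} {v : J₂ → A} {β₁ : J₁ → R} {β₂ : J₂ → R}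
    (hβ : ∑ j, β₁ j • T (z o * u j) + ∑ j, β₂ j • T (v j) = 0) :
    ∃ q : J₂ → R, γ (z o) ^ m ∣ ∑ j, β₂ j * (γ (v j) + γ (z o) * q j) := by
  choose q hq using fun j => hT.exists_moveTo_apply_eq o (v j)
  refine ⟨q, Ideal.mem_span_singleton.1 (Ideal.Quotient.eq_zero_iff_mem.1 ?_)⟩
  have hmove := congrArg (TruncPoly.moveTo o (γ (z o))) hβ
  simp only [map_add, map_sum, map_smul, map_mul, hT.moveTo_coord, zero_mul, smul_zero,
    Finset.sum_const_zero, zero_add, map_zero] at hmove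
  rw [← hmove, map_sum]
  exact Finset.sum_congr rfl fun j _ => by rw [hq, Algebra.smul_def, map_mul]; rfl

end Ring

theorem mem_sup_of_var_pow_dvd (hz : IsEtaleCoordinates k z) {Q : A →ₐ[k] k}
    {T : A →ₐ[k] TruncPoly σ k m} (hT : IsTaylor z Q T) {o : σ} (ho : Q (z o) = 0) {n : ℕ} {a : A}
    (ha : TruncPoly.var o ^ n ∣ T a) : a ∈ RingHom.ker Q ^ m ⊔ Ideal.span {z o ^ n} := by
  obtain ⟨p, hp⟩ := ha
  obtain ⟨b, hb⟩ := Ideal.Quotient.mk_surjective (pointComparison z Q m p)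
  have hab : Ideal.Quotient.mk (RingHom.ker Q ^ m) a =
      Ideal.Quotient.mk (RingHom.ker Q ^ m) (z o ^ n * b) := by
    rw [← hz.pointComparison_apply hT, hp, map_mul, map_pow, map_mul, hb, pointComparison,
      TruncPoly.lift_var, ho, map_zero, sub_zero, map_pow]
  rw [← sub_add_cancel a (z o ^ n * b)]
  exact add_mem (Ideal.mem_sup_left (Ideal.Quotient.eq.1 hab))
    (Ideal.mem_sup_right (Ideal.mem_span_singleton.2 (Dvd.intro b rfl)))

end IsTaylor

theorem mul_eq_neg_geom_sum_mul {E : Type*} [CommRing E] {a ξ d g w n : E} {m : ℕ}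
    (hξ : ξ ^ m = 0) (ha : a ^ m = d * n) (hn : ∀ y, n * y = 0 → y = 0)
    (h : (a + ξ) * g + n * w = 0) :
    d * g = -((∑ l ∈ Finset.range m, a ^ l * (-ξ) ^ (m - 1 - l)) * w) := by
  have hgeom := geom_sum₂_mul a (-ξ) m
  rw [sub_neg_eq_add, neg_pow, hξ, mul_zero, sub_zero, ha] at hgeom
  rw [← sub_eq_zero]
  refine hn _ ?_
  linear_combination (∑ l ∈ Finset.range m, a ^ l * (-ξ) ^ (m - 1 - l)) * h - g * hgeom

open PowerSeries

theorem X_pow_dvd_of_forall_X_pow_dvd_sum {ι : Type*} {d : ι → J₂ → PowerSeries k}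
    (hd : ∀ y : J₂ → k, (∀ i, ∑ j, y j * constantCoeff (d i j) = 0) → y = 0) {N : ℕ}
    {β : J₂ → PowerSeries k} (hβ : ∀ i, X ^ N ∣ ∑ j, β j * d i j) (j : J₂) : X ^ N ∣ β j := by
  induction N generalizing β j with
  | zero => simp
  | succ N ih =>
    choose β' hβ' using fun j => ih (fun i => (pow_dvd_pow X N.le_succ).trans (hβ i)) j
    have hzero : (fun j => constantCoeff (β' j)) = 0 := hd _ fun i => by
      have hsum : ∑ j, β j * d i j = X ^ N * ∑ j, β' j * d i j := by
        rw [Finset.mul_sum]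
        exact Finset.sum_congr rfl fun j _ => by rw [hβ', mul_assoc]
      have hdvd := hβ i
      rw [hsum, pow_succ, mul_dvd_mul_iff_left (pow_ne_zero N X_ne_zero), X_dvd_iff] at hdvd
      simpa using hdvd
    rw [hβ', pow_succ]
    exact mul_dvd_mul_left _ (X_dvd_iff.2 (congrFun hzero j))

section Arc

variable {o : σ} {u : J₁ → A} {v : J₂ → A} {β₁ : J₁ → PowerSeries k}

theorem X_pow_dvd_of_isTaylor {ι : Type*} {Q : ι → A →ₐ[k] k} {m e : ι → ℕ} (he : ∀ i, 0 < e i)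
    {N : ℕ} (hN : ∀ i, e i * m i = N) {γ : ι → A →ₐ[k] PowerSeries k}
    (hγ : ∀ i a, constantCoeff (γ i a) = Q i a) {c : ι → k}
    (hγo : ∀ i, γ i (z o) = C (c i) * X ^ e i)
    {T : ∀ i, A →ₐ[k] TruncPoly σ (PowerSeries k) (m i)} (hT : ∀ i, IsTaylor z (γ i) (T i))
    (hv : ∀ y : J₂ → k, (∀ i, ∑ j, y j * Q i (v j) = 0) → y = 0) {β₂ : J₂ → PowerSeries k}
    (hβ : ∀ i, ∑ j, β₁ j • T i (z o * u j) + ∑ j, β₂ j • T i (v j) = 0) (j : J₂) :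
    X ^ N ∣ β₂ j := by
  choose q hq using fun i => (hT i).exists_pow_dvd_sum o (hβ i)
  refine X_pow_dvd_of_forall_X_pow_dvd_sum (d := fun i j => γ i (v j) + γ i (z o) * q i j)
    ?_ (fun i => ?_) j
  · simpa [hγ, hγo, (he _).ne'] using hv
  · refine dvd_trans ?_ (hq i)
    rw [hγo, mul_pow, ← pow_mul, hN]
    exact dvd_mul_left _ _

variable {e N : ℕ} (hN : e * m = N) {γ : A →ₐ[k] PowerSeries k} {c : k}
  (hγo : γ (z o) = C c * X ^ e) {T : A →ₐ[k] TruncPoly σ (PowerSeries k) m} (hT : IsTaylor z γ T)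
  {ρ : J₂ → PowerSeries k}
  (hβ : ∑ j, β₁ j • T (z o * u j) + ∑ j, (X ^ N * ρ j) • T (v j) = 0)
include hN hγo hT hβ

theorem smul_sum_smul_eq_neg_mul : C (c ^ m) • ∑ j, β₁ j • T (u j) =
    -((∑ l ∈ Finset.range m, algebraMap _ _ (C c * X ^ e) ^ l *
      (-TruncPoly.var o) ^ (m - 1 - l)) * ∑ j, ρ j • T (v j)) := by
  rw [TruncPoly.smul_def]
  refine mul_eq_neg_geom_sum_mul (n := algebraMap (PowerSeries k) _ (X ^ N))
    (TruncPoly.var_pow o) ?_ (fun y hy => ?_) ?_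
  · rw [← map_pow, ← map_mul, mul_pow, ← pow_mul, hN, map_pow]
  · rw [← TruncPoly.smul_def] at hy
    exact TruncPoly.eq_zero_of_smul_eq_zero (pow_ne_zero N X_ne_zero) hy
  · rw [← hβ, ← hγo, ← hT.coord, ← TruncPoly.smul_def, Finset.mul_sum, Finset.smul_sum]
    simp only [map_mul, mul_smul_comm, smul_smul]

/- With `τ = c t ^ e`, the relation reads `(τ + X o) g + t ^ N w = 0`; multiplying by
`(τ ^ m - (-X o) ^ m) / (τ + X o)` and dividing by `t ^ N` gives `c ^ m g` as a multiple of
`(-X o) ^ (m - 1)` modulo `t`. -/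
theorem limit_mem_simpleResidue (hz : IsEtaleCoordinates k z) {Q : A →ₐ[k] k}
    (hγ : ∀ a, constantCoeff (γ a) = Q a) (he : 0 < e) (hm : 0 < m) (hc : c ≠ 0) :
    ∑ j, constantCoeff (β₁ j) • u j ∈ RingHom.ker Q ^ m ⊔ Ideal.span {z o ^ (m - 1)} := by
  let φ : TruncPoly σ (PowerSeries k) m →ₐ[k] TruncPoly σ k m := TruncPoly.map (constCoeffAlgHom k)
  have hφ (f : PowerSeries k) (p) : φ (f • p) = constantCoeff f • φ p := TruncPoly.map_smul _ _ _
  have hTQ : IsTaylor z Q (φ.comp T) := by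
    have hcomp : (constCoeffAlgHom k).comp γ = Q := AlgHom.ext hγ
    simpa only [hcomp] using hT.map (constCoeffAlgHom k)
  have hQo : Q (z o) = 0 := by rw [← hγ, hγo]; simp [he.ne']
  have hφU : φ (∑ l ∈ Finset.range m, algebraMap _ _ (C c * X ^ e) ^ l *
      (-TruncPoly.var o) ^ (m - 1 - l)) = (-TruncPoly.var o) ^ (m - 1) := by
    have hτ : φ (algebraMap _ _ (C c * X ^ e)) = 0 := by
      rw [TruncPoly.map_algebraMap]
      simp [he.ne']
    rw [map_sum, Finset.sum_eq_single_of_mem 0 (Finset.mem_range.2 hm)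
      fun l _ hl => by rw [map_mul, map_pow, hτ, zero_pow hl, zero_mul]]
    simp [φ]
  have hlimit := congrArg φ (smul_sum_smul_eq_neg_mul hN hγo hT hβ)
  rw [hφ, map_neg, map_mul, hφU, map_sum, constantCoeff_C] at hlimit
  have hdvd : TruncPoly.var o ^ (m - 1) ∣
      (φ.comp T) (c ^ m • ∑ j, constantCoeff (β₁ j) • u j) := by
    simp only [map_smul, map_sum, AlgHom.comp_apply, ← hφ]
    rw [hlimit]
    exact ⟨-((-1) ^ (m - 1) * φ (∑ j, ρ j • T (v j))), by ring⟩
  have hmem := Submodule.smul_of_tower_mem _ (c ^ m)⁻¹ (hTQ.mem_sup_of_var_pow_dvd hz hQo hdvd)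
  rwa [smul_smul, inv_mul_cancel₀ (pow_ne_zero m hc), one_smul] at hmem

end Arc

end Degeneration

section LinearAlgebra

theorem exists_matrix_mul_eq_smul_one {B I J : Type*} [CommRing B] [IsDomain B] [Fintype I]
    [Fintype J] [DecidableEq J] {M : Matrix I J B} (hM : Function.Injective M.mulVec) :
    ∃ (D : B) (N : Matrix J I B), D ≠ 0 ∧ N * M = D • (1 : Matrix J J B) := by
  classical
  let K := FractionRing B
  have hBK : Function.Injective (algebraMap B K) := IsFractionRing.injective B K
  have hinj : Function.Injective (M.map (algebraMap B K)).mulVec := by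
    rw [Matrix.mulVec_injective_iff] at hM ⊢
    rw [← LinearIndependent.iff_fractionRing B K]
    exact hM.map' ((Algebra.linearMap B K).compLeft I)
      (LinearMap.ker_eq_bot.2 fun x y h => funext fun i => hBK (congrFun h i))
  obtain ⟨g, hg⟩ := (M.map (algebraMap B K)).mulVecLin.exists_leftInverse_of_injective
    (LinearMap.ker_eq_bot.2 hinj)
  have hG : LinearMap.toMatrix' g * M.map (algebraMap B K) = 1 := by
    have hg' := congrArg LinearMap.toMatrix' hg
    rwa [LinearMap.toMatrix'_comp, LinearMap.toMatrix'_id, ← Matrix.toLin'_apply',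
      LinearMap.toMatrix'_toLin'] at hg'
  obtain ⟨d, hd⟩ := IsLocalization.exist_integer_multiples_of_finite (nonZeroDivisors B)
    fun p : J × I => LinearMap.toMatrix' g p.1 p.2
  choose N hN using hd
  have hN' : (Matrix.of (Function.curry N)).map (algebraMap B K) =
      (d : B) • LinearMap.toMatrix' g := Matrix.ext fun j i => hN (j, i)
  refine ⟨d, Matrix.of (Function.curry N), nonZeroDivisors.ne_zero d.2,
    Matrix.map_injective hBK ?_⟩
  beta_reduce
  rw [Matrix.map_mul, hN', Matrix.smul_mul, hG]
  ext j j'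
  by_cases h : j = j' <;> simp [h, Matrix.smul_apply, Algebra.algebraMap_eq_smul_one (d : B)]

theorem eq_zero_of_map_mulVec_eq_zero {B R I J : Type*} [CommRing B] [CommRing R] [IsDomain R]
    [Fintype I] [Fintype J] [DecidableEq J] {M : Matrix I J B} {N : Matrix J I B} {D : B}
    (hN : N * M = D • 1) {ψ : B →+* R} (hD : ψ D ≠ 0) {y : J → R}
    (hy : (M.map ψ).mulVec y = 0) : y = 0 := by
  have hNM : N.map ψ * M.map ψ = ψ D • 1 := by
    rw [← Matrix.map_mul, hN]
    ext j j'
    by_cases h : j = j' <;> simp [h]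
  refine (smul_eq_zero.1 ?_).resolve_left hD
  rw [← Matrix.one_mulVec y, ← Matrix.smul_mulVec, ← hNM, ← Matrix.mulVec_mulVec, hy,
    Matrix.mulVec_zero]

theorem eq_zero_of_forall_constantCoeff_eq_zero {k J : Type*} [Semiring k]
    {P : (J → PowerSeries k) → Prop} (hP : ∀ β, P ((PowerSeries.X : PowerSeries k) • β) → P β)
    (h : ∀ β, P β → ∀ j, PowerSeries.constantCoeff (β j) = 0) {β : J → PowerSeries k} (hβ : P β) :
    β = 0 := by
  suffices H : ∀ n β, P β → ∀ j, PowerSeries.coeff n (β j) = 0 from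
    funext fun j => PowerSeries.ext fun n => H n β hβ j
  intro n
  induction n with
  | zero => simpa using h
  | succ n ih =>
    intro β hβ j
    choose β' hβ' using fun j => PowerSeries.X_dvd_iff.2 (h β hβ j)
    obtain rfl : β = (PowerSeries.X : PowerSeries k) • β' := funext hβ'
    simpa [PowerSeries.coeff_succ_X_mul] using ih β' (hP β' hβ) j

theorem exists_adapted_bases {k E F : Type*} [Field k] [AddCommGroup E] [Module k E]
    [AddCommGroup F] [Module k F] (f : E →ₗ[k] F) (V : Submodule k F) [FiniteDimensional k V]
    [FiniteDimensional k (V.comap f)] :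
    ∃ (d₁ d₂ : ℕ) (u : Fin d₁ → E) (v : Fin d₂ → F),
      (∀ a ∈ V, ∃ (y₁ : Fin d₁ → k) (y₂ : Fin d₂ → k),
        a = ∑ j, y₁ j • f (u j) + ∑ j, y₂ j • v j) ∧
      (∀ j, f (u j) ∈ V) ∧ LinearIndependent k u ∧
      (∀ j, v j ∈ V) ∧ ∀ y : Fin d₂ → k, ∑ j, y j • v j ∈ LinearMap.range f → y = 0 := by
  let V₁ := (V.comap f).map f
  obtain ⟨C, hC⟩ := V₁.exists_isCompl
  let V₂ := C ⊓ V
  have hsup : V₁ ⊔ V₂ = V := by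
    rw [← sup_inf_assoc_of_le _ (Submodule.map_comap_le f V), hC.sup_eq_top, top_inf_eq]
  let bU := Module.finBasis k (V.comap f)
  let bV := Module.finBasis k V₂
  refine ⟨_, _, fun j => bU j, fun j => bV j, fun a ha => ?_, fun j => (bU j).2,
    bU.linearIndependent.map' _ (Submodule.ker_subtype _), fun j => (bV j).2.2, fun y hy => ?_⟩
  · rw [← hsup, Submodule.mem_sup] at ha
    obtain ⟨_, ⟨b, hb, rfl⟩, c, hc, rfl⟩ := ha
    refine ⟨bU.repr ⟨b, hb⟩, bV.repr ⟨c, hc⟩, ?_⟩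
    have hsum₁ := congr(f $(congrArg Subtype.val (bU.sum_repr ⟨b, hb⟩)))
    have hsum₂ := congrArg Subtype.val (bV.sum_repr ⟨c, hc⟩)
    simp only [Submodule.coe_sum, Submodule.coe_smul, map_sum, map_smul] at hsum₁ hsum₂
    rw [hsum₁, hsum₂]
  · have hmem := (∑ j, y j • bV j).2
    have hsum : ∑ j, y j • (bV j : F) = (∑ j, y j • bV j : V₂) := by simp
    rw [hsum] at hy
    obtain ⟨b, hb⟩ := hy
    have hV₁ : ((∑ j, y j • bV j : V₂) : F) ∈ V₁ ⊓ C := ⟨⟨b, by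
      rw [SetLike.mem_coe, Submodule.mem_comap, hb]; exact hmem.2, hb⟩, hmem.1⟩
    rw [hC.inf_eq_bot] at hV₁
    exact funext (Fintype.linearIndependent_iff.1 bV.linearIndependent y (Subtype.ext hV₁))

end LinearAlgebra

section AffineHorace

variable {σ k A : Type*} [Field k] [CommRing A] [Algebra k A] {z : σ → A} {r : ℕ}

theorem finiteDimensional_of_ker_pow [Finite σ] (hz : IsEtaleCoordinates k z) (U : Submodule k A)
    (m : Fin r → ℕ) (Q : Fin r → A →ₐ[k] k)
    (hU : ∀ b ∈ U, (∀ i, b ∈ RingHom.ker (Q i) ^ m i) → b = 0) : FiniteDimensional k U := by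
  choose T hT using fun i => hz.exists_isTaylor (Q i) (m i)
  have (i : Fin r) : Finite {α : σ →₀ ℕ // α.degree < m i} :=
    (Finsupp.finite_of_degree_lt (m i)).to_subtype
  let F : U →ₗ[k] (i : Fin r) → {α : σ →₀ ℕ // α.degree < m i} → k :=
    LinearMap.pi fun i => LinearMap.pi fun α =>
      (TruncPoly.coeff α.1 α.2).comp ((T i).toLinearMap.comp U.subtype)
  refine FiniteDimensional.of_injective F ?_
  rw [← LinearMap.ker_eq_bot, Submodule.eq_bot_iff]
  refine fun b hb => Subtype.ext (hU b b.2 fun i => ?_)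
  have hTb : T i b = 0 := TruncPoly.eq_zero_of_coeff fun α hα => congr($hb i ⟨α, hα⟩)
  rw [← Ideal.Quotient.eq_zero_iff_mem, ← hz.pointComparison_apply (hT i), hTb, map_zero]

theorem finiteDimensional_of_trace {x : A} {V : Submodule k A} {Q : Fin r → A →ₐ[k] k}
    (htrace : ∀ a ∈ V, (∀ i, Q i a = 0) → x ∣ a)
    [FiniteDimensional k (V.comap (LinearMap.mulLeft k x))] : FiniteDimensional k V := by
  refine Module.Finite.iff_fg.2 (Submodule.fg_of_fg_map_of_fg_inf_ker
    (LinearMap.pi fun i => (Q i).toLinearMap) (IsNoetherian.noetherian _) ?_)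
  refine ((Module.Finite.iff_fg.1 ‹_›).map (LinearMap.mulLeft k x)).of_le ?_
  rintro a ⟨ha, hQ⟩
  obtain ⟨b, rfl⟩ := htrace a ha fun i => congr($hQ i)
  exact ⟨b, ha, rfl⟩

/-- The functions `x * u j` and `v j` are adapted to the divisor `x = 0` and to the points `Q i` of
it with multiplicities `m i`: no combination of the `v j` vanishes at all `Q i` (condition Dime),
and no combination of the `u j` vanishes on all simple residues (condition Degue). -/
structure IsAdapted {J₁ J₂ : Type*} [Fintype J₁] [Fintype J₂] (x : A) (Q : Fin r → A →ₐ[k] k)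
    (m : Fin r → ℕ) (u : J₁ → A) (v : J₂ → A) : Prop where
  eq_zero_of_trace : ∀ y : J₂ → k, (∀ i, ∑ j, y j * Q i (v j) = 0) → y = 0
  eq_zero_of_residual : ∀ y : J₁ → k,
    (∀ i, ∑ j, y j • u j ∈ RingHom.ker (Q i) ^ m i ⊔ Ideal.span {x ^ (m i - 1)}) → y = 0

theorem exists_isAdapted [Finite σ] (hz : IsEtaleCoordinates k z) {x : A} {V : Submodule k A}
    {m : Fin r → ℕ} {Q : Fin r → A →ₐ[k] k} (htrace : ∀ a ∈ V, (∀ i, Q i a = 0) → x ∣ a)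
    (hresidual : ∀ b, x * b ∈ V →
      (∀ i, b ∈ RingHom.ker (Q i) ^ m i ⊔ Ideal.span {x ^ (m i - 1)}) → b = 0) :
    ∃ (d₁ d₂ : ℕ) (u : Fin d₁ → A) (v : Fin d₂ → A), IsAdapted x Q m u v ∧
      ∀ a ∈ V, ∃ (y₁ : Fin d₁ → k) (y₂ : Fin d₂ → k),
        a = ∑ j, y₁ j • (x * u j) + ∑ j, y₂ j • v j := by
  have hU : FiniteDimensional k (V.comap (LinearMap.mulLeft k x)) :=
    finiteDimensional_of_ker_pow hz _ m Q fun b hb hb' =>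
      hresidual b hb fun i => Ideal.mem_sup_left (hb' i)
  have hV := finiteDimensional_of_trace htrace
  obtain ⟨d₁, d₂, u, v, hspan, huV, hu, hvV, hv⟩ := exists_adapted_bases (LinearMap.mulLeft k x) V
  refine ⟨d₁, d₂, u, v, ⟨fun y hy => hv y ?_, fun y hy => ?_⟩, hspan⟩
  · obtain ⟨b, hb⟩ := htrace (∑ j, y j • v j)
      (sum_mem fun j _ => V.smul_mem _ (hvV j)) fun i => by simpa using hy i
    exact ⟨b, hb.symm⟩
  · refine funext (Fintype.linearIndependent_iff.1 hu y (hresidual _ ?_ hy))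
    rw [Finset.mul_sum]
    exact sum_mem fun j _ => by rw [mul_smul_comm]; exact V.smul_mem _ (huV j)

section Arcs

open PowerSeries

variable {J₁ J₂ : Type*} [Fintype J₁] [Fintype J₂] {o : σ} {Q : Fin r → A →ₐ[k] k}
  {m : Fin r → ℕ} {u : J₁ → A} {v : J₂ → A} {e : Fin r → ℕ} {N : ℕ}

theorem IsAdapted.eq_zero_of_arcs (hz : IsEtaleCoordinates k z) (huv : IsAdapted (z o) Q m u v)
    (hN0 : 0 < N) (hN : ∀ i, e i * m i = N) {γ : Fin r → A →ₐ[k] PowerSeries k} {c : Fin r → k}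
    (hc : ∀ i, c i ≠ 0) (hγ : ∀ i a, constantCoeff (γ i a) = Q i a)
    (hγo : ∀ i, γ i (z o) = C (c i) * X ^ e i)
    {T : ∀ i, A →ₐ[k] TruncPoly σ (PowerSeries k) (m i)} (hT : ∀ i, IsTaylor z (γ i) (T i))
    {β : J₁ ⊕ J₂ → PowerSeries k}
    (hβ : ∀ i, ∑ j, β j • T i (Sum.elim (fun j => z o * u j) v j) = 0) : β = 0 := by
  have he i : 0 < e i := Nat.pos_of_mul_pos_right (hN i ▸ hN0)
  have hm i : 0 < m i := Nat.pos_of_mul_pos_left (hN i ▸ hN0)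
  refine eq_zero_of_forall_constantCoeff_eq_zero
    (P := fun β => ∀ i, ∑ j, β j • T i (Sum.elim (fun j => z o * u j) v j) = 0)
    (fun β hβ i => ?_) (fun β hβ => ?_) hβ
  · refine TruncPoly.eq_zero_of_smul_eq_zero (X_ne_zero (R := k)) ?_
    simpa only [Finset.smul_sum, smul_smul, Pi.smul_apply, smul_eq_mul] using hβ i
  · simp only [Fintype.sum_sum_type, Sum.elim_inl, Sum.elim_inr] at hβ
    have hdvd := X_pow_dvd_of_isTaylor he hN hγ hγo hT huv.eq_zero_of_trace hβ
    choose ρ hρ using hdvd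
    have hzero := huv.eq_zero_of_residual (fun j => constantCoeff (β (.inl j))) fun i =>
      limit_mem_simpleResidue (hN i) (hγo i) (hT i) (ρ := ρ)
        (by simpa only [← hρ] using hβ i) hz (hγ i) (he i) (hm i) (hc i)
    rintro (j | j)
    · exact congrFun hzero j
    · rw [hρ, map_mul, map_pow, constantCoeff_X, zero_pow hN0.ne', zero_mul]

end Arcs

section GenericTuple

variable {J : Type*} {R : Type*} [CommRing R] [Algebra k R] {m : Fin r → ℕ}

/-- The matrix of the coefficients of the Taylor expansions of the functions `v j` at the points of
a tuple. -/
noncomputable def taylorMatrix (T : ∀ i, A →ₐ[k] TruncPoly σ R (m i)) (v : J → A) :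
    Matrix (Σ i, {α : σ →₀ ℕ // α.degree < m i}) J R :=
  Matrix.of fun l j => TruncPoly.coeff l.2.1 l.2.2 (T l.1 (v j))

theorem taylorMatrix_mulVec_eq_zero_iff [Fintype J]
    {T : ∀ i, A →ₐ[k] TruncPoly σ R (m i)} {v : J → A}
    {y : J → R} : (taylorMatrix T v).mulVec y = 0 ↔ ∀ i, ∑ j, y j • T i (v j) = 0 := by
  have hcoeff i α hα : (taylorMatrix T v).mulVec y ⟨i, α, hα⟩ =
      TruncPoly.coeff α hα (∑ j, y j • T i (v j)) := by
    simp [taylorMatrix, Matrix.mulVec, dotProduct, mul_comm]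
  refine ⟨fun h i => TruncPoly.eq_zero_of_coeff fun α hα => ?_, fun h => ?_⟩
  · rw [← hcoeff, h, Pi.zero_apply]
  · ext ⟨i, α, hα⟩
    rw [hcoeff, h, map_zero, Pi.zero_apply]

theorem taylorMatrix_map {S : Type*} [CommRing S] [Algebra k S] (ψ : R →ₐ[k] S)
    (T : ∀ i, A →ₐ[k] TruncPoly σ R (m i)) (v : J → A) :
    (taylorMatrix T v).map ψ = taylorMatrix (fun i => (TruncPoly.map ψ).comp (T i)) v :=
  Matrix.ext fun l _ => (TruncPoly.coeff_map ψ _ l.2.1 l.2.2).symm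

end GenericTuple

end AffineHorace

section GenericPolynomial

variable {k A B : Type u} {σ : Type u} [Field k] [CommRing A] [Algebra k A] [CommRing B]
  [Algebra k B] {z : σ → A} {r : ℕ} {ι : Fin r → A →ₐ[k] B} (hι : IsTensorPower ι)
include hι

theorem IsTensorPower.exists_aeval_eq (b : B) :
    ∃ p : MvPolynomial (Fin r × A) k, MvPolynomial.aeval (fun l => ι l.1 l.2) p = b := by
  have hle : ⨆ i, (ι i).range ≤
      (MvPolynomial.aeval (R := k) (fun l : Fin r × A => ι l.1 l.2)).range := by
    refine iSup_le fun i => ?_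
    rintro _ ⟨a, rfl⟩
    exact ⟨MvPolynomial.X (i, a), by simp⟩
  rw [hι.iSup_range] at hle
  exact hle (Algebra.mem_top (x := b))

theorem IsTensorPower.exists_arc_apply_ne_zero [Infinite k] [IsNoetherianRing B] [IsDomain B]
    [Finite σ] (hz : IsEtaleCoordinates k z) {o : σ} {Q : Fin r → A →ₐ[k] k}
    (hQ : ∀ i, Q i (z o) = 0) {e : Fin r → ℕ} (he : ∀ i, 0 < e i) {b : B} (hb : b ≠ 0) :
    ∃ (γ : B →ₐ[k] PowerSeries k) (c : Fin r → k), (∀ i, c i ≠ 0) ∧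
      (∀ i, γ (ι i (z o)) = PowerSeries.C (c i) * PowerSeries.X ^ e i) ∧
      (∀ i a, PowerSeries.constantCoeff (γ (ι i a)) = Q i a) ∧ γ b ≠ 0 := by
  classical
  obtain ⟨ev, hev⟩ := hι.exists_desc k Q
  have hev' i a : ev (ι i a) = Q i a := congr($(hev i) a)
  obtain ⟨γ, c, hc, hγz, hγ, hγb⟩ := (hι.isEtaleCoordinates hz).exists_arc_apply_ne_zero ev
    (w := fun l => e l.1) (E := ∑ i, e i) (fun l => he l.1)
    (fun l => Finset.single_le_sum (fun _ _ => Nat.zero_le _) (Finset.mem_univ l.1))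
    (Finset.univ.image fun i => (i, o)) hb
  refine ⟨γ, fun i => c (i, o), fun i => hc _ (by simp), fun i => ?_, fun i a => ?_, hγb⟩
  · simpa [hev', hQ] using hγz (i, o)
  · rw [hγ, hev']

/- The divisor is approached at the `i`-th point with contact order `L / m i`, for `L` a common
multiple of the multiplicities. -/
theorem IsAdapted.injective_taylorMatrix_mulVec [Infinite k] [IsNoetherianRing B] [IsDomain B]
    [Finite σ] (hz : IsEtaleCoordinates k z) {o : σ} {m : Fin r → ℕ} (hm : ∀ i, 0 < m i)
    {Q : Fin r → A →ₐ[k] k} (hQ : ∀ i, Q i (z o) = 0) {J₁ J₂ : Type*} [Fintype J₁] [Fintype J₂]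
    {u : J₁ → A} {v : J₂ → A} (huv : IsAdapted (z o) Q m u v)
    {T : ∀ i, A →ₐ[k] TruncPoly σ B (m i)} (hT : ∀ i, IsTaylor z (ι i) (T i)) :
    Function.Injective (taylorMatrix T (Sum.elim (fun j => z o * u j) v)).mulVec := by
  refine (injective_iff_map_eq_zero (Matrix.mulVecLin _)).2 fun b hb => ?_
  rw [Matrix.mulVecLin_apply, taylorMatrix_mulVec_eq_zero_iff] at hb
  by_contra hb0
  obtain ⟨j, hj⟩ := Function.ne_iff.1 hb0
  have hL : 0 < ∏ i, m i := Finset.prod_pos fun i _ => hm i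
  have heL i : (∏ i, m i) / m i * m i = ∏ i, m i :=
    Nat.div_mul_cancel (Finset.dvd_prod_of_mem m (Finset.mem_univ i))
  obtain ⟨γ, c, hc, hγo, hγ, hγb⟩ := hι.exists_arc_apply_ne_zero hz hQ
    (fun i => Nat.pos_of_mul_pos_right (heL i ▸ hL)) hj
  refine hγb (congrFun (huv.eq_zero_of_arcs hz hL heL hc hγ hγo (fun i => (hT i).map γ)
    (β := fun j => γ (b j)) fun i => ?_) j)
  have hγb := congrArg (TruncPoly.map γ) (hb i)
  simpa only [map_sum, TruncPoly.map_smul, map_zero, AlgHom.comp_apply] using hγb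

end GenericPolynomial

theorem exists_generic_polynomial {k A : Type u} {σ : Type u} [Field k] [IsAlgClosed k]
    [CommRing A] [IsDomain A] [Algebra k A] [Algebra.FiniteType k A] [Finite σ] {z : σ → A}
    (hz : IsEtaleCoordinates k z) (o : σ) (V : Submodule k A) {r : ℕ} {m : Fin r → ℕ}
    (hm : ∀ i, 0 < m i) {Q : Fin r → A →ₐ[k] k} (hQ : ∀ i, Q i (z o) = 0)
    (htrace : ∀ a ∈ V, (∀ i, Q i a = 0) → z o ∣ a)
    (hresidual : ∀ b, z o * b ∈ V →
      (∀ i, b ∈ RingHom.ker (Q i) ^ m i ⊔ Ideal.span {z o ^ (m i - 1)}) → b = 0) :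
    ∃ D : MvPolynomial (Fin r × A) k,
      (∃ P : Fin r → A →ₐ[k] k, MvPolynomial.aeval (fun l => P l.1 l.2) D ≠ 0) ∧
      ∀ P : Fin r → A →ₐ[k] k, MvPolynomial.aeval (fun l => P l.1 l.2) D ≠ 0 →
        ∀ a ∈ V, (∀ i, a ∈ RingHom.ker (P i) ^ m i) → a = 0 := by
  classical
  obtain ⟨B, _, _, _, _, ι, hι⟩ := exists_isTensorPower (k := k) A r
  have := Algebra.FiniteType.isNoetherianRing k B
  obtain ⟨d₁, d₂, u, v, huv, hspan⟩ := exists_isAdapted hz htrace hresidual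
  choose T hT using fun i => hz.exists_isTaylor (ι i) (m i)
  have (i : Fin r) : Fintype {α : σ →₀ ℕ // α.degree < m i} :=
    @Fintype.ofFinite _ (Finsupp.finite_of_degree_lt (m i)).to_subtype
  obtain ⟨D, N, hD, hN⟩ :=
    exists_matrix_mul_eq_smul_one (huv.injective_taylorMatrix_mulVec hι hz hm hQ hT)
  obtain ⟨p, hp⟩ := hι.exists_aeval_eq D
  have hev (ev : B →ₐ[k] k) : MvPolynomial.aeval (fun l => ev (ι l.1 l.2)) p = ev D := by
    rw [← hp, ← AlgHom.comp_apply, MvPolynomial.comp_aeval]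
  refine ⟨p, ?_, fun P hP a ha hker => ?_⟩
  · obtain ⟨ev, hevD⟩ := exists_algHom_apply_ne_zero (k := k) hD
    exact ⟨fun i => ev.comp (ι i), (hev ev).trans_ne hevD⟩
  · obtain ⟨ev, hevP⟩ := hι.exists_desc k P
    obtain rfl : (fun i => ev.comp (ι i)) = P := funext hevP
    obtain ⟨y₁, y₂, rfl⟩ := hspan a ha
    have hy : Sum.elim y₁ y₂ = 0 := by
      refine eq_zero_of_map_mulVec_eq_zero hN (ψ := ev.toRingHom) ((hev ev).symm.trans_ne hP) ?_
      refine (congrArg (Matrix.mulVec · _) (taylorMatrix_map ev T _)).trans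
        (taylorMatrix_mulVec_eq_zero_iff.2 fun i => ?_)
      have hTa := ((hT i).map ev).apply_eq_zero_of_mem_ker_pow (hker i)
      simpa only [Fintype.sum_sum_type, Sum.elim_inl, Sum.elim_inr, map_add, map_sum, map_smul]
        using hTa
    have hy₁ : y₁ = 0 := funext fun j => congrFun hy (.inl j)
    have hy₂ : y₂ = 0 := funext fun j => congrFun hy (.inr j)
    simp [hy₁, hy₂]

section EtaleAtDivisor

open IsLocalRing

theorem isEtaleAt_of_isUnramifiedAt_of_flat {R S : Type*} [CommRing R] [CommRing S] [Algebra R S]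
    [Algebra.FinitePresentation R S] (p : Ideal R) (q : Ideal S) [p.IsPrime] [q.IsPrime]
    [hqp : q.LiesOver p] [Module.Flat (Localization.AtPrime p)
      (Localization (Algebra.algebraMapSubmonoid S p.primeCompl))]
    [Algebra.IsUnramifiedAt R q] : Algebra.IsEtaleAt R q := by
  let M := Algebra.algebraMapSubmonoid S p.primeCompl
  have hM : Disjoint (M : Set S) q := by
    rw [Set.disjoint_left]
    rintro _ ⟨a, ha, rfl⟩ haq
    exact ha (hqp.over ▸ haq)
  have : (q.map (algebraMap S (Localization M))).IsPrime :=
    IsLocalization.isPrime_of_isPrime_disjoint M _ q ‹_› hM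
  let Q := Localization.AtPrime (q.map (algebraMap S (Localization M)))
  have : IsLocalization.AtPrime Q q := by
    convert IsLocalization.isLocalization_isLocalization_atPrime_isLocalization M Q
      (q.map (algebraMap S (Localization M)))
    exact (IsLocalization.under_map_of_isPrime_disjoint M _ ‹_› hM).symm
  let e : Localization.AtPrime q ≃ₐ[S] Q := IsLocalization.algEquiv q.primeCompl _ _
  have : IsScalarTower R (Localization.AtPrime p) Q := .to₁₂₄ _ _ (Localization M) _
  have : Algebra.IsUnramifiedAt (Localization.AtPrime p)
      (q.map (algebraMap S (Localization M))) := by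
    have : Algebra.FormallyUnramified R Q := .of_equiv (e.restrictScalars R)
    exact Algebra.FormallyUnramified.of_restrictScalars R _ Q
  have : Algebra.FinitePresentation (Localization.AtPrime p) (Localization M) :=
    have : Algebra.IsPushout R (Localization.AtPrime p) S (Localization M) :=
      (Algebra.isPushout_of_isLocalization p.primeCompl _ _ _).symm
    .equiv (Algebra.IsPushout.equiv R (Localization.AtPrime p) S (Localization M))
  have : Algebra.FormallyEtale (Localization.AtPrime p) Q :=
    Algebra.IsEtaleAt.of_isUnramifiedAt_of_flat _
  have : Algebra.FormallyEtale R Q := .comp R (Localization.AtPrime p) Q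
  exact .of_equiv (e.symm.restrictScalars R)

theorem isDedekindDomain_localization_span_singleton {R : Type*} [CommRing R] [IsDomain R]
    [IsNoetherianRing R] (x : R) [(Ideal.span {x}).IsPrime] :
    IsDedekindDomain (Localization.AtPrime (Ideal.span {x})) := by
  refine ((tfae_of_isNoetherianRing_of_isLocalRing_of_isDomain
    (Localization.AtPrime (Ideal.span {x}))).out 2 4).2 ?_
  rw [← Localization.AtPrime.map_eq_maximalIdeal, Ideal.map_span, Set.image_singleton]
  exact ⟨_, rfl⟩

theorem isEtaleAt_span_singleton {R S : Type*} [CommRing R] [IsDomain R] [IsNoetherianRing R]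
    [CommRing S] [IsDomain S] [Algebra R S] [Algebra.FiniteType R S] {x : R} {y : S}
    (hxy : algebraMap R S x = y) (hy : y ≠ 0) [(Ideal.span {x}).IsPrime] [(Ideal.span {y}).IsPrime]
    [hyx : (Ideal.span {y}).LiesOver (Ideal.span {x})]
    [Algebra (Localization.AtPrime (Ideal.span {x})) (Localization.AtPrime (Ideal.span {y}))]
    [Localization.AtPrime.IsLiesOverAlgebra (Ideal.span {x}) (Ideal.span {y})]
    [Algebra.IsSeparable (Ideal.span {x}).ResidueField (Ideal.span {y}).ResidueField] :
    Algebra.IsEtaleAt R (Ideal.span {y}) := by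
  set p := Ideal.span {x}
  set q := Ideal.span {y}
  have := isDedekindDomain_localization_span_singleton x
  have : Algebra.FinitePresentation R S := Algebra.FinitePresentation.of_finiteType.1 ‹_›
  let M := Algebra.algebraMapSubmonoid S p.primeCompl
  have hM : M ≤ nonZeroDivisors S := by
    rintro _ ⟨a, ha, rfl⟩
    refine mem_nonZeroDivisors_of_ne_zero fun h0 => ha ?_
    rw [hyx.over, SetLike.mem_coe, Ideal.mem_comap, h0]
    exact zero_mem q
  have : IsDomain (Localization M) := IsLocalization.isDomain_localization hM
  have hinj : Function.Injective (algebraMap (Localization.AtPrime p) (Localization M)) := by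
    rw [RingHom.injective_iff_ker_eq_bot]
    by_contra hne
    have hker := IsLocalRing.eq_maximalIdeal ((RingHom.ker_isPrime
      (algebraMap (Localization.AtPrime p) (Localization M))).isMaximal hne)
    have hmem : algebraMap R _ x ∈ maximalIdeal (Localization.AtPrime p) :=
      Localization.AtPrime.map_eq_maximalIdeal (I := p) ▸
        Ideal.mem_map_of_mem _ (Ideal.mem_span_singleton_self x)
    rw [← hker, RingHom.mem_ker, ← IsScalarTower.algebraMap_apply,
      IsScalarTower.algebraMap_apply R S, IsLocalization.to_map_eq_zero_iff _ hM, hxy] at hmem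
    exact hy hmem
  have : Module.IsTorsionFree (Localization.AtPrime p) (Localization M) :=
    Module.isTorsionFree_iff_algebraMap_injective.2 hinj
  have : Algebra.IsUnramifiedAt R q := by
    refine (Algebra.isUnramifiedAt_iff_map_eq R p q).2 ⟨‹_›, ?_⟩
    rw [← Localization.AtPrime.map_eq_maximalIdeal, Ideal.map_span, Ideal.map_span,
      Set.image_singleton, Set.image_singleton, IsScalarTower.algebraMap_apply R S, hxy]
  exact isEtaleAt_of_isUnramifiedAt_of_flat p q

theorem isSeparable_of_adjoin {k F K : Type*} [Field k] [Field F] [Field K] [Algebra k F]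
    [Algebra k K] [Algebra F K] [IsScalarTower k F K] {s : Set K}
    (hs : s ⊆ Set.range (algebraMap F K))
    [Algebra.IsSeparable (IntermediateField.adjoin k s) K] : Algebra.IsSeparable F K := by
  let φ := IsScalarTower.toAlgHom k F K
  have hle : (IntermediateField.adjoin k s).toSubalgebra ≤ φ.range :=
    IntermediateField.adjoin_le_iff (T := φ.fieldRange).2 hs
  let := ((AlgEquiv.ofInjectiveField φ).symm.toAlgHom.comp
    (Subalgebra.inclusion hle)).toRingHom.toAlgebra
  have : IsScalarTower (IntermediateField.adjoin k s) F K := .of_algebraMap_eq fun a =>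
    (congrArg Subtype.val ((AlgEquiv.ofInjectiveField φ).apply_symm_apply ⟨a, hle a.2⟩)).symm
  exact Algebra.isSeparable_tower_top_of_isSeparable (IntermediateField.adjoin k s) F K

theorem isSeparable_residueField_of_adjoin {k R S K : Type*} [Field k] [CommRing R] [CommRing S]
    [Field K] [Algebra k R] [Algebra k K] [Algebra R S] [Algebra R K] [Algebra S K]
    [IsScalarTower k R K] [IsScalarTower R S K] (p : Ideal R) (q : Ideal S) [p.IsPrime] [q.IsPrime]
    [q.LiesOver p] [Algebra (Localization.AtPrime p) (Localization.AtPrime q)]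
    [Localization.AtPrime.IsLiesOverAlgebra p q] (hq : RingHom.ker (algebraMap S K) = q)
    {s : Set K} (hs : s ⊆ Set.range (algebraMap R K))
    [Algebra.IsSeparable (IntermediateField.adjoin k s) K] :
    Algebra.IsSeparable p.ResidueField q.ResidueField := by
  let ψ : q.ResidueField →+* K := Ideal.ResidueField.lift q (algebraMap S K) hq.ge
    fun a ha => isUnit_iff_ne_zero.2 fun h => ha (hq ▸ h)
  let := ψ.toAlgebra
  let := (ψ.comp (algebraMap p.ResidueField q.ResidueField)).toAlgebra
  have : IsScalarTower p.ResidueField q.ResidueField K := .of_algebraMap_eq' rfl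
  have hψ (a : R) : algebraMap p.ResidueField K (algebraMap R _ a) = algebraMap R K a := by
    rw [IsScalarTower.algebraMap_apply p.ResidueField q.ResidueField K,
      ← IsScalarTower.algebraMap_apply R p.ResidueField q.ResidueField,
      IsScalarTower.algebraMap_apply R S q.ResidueField, IsScalarTower.algebraMap_apply R S K]
    exact Ideal.ResidueField.lift_algebraMap _ _ _ _ _
  have : IsScalarTower k p.ResidueField K := .of_algebraMap_eq fun c => by
    rw [IsScalarTower.algebraMap_apply k R p.ResidueField, hψ, ← IsScalarTower.algebraMap_apply]
  have : Algebra.IsSeparable p.ResidueField K := isSeparable_of_adjoin (k := k) (s := s) fun a ha =>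
    let ⟨b, hb⟩ := hs ha
    ⟨algebraMap R _ b, (hψ b).trans hb⟩
  exact Algebra.isSeparable_tower_bot_of_isSeparable p.ResidueField q.ResidueField K

end EtaleAtDivisor

section EtaleCoordinates

variable {k σ ι : Type*} {A : Type u} [Field k] [CommRing A] [Algebra k A]

theorem X_none_dvd_of_aeval_eq_zero {F : MvPolynomial (Option ι) k}
    (hF : MvPolynomial.aeval
      (fun o => o.elim 0 MvPolynomial.X : Option ι → MvPolynomial ι k) F = 0) :
    MvPolynomial.X none ∣ F := by
  let π := Ideal.Quotient.mkₐ k (Ideal.span {(MvPolynomial.X none : MvPolynomial (Option ι) k)})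
  have hπ : (π.comp (MvPolynomial.rename some)).comp
      (MvPolynomial.aeval fun o : Option ι => o.elim 0 MvPolynomial.X) = π :=
    MvPolynomial.algHom_ext fun o => by cases o <;> simp [π]
  rw [← Ideal.mem_span_singleton, ← Ideal.Quotient.eq_zero_iff_mem]
  exact congr($hπ F).symm.trans (congrArg (π.comp (MvPolynomial.rename some)) hF)

theorem comap_aeval_span_singleton {K : Type*} [Field K] [Algebra k K] [Algebra A K]
    [IsScalarTower k A K] {x : A} (hx : RingHom.ker (algebraMap A K) = Ideal.span {x}) {y : ι → A}
    (hy : AlgebraicIndependent k fun i => algebraMap A K (y i)) :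
    (Ideal.span {x}).comap (MvPolynomial.aeval (R := k) fun o : Option ι => o.elim x y) =
      Ideal.span {MvPolynomial.X none} := by
  have hx0 : algebraMap A K x = 0 := by
    rw [← RingHom.mem_ker, hx]
    exact Ideal.mem_span_singleton_self x
  have hcomp : (MvPolynomial.aeval fun i => algebraMap A K (y i)).comp
      (MvPolynomial.aeval fun o : Option ι => o.elim 0 MvPolynomial.X) =
      (IsScalarTower.toAlgHom k A K).comp (MvPolynomial.aeval fun o => o.elim x y) :=
    MvPolynomial.algHom_ext fun o => by cases o <;> simp [hx0]
  refine le_antisymm (fun F hF => ?_) ((Ideal.span_singleton_le_iff_mem _).2 (by simp))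
  refine Ideal.mem_span_singleton.2 (X_none_dvd_of_aeval_eq_zero (hy ?_))
  rw [Ideal.mem_comap, ← hx, RingHom.mem_ker] at hF
  exact (congr($hcomp F).trans hF).trans (map_zero _).symm

theorem isEtaleCoordinates_of_algebraMap_X [Algebra (MvPolynomial σ k) A]
    [IsScalarTower k (MvPolynomial σ k) A] [Algebra.FormallyEtale (MvPolynomial σ k) A] {z : σ → A}
    (hz : ∀ i, algebraMap (MvPolynomial σ k) A (MvPolynomial.X i) = z i) :
    IsEtaleCoordinates k z := by
  have hmap : MvPolynomial.aeval z = IsScalarTower.toAlgHom k (MvPolynomial σ k) A :=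
    MvPolynomial.algHom_ext fun i => by rw [MvPolynomial.aeval_X, IsScalarTower.coe_toAlgHom', hz]
  rw [IsEtaleCoordinates, hmap]
  exact RingHom.formallyEtale_algebraMap.2 ‹_›

theorem exists_isEtaleCoordinates_of_algebraicIndependent [IsDomain A] [Algebra.FiniteType k A]
    [Finite ι] {K : Type*} [Field K] [Algebra k K] [Algebra A K] [IsScalarTower k A K] {x : A}
    (hx0 : x ≠ 0) (hx : RingHom.ker (algebraMap A K) = Ideal.span {x}) {y : ι → A}
    (hy : AlgebraicIndependent k fun i => algebraMap A K (y i))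
    [Algebra.IsSeparable
      (IntermediateField.adjoin k (Set.range fun i => algebraMap A K (y i))) K] :
    ∃ g ∉ Ideal.span {x}, IsEtaleCoordinates k
      fun o : Option ι => algebraMap A (Localization.Away g) (o.elim x y) := by
  let P := MvPolynomial (Option ι) k
  let φ : P →ₐ[k] A := MvPolynomial.aeval fun o => o.elim x y
  let : Algebra P A := φ.toRingHom.toAlgebra
  have : IsScalarTower k P A := .of_algHom φ
  have hφ (o : Option ι) : algebraMap P A (MvPolynomial.X o) = o.elim x y :=
    MvPolynomial.aeval_X _ o
  let : Algebra P K := Algebra.compHom K φ.toRingHom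
  have : IsScalarTower P A K := .of_algebraMap_eq' rfl
  have : IsScalarTower k P K := .to₁₂₄ _ _ A _
  let p : Ideal P := Ideal.span {MvPolynomial.X none}
  have hp : (Ideal.span {x}).comap (algebraMap P A) = p := comap_aeval_span_singleton hx hy
  have : (Ideal.span {x}).IsPrime := hx ▸ RingHom.ker_isPrime _
  have : p.IsPrime := hp ▸ inferInstance
  have : (Ideal.span {x}).LiesOver p := ⟨hp.symm⟩
  let := Localization.AtPrime.algebraOfLiesOver p (Ideal.span {x})
  have := isSeparable_residueField_of_adjoin (k := k) p (Ideal.span {x}) hx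
    (s := Set.range fun i => algebraMap A K (y i)) (by
      rintro _ ⟨i, rfl⟩
      exact ⟨MvPolynomial.X (some i), congrArg (algebraMap A K) (hφ (some i))⟩)
  have : Algebra.FiniteType P A := .of_restrictScalars_finiteType k P A
  have : Algebra.FinitePresentation P A := Algebra.FinitePresentation.of_finiteType.1 ‹_›
  have : Algebra.IsEtaleAt P (Ideal.span {x}) := isEtaleAt_span_singleton (y := x) (hφ none) hx0
  obtain ⟨g, hg, _⟩ := Algebra.exists_etale_of_isEtaleAt (R := P) (Ideal.span {x})
  exact ⟨g, hg, isEtaleCoordinates_of_algebraMap_X fun o => by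
    rw [IsScalarTower.algebraMap_apply P A, hφ]⟩

theorem IsEtaleCoordinates.map_algEquiv {B : Type*} [CommRing B] [Algebra k B] {z : σ → A}
    (hz : IsEtaleCoordinates k z) (e : A ≃ₐ[k] B) : IsEtaleCoordinates k fun i => e (z i) := by
  have hcomp : (MvPolynomial.aeval fun i => e (z i)) =
      e.toAlgHom.comp (MvPolynomial.aeval z : MvPolynomial σ k →ₐ[k] A) :=
    MvPolynomial.algHom_ext fun o => by simp
  rw [IsEtaleCoordinates, hcomp]
  exact RingHom.FormallyEtale.comp hz (RingHom.Etale.of_bijective e.bijective).formallyEtale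

theorem exists_algebraMap_residueField_eq_mul (q : Ideal A) [hq : q.IsPrime] [Finite ι]
    (s : ι → q.ResidueField) :
    ∃ c ∉ q, ∀ i, ∃ a, algebraMap A q.ResidueField a = algebraMap A q.ResidueField c * s i := by
  choose f hf using fun i => IsLocalRing.residue_surjective (s i)
  obtain ⟨c, hc⟩ := IsLocalization.exist_integer_multiples_of_finite q.primeCompl f
  refine ⟨c, c.2, fun i => ?_⟩
  obtain ⟨a, ha⟩ := hc i
  refine ⟨a, ?_⟩
  rw [IsScalarTower.algebraMap_apply A (Localization.AtPrime q), ha, Algebra.smul_def, map_mul,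
    ← IsScalarTower.algebraMap_apply, ← hf i]
  rfl

theorem ker_algebraMap_away {K : Type*} [CommRing K] [Algebra A K] {x : A}
    (hx : RingHom.ker (algebraMap A K) = Ideal.span {x}) (c : A) (B : Type*) [CommRing B]
    [Algebra A B] [Algebra B K] [IsScalarTower A B K] [IsLocalization.Away c B] :
    RingHom.ker (algebraMap B K) = Ideal.span {algebraMap A B x} := by
  have hunder : (RingHom.ker (algebraMap B K)).under A = RingHom.ker (algebraMap A K) := by
    rw [IsScalarTower.algebraMap_eq A B K]
    exact RingHom.comap_ker _ _
  rw [← IsLocalization.map_under (.powers c) B (RingHom.ker (algebraMap B K)), hunder, hx,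
    Ideal.map_span, Set.image_singleton]

theorem exists_isEtaleCoordinates_of_isUnit [IsDomain A] [Algebra.FiniteType k A]
    [Finite ι] {K : Type*} [Field K] [Algebra k K] [Algebra A K] [IsScalarTower k A K] {x : A}
    (hx0 : x ≠ 0) (hx : RingHom.ker (algebraMap A K) = Ideal.span {x}) {s : ι → K}
    (hs : AlgebraicIndependent k s)
    [Algebra.IsSeparable (IntermediateField.adjoin k (Set.range s)) K] {c : A}
    (hc : IsUnit (algebraMap A K c))
    (hcs : ∀ i, ∃ a, algebraMap A K a = algebraMap A K c * s i) :
    ∃ g ∉ Ideal.span {algebraMap A (Localization.Away c) x},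
      ∃ z : Option ι → Localization.Away g,
        z none = algebraMap A (Localization.Away g) x ∧ IsEtaleCoordinates k z := by
  let B := Localization.Away c
  have hc0 : c ≠ 0 := fun h => hc.ne_zero (by rw [h, map_zero])
  have : IsDomain B := IsLocalization.Away.isDomain _ hc0
  let : Algebra B K := (IsLocalization.Away.lift c hc).toAlgebra
  have : IsScalarTower A B K := .of_algebraMap_eq fun a => (IsLocalization.Away.lift_eq c hc a).symm
  have : IsScalarTower k B K := .to₁₃₄ _ A _ _
  have : Algebra.FiniteType k B :=
    .trans (S := A) inferInstance (IsLocalization.finiteType_of_monoid_fg (.powers c) _)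
  choose a ha using hcs
  let y (i : ι) : B := algebraMap A B (a i) * IsLocalization.Away.invSelf c
  obtain rfl : (fun i => algebraMap B K (y i)) = s := funext fun i => by
    refine hc.mul_left_cancel ?_
    rw [← ha, map_mul, ← IsScalarTower.algebraMap_apply, mul_left_comm,
      IsScalarTower.algebraMap_apply A B K c, ← map_mul, IsLocalization.Away.mul_invSelf, map_one,
      mul_one]
  have hxB : algebraMap A B x ≠ 0 :=
    (map_ne_zero_iff _
      (IsLocalization.injective B (powers_le_nonZeroDivisors_of_noZeroDivisors hc0))).2 hx0
  obtain ⟨g, hg, hz⟩ :=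
    exists_isEtaleCoordinates_of_algebraicIndependent hxB (ker_algebraMap_away hx c B) hs
  exact ⟨g, hg, _, (IsScalarTower.algebraMap_apply _ _ _ _).symm, hz⟩

theorem exists_isEtaleCoordinates [PerfectField k] [IsDomain A] [Algebra.FiniteType k A]
    {x : A} (hx0 : x ≠ 0) [hq : (Ideal.span {x}).IsPrime] :
    ∃ g ∉ Ideal.span {x}, ∀ (B : Type u) [CommRing B] [Algebra k B] [Algebra A B]
      [IsScalarTower k A B] [IsLocalization.Away g B],
      ∃ (σ : Type u) (_ : Finite σ) (z : Option σ → B),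
      z none = algebraMap A B x ∧ IsEtaleCoordinates k z := by
  let K := (Ideal.span {x}).ResidueField
  have : Algebra.EssFiniteType k K := .comp k A K
  obtain ⟨s, hs, hsep⟩ := exists_isTranscendenceBasis_and_isSeparable_of_perfectField k K
  obtain ⟨c, hc, hcs⟩ := exists_algebraMap_residueField_eq_mul (Ideal.span {x}) fun i : s => i.1
  rw [← Subtype.range_coe (s := (s : Set K))] at hsep
  obtain ⟨h, hh, z, hzx, hz⟩ := exists_isEtaleCoordinates_of_isUnit hx0
    (Ideal.ker_algebraMap_residueField _) hs.1
    (isUnit_iff_ne_zero.2 (Ideal.algebraMap_residueField_eq_zero.not.2 hc)) hcs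
  have hassoc := IsLocalization.Away.associated_sec_fst c h
  refine ⟨c * (IsLocalization.Away.sec c h).1, hq.mul_notMem hc fun hmem => hh ?_, ?_⟩
  · rw [Ideal.mem_span_singleton] at hmem ⊢
    exact (map_dvd (algebraMap A (Localization.Away c)) hmem).trans hassoc.dvd
  · intro B _ _ _ _ _
    have := IsLocalization.Away.mul_of_associated (T := Localization.Away h) c _ h hassoc
    let e : Localization.Away h ≃ₐ[A] B :=
      IsLocalization.algEquiv (.powers (c * (IsLocalization.Away.sec c h).1)) _ _
    refine ⟨s, inferInstance, _, ?_, hz.map_algEquiv (e.restrictScalars k)⟩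
    simp only [hzx, AlgEquiv.restrictScalars_apply, e.commutes]

end EtaleCoordinates

section FibrePower

section

attribute [local instance] MvPolynomial.gradedAlgebra

theorem IsProjective.locallyOfFiniteType {k : Type u} [Field k] {X : Scheme.{u}}
    {f : X ⟶ Spec (.of k)} (hf : IsProjective f) : LocallyOfFiniteType f := by
  obtain ⟨N, i, hi, rfl⟩ := hf
  let P := MvPolynomial (Fin (N + 1)) k
  let P₀ := MvPolynomial.homogeneousSubmodule (Fin (N + 1)) k 0
  have hcomp : (algebraMap P₀ P).comp (algebraMap k P₀) = algebraMap k P := rfl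
  have : IsScalarTower k P₀ P := .of_algebraMap_eq' hcomp.symm
  have : Algebra.FiniteType P₀ P := .of_restrictScalars_finiteType k _ _
  have hsurj : Function.Surjective (algebraMap k P₀) := fun ⟨p, hp⟩ =>
    ⟨p.coeff 0, Subtype.ext (MvPolynomial.totalDegree_eq_zero_iff_eq_C.1
      ((MvPolynomial.totalDegree_zero_iff_isHomogeneous _).2 hp)).symm⟩
  have := IsClosedImmersion.spec_of_surjective (CommRingCat.ofHom (algebraMap k P₀)) hsurj
  infer_instance

end

variable {X S : Scheme.{u}} (f : X ⟶ S)

/-- The morphism to a fibre power with given components. -/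
noncomputable def fibrePowerLift {T : Scheme.{u}} {r : ℕ} (b : T ⟶ S) (g : Fin r → (T ⟶ X))
    (w : ∀ i, g i ≫ f = b) : T ⟶ fibrePower f r :=
  WidePullback.lift b g w

section

variable {f} {T : Scheme.{u}} {r : ℕ} (b : T ⟶ S) (g : Fin r → (T ⟶ X)) (w : ∀ i, g i ≫ f = b)

@[simp]
theorem fibrePowerLift_π (i : Fin r) :
    fibrePowerLift f b g w ≫ WidePullback.π (fun _ => f) i = g i :=
  WidePullback.lift_π _ _ _ _ _

@[simp]
theorem fibrePowerLift_base :
    fibrePowerLift f b g w ≫ WidePullback.base (fun _ => f) = b :=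
  WidePullback.lift_base _ _ _ _

end

/-- The projection of a fibre power that forgets the first factor. -/
noncomputable def fibrePowerTail (r : ℕ) : fibrePower f (r + 1) ⟶ fibrePower f r :=
  fibrePowerLift f (WidePullback.base _) (fun i => WidePullback.π (fun _ => f) i.succ)
    fun _ => WidePullback.π_arrow _ _

@[simp]
theorem fibrePowerTail_π (r : ℕ) (i : Fin r) :
    fibrePowerTail f r ≫ WidePullback.π (fun _ => f) i = WidePullback.π (fun _ => f) i.succ :=
  fibrePowerLift_π _ _ _ _

@[simp]
theorem fibrePowerTail_base (r : ℕ) :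
    fibrePowerTail f r ≫ WidePullback.base (fun _ => f) = WidePullback.base _ :=
  fibrePowerLift_base _ _ _

theorem isPullback_fibrePowerTail (r : ℕ) :
    IsPullback (fibrePowerTail f r) (WidePullback.π (fun _ => f) 0) (WidePullback.base _) f where
  w := (fibrePowerTail_base f r).trans (WidePullback.π_arrow (fun _ => f) 0).symm
  isLimit' := ⟨PullbackCone.IsLimit.mk _
    (fun s => fibrePowerLift f (s.snd ≫ f)
      (Fin.cases s.snd fun i => s.fst ≫ WidePullback.π (fun _ => f) i)
      (Fin.cases (by simp) fun i => by simp [← s.condition]))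
    (fun s => WidePullback.hom_ext _ _ _ (fun i => by simp) (by simp [s.condition]))
    (fun s => fibrePowerLift_π _ _ _ 0)
    (fun s g hfst hsnd => by
      refine WidePullback.hom_ext _ _ _ (Fin.cases ?_ fun i => ?_) ?_
      · rw [fibrePowerLift_base, ← hsnd, Category.assoc, WidePullback.π_arrow]
      · rw [hsnd, fibrePowerLift_π]
        rfl
      · rw [fibrePowerLift_π, ← fibrePowerTail_π, ← Category.assoc, hfst]
        rfl)⟩

theorem locallyOfFiniteType_base [LocallyOfFiniteType f] (r : ℕ) :
    LocallyOfFiniteType (WidePullback.base (fun _ : Fin r => f)) := by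
  induction r with
  | zero =>
    have : IsIso (WidePullback.base (fun _ : Fin 0 => f)) :=
      ⟨fibrePowerLift f (𝟙 S) (fun i => i.elim0) (fun i => i.elim0),
        WidePullback.hom_ext _ _ _ (fun i => i.elim0) (by simp), fibrePowerLift_base _ _ _⟩
    infer_instance
  | succ r ih =>
    have : LocallyOfFiniteType (fibrePowerTail f r) :=
      MorphismProperty.of_isPullback (isPullback_fibrePowerTail f r).flip ‹_›
    rw [← fibrePowerTail_base]
    infer_instance

variable {r : ℕ}

@[simp]
theorem tuplePoint_π (p : Fin r → RatPoint f) (i : Fin r) :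
    tuplePoint f p ≫ WidePullback.π (fun _ => f) i = (p i).1 :=
  WidePullback.lift_π _ _ _ _ _

@[simp]
theorem tuplePoint_base (p : Fin r → RatPoint f) :
    tuplePoint f p ≫ WidePullback.base (fun _ => f) = 𝟙 S :=
  WidePullback.lift_base _ _ _ _

theorem exists_tuplePoint_eq (p : RatPoint (WidePullback.base (fun _ : Fin r => f))) :
    ∃ q : Fin r → RatPoint f, tuplePoint f q = p.1 :=
  ⟨fun i => ⟨p.1 ≫ WidePullback.π (fun _ => f) i, by simpa using p.2⟩,
    WidePullback.hom_ext _ _ _ (fun i => by simp) (by simp [p.2])⟩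

/-- The slice of a fibre power through a tuple of points, in the direction of one factor. -/
noncomputable def slice (p : Fin r → RatPoint f) (i : Fin r) : X ⟶ fibrePower f r :=
  fibrePowerLift f f (fun j => if j = i then 𝟙 X else f ≫ (p j).1) fun j => by
    split_ifs
    · simp
    · simp [(p j).2]

theorem ratPoint_slice (p : Fin r → RatPoint f) (i : Fin r) (t : RatPoint f) :
    t.1 ≫ slice f p i = tuplePoint f (Function.update p i t) := by
  refine WidePullback.hom_ext _ _ _ (fun j => ?_) (by simp [slice, t.2])
  obtain rfl | hj := eq_or_ne j i
  · simp [slice]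
  · simp [slice, hj, reassoc_of% t.2]

end FibrePower

section GenericTuples

variable {k : Type u} [Field k] [IsAlgClosed k] {X : Scheme.{u}} (f : X ⟶ Spec (.of k))
  [LocallyOfFiniteType f]

theorem exists_ratPoint_mem (U : X.Opens) (hU : (U : Set X).Nonempty) :
    ∃ p : RatPoint f, p.1 (IsLocalRing.closedPoint k) ∈ U := by
  have : JacobsonSpace X := LocallyOfFiniteType.jacobsonSpace f
  obtain ⟨x, hxU, hx⟩ := nonempty_inter_closedPoints hU U.2.isLocallyClosed
  exact ⟨⟨pointOfClosedPoint f x hx, pointOfClosedPoint_comp f x hx⟩,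
    (pointOfClosedPoint_apply f x hx _).symm ▸ hxU⟩

variable {r : ℕ}

theorem exists_tuplePoint_mem (U : (fibrePower f r).Opens)
    (hU : (U : Set (fibrePower f r)).Nonempty) :
    ∃ p : Fin r → RatPoint f, tuplePoint f p (IsLocalRing.closedPoint k) ∈ U := by
  have := locallyOfFiniteType_base f r
  obtain ⟨p, hp⟩ := exists_ratPoint_mem (WidePullback.base (fun _ : Fin r => f)) U hU
  obtain ⟨q, hq⟩ := exists_tuplePoint_eq f p
  exact ⟨q, hq ▸ hp⟩

-- Irreducibility of the fibre power on rational points, by moving one coordinate at a time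
-- along a slice.
theorem exists_tuplePoint_mem_inter [IrreducibleSpace X] (O₁ O₂ : (fibrePower f r).Opens)
    (s : Finset (Fin r)) (p q : Fin r → RatPoint f) (hpq : ∀ i ∉ s, p i = q i)
    (hp : tuplePoint f p (IsLocalRing.closedPoint k) ∈ O₁)
    (hq : tuplePoint f q (IsLocalRing.closedPoint k) ∈ O₂) :
    ∃ t : Fin r → RatPoint f, tuplePoint f t (IsLocalRing.closedPoint k) ∈ O₁ ⊓ O₂ := by
  induction s using Finset.induction_on generalizing p q with
  | empty =>
    obtain rfl : p = q := funext fun i => hpq i (by simp)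
    exact ⟨p, hp, hq⟩
  | insert i s hi ih =>
    have mem_slice (p : Fin r → RatPoint f) (t : RatPoint f) (O : (fibrePower f r).Opens) :
        t.1 (IsLocalRing.closedPoint k) ∈ slice f p i ⁻¹ᵁ O ↔
          tuplePoint f (Function.update p i t) (IsLocalRing.closedPoint k) ∈ O := by
      rw [← ratPoint_slice]
      rfl
    obtain ⟨t, ht₁, ht₂⟩ := exists_ratPoint_mem f (slice f p i ⁻¹ᵁ O₁ ⊓ slice f q i ⁻¹ᵁ O₂)
      (nonempty_preirreducible_inter (slice f p i ⁻¹ᵁ O₁).2 (slice f q i ⁻¹ᵁ O₂).2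
        ⟨_, (mem_slice p (p i) O₁).2 (by simpa using hp)⟩
        ⟨_, (mem_slice q (q i) O₂).2 (by simpa using hq)⟩)
    refine ih _ _ (fun j hj => ?_) ((mem_slice p t O₁).1 ht₁) ((mem_slice q t O₂).1 ht₂)
    obtain rfl | hji := eq_or_ne j i
    · simp
    · simp [hji, hpq j (by simp [hji, hj])]

theorem dense_of_tuplePoint_mem [IrreducibleSpace X] (O : (fibrePower f r).Opens)
    (p : Fin r → RatPoint f) (hp : tuplePoint f p (IsLocalRing.closedPoint k) ∈ O) :
    Dense (O : Set (fibrePower f r)) := by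
  rw [dense_iff_inter_open]
  intro U hU hne
  obtain ⟨q, hq⟩ := exists_tuplePoint_mem f ⟨U, hU⟩ hne
  obtain ⟨t, ht⟩ := exists_tuplePoint_mem_inter f ⟨U, hU⟩ O Finset.univ q p (by simp) hq hp
  exact ⟨_, ht⟩

end GenericTuples

section Frames

variable {X : Scheme.{u}}

/-- Restriction of regular functions. -/
noncomputable def resO {U V : X.Opens} (h : V ≤ U) : Γ(X, U) →+* Γ(X, V) :=
  (X.presheaf.map (homOfLE h).op).hom

/-- Restriction of sections of a sheaf of modules. -/
noncomputable def res (M : X.Modules) {U V : X.Opens} (h : V ≤ U) : Γ(M, U) →+ Γ(M, V) :=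
  (M.presheaf.map (homOfLE h).op).hom

variable (M : X.Modules) {U V W : X.Opens}

theorem resO_resO (h : V ≤ U) (h' : W ≤ V) (a : Γ(X, U)) :
    resO h' (resO h a) = resO (h'.trans h) a := by
  simp only [resO, ← CommRingCat.comp_apply, ← Functor.map_comp, ← op_comp, homOfLE_comp]

theorem resO_self (h : U ≤ U) (a : Γ(X, U)) : resO h a = a :=
  congr(($(X.presheaf.map_id (.op U))).hom a)

theorem res_res (h : V ≤ U) (h' : W ≤ V) (s : Γ(M, U)) :
    res M h' (res M h s) = res M (h'.trans h) s :=
  ConcreteCategory.congr_hom (M.presheaf.map_comp (homOfLE h).op (homOfLE h').op).symm s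

theorem res_self (h : U ≤ U) (s : Γ(M, U)) : res M h s = s :=
  ConcreteCategory.congr_hom (M.presheaf.map_id (.op U)) s

theorem res_smul (h : V ≤ U) (a : Γ(X, U)) (s : Γ(M, U)) :
    res M h (a • s) = resO h a • res M h s :=
  M.map_smul (homOfLE h) a s

theorem eq_of_res_eq {ι : Type*} {O : ι → X.Opens} (hO : ∀ i, O i ≤ U) (hcov : U ≤ ⨆ i, O i)
    {s t : Γ(M, U)} (h : ∀ i, res M (hO i) s = res M (hO i) t) : s = t :=
  TopCat.Sheaf.eq_of_locally_eq' ⟨M.presheaf, M.isSheaf⟩ O U (fun i => homOfLE (hO i)) hcov s t h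

theorem exists_gluing {ι : Type*} {O : ι → X.Opens} (hO : ∀ i, O i ≤ U) (hcov : U ≤ ⨆ i, O i)
    (s : ∀ i, Γ(M, O i))
    (h : ∀ i j, res M (inf_le_left : O i ⊓ O j ≤ O i) (s i) =
      res M (inf_le_right : O i ⊓ O j ≤ O j) (s j)) :
    ∃ t : Γ(M, U), ∀ i, res M (hO i) t = s i :=
  (TopCat.Sheaf.existsUnique_gluing' ⟨M.presheaf, M.isSheaf⟩ O U (fun i => homOfLE (hO i)) hcov s
    h).exists

variable {M}

/-- A section is a frame if it freely generates the sheaf over its domain. -/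
def IsFrame (e : Γ(M, U)) : Prop :=
  ∀ (V : X.Opens) (h : V ≤ U), Function.Bijective fun a : Γ(X, V) => a • res M h e

theorem IsFrame.restrict {e : Γ(M, U)} (he : IsFrame e) (h : V ≤ U) : IsFrame (res M h e) := by
  intro W hW
  simpa only [res_res] using he W (hW.trans h)

theorem IsFrame.exists_eq_smul {e : Γ(M, U)} (he : IsFrame e) (s : Γ(M, U)) :
    ∃ a : Γ(X, U), s = a • e := by
  obtain ⟨a, rfl⟩ := (he U le_rfl).2 s
  exact ⟨a, by simp only [res_self]⟩

theorem IsFrame.smul_injective {e : Γ(M, U)} (he : IsFrame e) {a b : Γ(X, U)}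
    (h : a • e = b • e) : a = b :=
  (he U le_rfl).1 (by simpa only [res_self] using h)

theorem IsFrame.smul_mem_iff {e : Γ(M, U)} (he : IsFrame e) (I : Ideal Γ(X, U)) {a : Γ(X, U)} :
    a • e ∈ I • (⊤ : Submodule Γ(X, U) Γ(M, U)) ↔ a ∈ I := by
  have htop : (⊤ : Submodule Γ(X, U) Γ(M, U)) = Submodule.span Γ(X, U) {e} :=
    (Submodule.eq_top_iff'.2 fun s => by
      obtain ⟨b, rfl⟩ := he.exists_eq_smul s
      exact Submodule.smul_mem _ _ (Submodule.mem_span_singleton_self e)).symm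
  rw [htop, Submodule.mem_smul_span_singleton]
  exact ⟨fun ⟨b, hb, hab⟩ => he.smul_injective hab ▸ hb, fun ha => ⟨a, ha, rfl⟩⟩

/-- The structure sheaf of a scheme, as a sheaf of modules. -/
noncomputable abbrev structureModule (Z : Scheme.{u}) : Z.Modules :=
  SheafOfModules.unit Z.ringCatSheaf

/-- The function `1`, as a section of the structure sheaf. -/
def oneSection (Z : Scheme.{u}) (V : Z.Opens) : Γ(structureModule Z, V) :=
  (1 : Γ(Z, V))

theorem map_oneSection {Z : Scheme.{u}} {V W : Z.Opens} (i : W ⟶ V) :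
    (structureModule Z).presheaf.map i.op (oneSection Z V) = oneSection Z W :=
  map_one (Z.presheaf.map i.op).hom

section Trivialization

variable {U : X.Opens} (θ : M.restrict U.ι ≅ structureModule U.toScheme)

/-- The frame given by a trivialization. -/
noncomputable def frameOf : Γ(M, U.ι ''ᵁ ⊤) :=
  (θ.inv.app ⊤ (oneSection _ ⊤) : Γ(M.restrict U.ι, ⊤))

theorem res_frameOf {V : U.toScheme.Opens} (hV : U.ι ''ᵁ V ≤ U.ι ''ᵁ ⊤) :
    res M hV (frameOf θ) = θ.inv.app V (oneSection _ V) :=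
  (ConcreteCategory.congr_hom (θ.inv.mapPresheaf.naturality
    (homOfLE (le_top : V ≤ ⊤)).op) (oneSection _ ⊤)).symm.trans
    (congrArg (θ.inv.app V) (map_oneSection _))

theorem smul_res_frameOf {V : U.toScheme.Opens} (hV : U.ι ''ᵁ V ≤ U.ι ''ᵁ ⊤)
    (a : Γ(X, U.ι ''ᵁ V)) :
    a • res M hV (frameOf θ) = θ.inv.app V ((U.ι.appIso V).hom a) := by
  let e : Γ(M, U.ι ''ᵁ V) := θ.inv.app V (oneSection _ V)
  have smul_one (b : Γ(U.toScheme, V)) : θ.inv.app V b = (U.ι.appIso V).inv b • e :=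
    (congrArg (θ.inv.app V) (mul_one b).symm).trans (θ.inv.app_smul b (oneSection _ V))
  rw [res_frameOf]
  refine Eq.trans ?_ (smul_one _).symm
  exact congrArg (· • e)
    (ConcreteCategory.congr_hom (U.ι.appIso V).hom_inv_id a).symm

theorem isFrame_frameOf : IsFrame (frameOf θ) := by
  intro V hV
  obtain ⟨V', rfl⟩ : ∃ V', V = U.ι ''ᵁ V' := ⟨U.ι ⁻¹ᵁ V, by
    rw [Scheme.Hom.image_preimage_eq_opensRange_inf]
    exact (inf_eq_right.2 (by simpa using hV)).symm⟩
  have : IsIso (θ.inv.app V') := Scheme.Modules.Hom.isIso_iff_isIso_app.1 θ.isIso_inv V'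
  rw [funext (smul_res_frameOf θ hV)]
  exact (ConcreteCategory.bijective_of_isIso (θ.inv.app V')).comp
    (ConcreteCategory.bijective_of_isIso (U.ι.appIso V').hom)

end Trivialization

theorem IsLineBundle.exists_isFrame (hM : IsLineBundle M) (x : X) :
    ∃ (U : X.Opens) (e : Γ(M, U)), x ∈ U ∧ IsFrame e := by
  obtain ⟨U, hxU, ⟨θ⟩⟩ := hM x
  exact ⟨U.ι ''ᵁ ⊤, frameOf θ, by simpa using hxU, isFrame_frameOf θ⟩

end Frames

section QuasiCoherence

open Filter

variable {X : Scheme.{u}} {M : X.Modules} {U V : X.Opens}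

theorem exists_pow_mul_eq_zero_of_resO_eq_zero (hV : IsAffineOpen V) {f a : Γ(X, V)}
    (h : resO (X.basicOpen_le f) a = 0) : ∃ n : ℕ, f ^ n * a = 0 :=
  exists_pow_mul_eq_zero_of_res_basicOpen_eq_zero_of_isAffineOpen X hV a f h

theorem exists_resO_eq_pow_mul (hV : IsAffineOpen V) (f : Γ(X, V)) (a : Γ(X, X.basicOpen f)) :
    ∃ (n : ℕ) (b : Γ(X, V)), resO (X.basicOpen_le f) b = resO (X.basicOpen_le f) f ^ n * a :=
  exists_eq_pow_mul_of_isAffineOpen X V hV f a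

theorem IsFrame.eventually_pow_smul_eq (hV : IsAffineOpen V) {e : Γ(M, V)} (he : IsFrame e)
    (hVU : V ≤ U) (f : Γ(X, U)) {s t : Γ(M, V)}
    (h : res M (inf_le_left : V ⊓ X.basicOpen f ≤ V) s = res M inf_le_left t) :
    ∀ᶠ n in atTop, resO hVU (f ^ n) • s = resO hVU (f ^ n) • t := by
  suffices ∀ D, D = X.basicOpen (resO hVU f) → ∀ hDV : D ≤ V, res M hDV s = res M hDV t →
      ∀ᶠ n in atTop, resO hVU (f ^ n) • s = resO hVU (f ^ n) • t from
    this _ (X.basicOpen_res f (homOfLE hVU).op).symm _ h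
  rintro _ rfl hDV hst
  obtain ⟨a, rfl⟩ := he.exists_eq_smul s
  obtain ⟨b, rfl⟩ := he.exists_eq_smul t
  rw [res_smul, res_smul] at hst
  obtain ⟨n, hn⟩ := exists_pow_mul_eq_zero_of_resO_eq_zero hV (a := a - b) (by
    rw [map_sub, sub_eq_zero, (he.restrict hDV).smul_injective hst])
  filter_upwards [eventually_ge_atTop n] with N hN
  obtain ⟨d, rfl⟩ := Nat.exists_eq_add_of_le' hN
  rw [← sub_eq_zero, ← smul_sub, ← sub_smul, smul_smul, map_pow, pow_add, mul_assoc, hn, mul_zero,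
    zero_smul]

theorem IsFrame.eventually_exists_res_eq (hV : IsAffineOpen V) {e : Γ(M, V)} (he : IsFrame e)
    (hVU : V ≤ U) (f : Γ(X, U)) (t : Γ(M, V ⊓ X.basicOpen f)) :
    ∀ᶠ n in atTop, ∃ s : Γ(M, V), res M (inf_le_left : V ⊓ X.basicOpen f ≤ V) s =
      resO (inf_le_left.trans hVU : V ⊓ X.basicOpen f ≤ U) (f ^ n) • t := by
  suffices ∀ D, D = X.basicOpen (resO hVU f) → ∀ (hDV : D ≤ V) (t : Γ(M, D)), ∀ᶠ n in atTop,
      ∃ s : Γ(M, V), res M hDV s = resO (hDV.trans hVU) (f ^ n) • t from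
    this _ (X.basicOpen_res f (homOfLE hVU).op).symm _ t
  rintro _ rfl hDV t
  obtain ⟨a, rfl⟩ := (he.restrict hDV).exists_eq_smul t
  obtain ⟨n, b, hb⟩ := exists_resO_eq_pow_mul hV (resO hVU f) a
  filter_upwards [eventually_ge_atTop n] with N hN
  obtain ⟨d, rfl⟩ := Nat.exists_eq_add_of_le' hN
  refine ⟨(resO hVU f ^ d * b) • e, ?_⟩
  rw [res_smul, map_mul, hb, smul_smul, map_pow, map_pow, resO_resO, pow_add, mul_assoc]

theorem IsLineBundle.exists_finset_isFrame (hM : IsLineBundle M) (hU : IsAffineOpen U) :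
    ∃ s : Finset Γ(X, U), U ≤ ⨆ g : s, X.basicOpen g.1 ∧
      ∀ g : s, ∃ e : Γ(M, X.basicOpen g.1), IsFrame e := by
  let S : Set Γ(X, U) := {g | ∃ e : Γ(M, X.basicOpen g), IsFrame e}
  have hS : Ideal.span S = ⊤ := by
    rw [← hU.self_le_iSup_basicOpen_iff]
    intro x hx
    obtain ⟨O, e, hxO, he⟩ := hM.exists_isFrame x
    obtain ⟨g, hg, hxg⟩ := hU.exists_basicOpen_le ⟨x, hxO⟩ hx
    exact TopologicalSpace.Opens.mem_iSup.2 ⟨⟨g, res M hg e, he.restrict hg⟩, hxg⟩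
  obtain ⟨s, hsS, hs⟩ := (Ideal.span_eq_top_iff_finite S).1 hS
  exact ⟨s, hU.self_le_iSup_basicOpen_iff.2 hs, fun g => hsS g.2⟩

theorem IsLineBundle.exists_pow_smul_eq (hM : IsLineBundle M) (hU : IsAffineOpen U)
    (f : Γ(X, U)) {s t : Γ(M, U)}
    (h : res M (X.basicOpen_le f) s = res M (X.basicOpen_le f) t) :
    ∃ n : ℕ, f ^ n • s = f ^ n • t := by
  obtain ⟨S, hcov, hS⟩ := hM.exists_finset_isFrame hU
  have hlocal : ∀ᶠ n in atTop, ∀ g : S, res M (X.basicOpen_le g.1) (f ^ n • s) =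
      res M (X.basicOpen_le g.1) (f ^ n • t) := eventually_all.2 fun g => by
    obtain ⟨e, he⟩ := hS g
    simp only [res_smul]
    refine he.eventually_pow_smul_eq (hU.basicOpen g.1) (X.basicOpen_le g.1) f ?_
    rw [res_res, res_res, ← res_res M (X.basicOpen_le f) inf_le_right, h, res_res]
  obtain ⟨n, hn⟩ := hlocal.exists
  exact ⟨n, eq_of_res_eq M _ hcov hn⟩

theorem IsLineBundle.exists_res_eq_pow_smul (hM : IsLineBundle M) (hU : IsAffineOpen U)
    (f : Γ(X, U)) (t : Γ(M, X.basicOpen f)) :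
    ∃ (n : ℕ) (s : Γ(M, U)), res M (X.basicOpen_le f) s = resO (X.basicOpen_le f) (f ^ n) • t := by
  obtain ⟨S, hcov, hS⟩ := hM.exists_finset_isFrame hU
  choose e he using hS
  let O (g : S) : X.Opens := X.basicOpen g.1
  have hO (g : S) : O g ≤ U := X.basicOpen_le g.1
  have hlocal : ∀ᶠ n in atTop, ∀ g, ∃ s : Γ(M, O g),
      res M inf_le_left s = resO (inf_le_left.trans (hO g)) (f ^ n) •
        res M (inf_le_right : O g ⊓ X.basicOpen f ≤ _) t :=
    eventually_all.2 fun g =>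
      (he g).eventually_exists_res_eq (hU.basicOpen g.1) (hO g) f (res M inf_le_right t)
  obtain ⟨m, hm⟩ := hlocal.exists
  choose s hs using hm
  have hglue : ∀ᶠ n in atTop, ∀ p : S × S,
      resO (inf_le_left.trans (hO p.1) : O p.1 ⊓ O p.2 ≤ U) (f ^ n) •
          res M (inf_le_left : O p.1 ⊓ O p.2 ≤ O p.1) (s p.1) =
        resO (inf_le_left.trans (hO p.1) : O p.1 ⊓ O p.2 ≤ U) (f ^ n) •
          res M (inf_le_right : O p.1 ⊓ O p.2 ≤ O p.2) (s p.2) := eventually_all.2 fun p => by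
    have haff : IsAffineOpen (O p.1 ⊓ O p.2) := X.basicOpen_mul p.1.1 p.2.1 ▸ hU.basicOpen _
    refine ((he p.1).restrict inf_le_left).eventually_pow_smul_eq haff
      (inf_le_left.trans (hO p.1)) f ?_
    rw [res_res, res_res,
      ← res_res M (inf_le_left : O p.1 ⊓ X.basicOpen f ≤ O p.1)
        (le_inf (inf_le_left.trans inf_le_left) inf_le_right), hs,
      ← res_res M (inf_le_left : O p.2 ⊓ X.basicOpen f ≤ O p.2)
        (le_inf (inf_le_left.trans inf_le_right) inf_le_right), hs]
    simp only [res_smul, resO_resO, res_res]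
  obtain ⟨n, hn⟩ := hglue.exists
  obtain ⟨T, hT⟩ := exists_gluing M hO hcov (fun g => resO (hO g) (f ^ n) • s g) fun g g' => by
    simpa only [res_smul, resO_resO] using hn (g, g')
  refine ⟨n + m, T, eq_of_res_eq M (fun g => (inf_le_right : O g ⊓ X.basicOpen f ≤ X.basicOpen f))
    ?_ fun g => ?_⟩
  · rw [← iSup_inf_eq]
    exact le_inf ((X.basicOpen_le f).trans hcov) le_rfl
  · rw [res_res, ← res_res M (hO g) inf_le_left, hT, res_smul, hs, smul_smul, res_smul, resO_resO,
      resO_resO, ← map_mul, pow_add]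

theorem res_mem_smul_top (I : X.IdealSheafData) {U V : X.affineOpens} (hVU : V.1 ≤ U.1)
    {s : Γ(M, U.1)} (hs : s ∈ I.ideal U • (⊤ : Submodule Γ(X, U.1) Γ(M, U.1))) :
    res M hVU s ∈ I.ideal V • (⊤ : Submodule Γ(X, V.1) Γ(M, V.1)) := by
  refine Submodule.smul_induction_on hs (fun c hc t _ => ?_) fun s t hs ht => ?_
  · rw [res_smul]
    exact Submodule.smul_mem_smul (I.ideal_le_comap_ideal hVU hc) trivial
  · rw [map_add]
    exact add_mem hs ht

theorem IsLineBundle.exists_pow_smul_mem_smul_top (hM : IsLineBundle M) (I : X.IdealSheafData)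
    (U : X.affineOpens) {f : Γ(X, U.1)} {a : Γ(X, X.basicOpen f)}
    (ha : a ∈ I.ideal (X.affineBasicOpen f)) {e : Γ(M, X.basicOpen f)} {s : Γ(M, U.1)}
    (hs : res M (X.basicOpen_le f) s = a • e) :
    ∃ n : ℕ, f ^ n • s ∈ I.ideal U • (⊤ : Submodule Γ(X, U.1) Γ(M, U.1)) := by
  rw [← I.map_ideal_basicOpen U f] at ha
  have := U.2.isLocalization_basicOpen f
  obtain ⟨⟨⟨b, hb⟩, ⟨_, n, rfl⟩⟩, hab⟩ :=
    (IsLocalization.mem_map_algebraMap_iff (.powers f) Γ(X, X.basicOpen f)).1 ha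
  replace hab : a * resO (X.basicOpen_le f) (f ^ n) = resO (X.basicOpen_le f) b := hab
  obtain ⟨m, t, ht⟩ := hM.exists_res_eq_pow_smul U.2 f e
  obtain ⟨d, hd⟩ := hM.exists_pow_smul_eq U.2 f (s := f ^ (m + n) • s) (t := b • t) (by
    rw [res_smul, res_smul, hs, ht, ← hab, smul_smul, smul_smul, pow_add, map_mul]
    ring_nf)
  exact ⟨d + (m + n), by
    rw [pow_add, mul_smul, hd]
    exact Submodule.smul_mem _ _ (Submodule.smul_mem_smul hb trivial)⟩

theorem IsLineBundle.mem_smul_top_of_local (hM : IsLineBundle M) (I : X.IdealSheafData)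
    (U : X.affineOpens) {s : Γ(M, U.1)}
    (h : ∀ x ∈ U.1, ∃ (V : X.affineOpens) (hVU : V.1 ≤ U.1), x ∈ V.1 ∧
      res M hVU s ∈ I.ideal V • (⊤ : Submodule Γ(X, V.1) Γ(M, V.1))) :
    s ∈ I.ideal U • (⊤ : Submodule Γ(X, U.1) Γ(M, U.1)) := by
  let N := (I.ideal U • (⊤ : Submodule Γ(X, U.1) Γ(M, U.1))).comap
    (LinearMap.toSpanSingleton Γ(X, U.1) Γ(M, U.1) s)
  suffices hN : Ideal.span (N : Set Γ(X, U.1)) = ⊤ by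
    rw [Ideal.span_eq] at hN
    simpa [N] using (Ideal.eq_top_iff_one N).1 hN
  rw [← U.2.self_le_iSup_basicOpen_iff]
  intro x hx
  obtain ⟨V, hVU, hxV, hs⟩ := h x hx
  obtain ⟨O, e, hxO, he⟩ := hM.exists_isFrame x
  obtain ⟨f, hf, hxf⟩ := U.2.exists_basicOpen_le (V := V.1 ⊓ O) ⟨x, hxV, hxO⟩ hx
  have he' := he.restrict (hf.trans inf_le_right)
  obtain ⟨a, ha⟩ := he'.exists_eq_smul (res M (X.basicOpen_le f) s)
  let J : Ideal Γ(X, X.basicOpen f) := I.ideal (X.affineBasicOpen f)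
  have hmem : res M (X.basicOpen_le f) s ∈
      J • (⊤ : Submodule Γ(X, X.basicOpen f) Γ(M, X.basicOpen f)) := by
    rw [← res_res M hVU (hf.trans inf_le_left)]
    exact res_mem_smul_top I (V := X.affineBasicOpen f) (hf.trans inf_le_left) hs
  rw [ha, he'.smul_mem_iff] at hmem
  obtain ⟨n, hn⟩ := hM.exists_pow_smul_mem_smul_top I U hmem ha
  refine TopologicalSpace.Opens.mem_iSup.2 ⟨⟨f ^ (n + 1), ?_⟩, ?_⟩
  · change f ^ (n + 1) • s ∈ I.ideal U • (⊤ : Submodule Γ(X, U.1) Γ(M, U.1))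
    rw [pow_succ', mul_smul]
    exact Submodule.smul_mem _ _ hn
  · rwa [X.basicOpen_pow f n.succ_pos]

end QuasiCoherence

section Pullback

variable {X Y : Scheme.{u}} (f : Y ⟶ X)

theorem final_opensMap : (TopologicalSpace.Opens.map f.base).Final where
  out d := by
    have : HasTerminal (StructuredArrow d (TopologicalSpace.Opens.map f.base)) :=
      (IsTerminal.ofUniqueHom (Y := StructuredArrow.mk (Y := (⊤ : X.Opens)) (homOfLE le_top))
        (fun V => StructuredArrow.homMk (homOfLE le_top) rfl)
        (fun V g => StructuredArrow.hom_ext _ _ (Subsingleton.elim _ _))).hasTerminal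
    exact isConnected_of_hasTerminal _

open SheafOfModules in
theorem isIso_pullbackObjUnitToUnit {C D : Type*} [Category* C] [Category* D]
    {J : GrothendieckTopology C} {K : GrothendieckTopology D} {F : C ⥤ D}
    {S : Sheaf J RingCat.{u}} {R : Sheaf K RingCat.{u}} [Functor.IsContinuous F J K]
    (φ : S ⟶ (F.sheafPushforwardContinuous RingCat.{u} J K).obj R)
    [(pushforward.{u} φ).IsRightAdjoint] [F.Final] : IsIso (pullbackObjUnitToUnit φ) :=
  inferInstance

/-- The pullback of the structure sheaf of a scheme is the structure sheaf. -/
noncomputable def pullbackUnitIso :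
    (Scheme.Modules.pullback f).obj (SheafOfModules.unit X.ringCatSheaf : X.Modules) ≅
      (SheafOfModules.unit Y.ringCatSheaf : Y.Modules) :=
  haveI := final_opensMap f
  haveI : (SheafOfModules.pushforward.{u} f.toRingCatSheafHom).IsRightAdjoint :=
    (Scheme.Modules.pullbackPushforwardAdjunction f).isRightAdjoint
  @asIso Y.Modules _ _ _ (SheafOfModules.pullbackObjUnitToUnit f.toRingCatSheafHom)
    (isIso_pullbackObjUnitToUnit f.toRingCatSheafHom)

theorem IsLineBundle.pullback {M : X.Modules} (hM : IsLineBundle M) :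
    IsLineBundle ((Scheme.Modules.pullback f).obj M) := by
  intro y
  obtain ⟨U, hxU, ⟨θ⟩⟩ := hM (f y)
  refine ⟨f ⁻¹ᵁ U, hxU, ⟨?_⟩⟩
  exact (Scheme.Modules.restrictFunctorIsoPullback (f ⁻¹ᵁ U).ι).app _ ≪≫
    (Scheme.Modules.pullbackComp (f ⁻¹ᵁ U).ι f).app M ≪≫
    (Scheme.Modules.pullbackCongr (morphismRestrict_ι f U).symm).app M ≪≫
    ((Scheme.Modules.pullbackComp (f ∣_ U) U.ι).app M).symm ≪≫
    (Scheme.Modules.pullback (f ∣_ U)).mapIso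
      ((Scheme.Modules.restrictFunctorIsoPullback U.ι).symm.app M ≪≫ θ) ≪≫
    pullbackUnitIso (f ∣_ U)

end Pullback

section PullbackSections

variable {X Y : Scheme.{u}} (f : Y ⟶ X) (M : X.Modules)

/-- The pullback of sections of a sheaf of modules. -/
noncomputable def pullbackSection (U : X.Opens) :
    Γ(M, U) →+ Γ((Scheme.Modules.pullback f).obj M, f ⁻¹ᵁ U) :=
  (((Scheme.Modules.pullbackPushforwardAdjunction f).unit.app M).app U).hom

theorem pullbackSection_smul {U : X.Opens} (a : Γ(X, U)) (s : Γ(M, U)) :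
    pullbackSection f M U (a • s) = f.app U a • pullbackSection f M U s :=
  ((Scheme.Modules.pullbackPushforwardAdjunction f).unit.app M).app_smul a s

theorem pullbackSection_res {U V : X.Opens} (h : V ≤ U) (s : Γ(M, U)) :
    pullbackSection f M V (res M h s) =
      res _ (f.preimage_mono h) (pullbackSection f M U s) :=
  ConcreteCategory.congr_hom
    (((Scheme.Modules.pullbackPushforwardAdjunction f).unit.app M).mapPresheaf.naturality
      (homOfLE h).op) s

variable {M}

theorem app_eq_zero_of_pullbackSection_eq_zero {N : Y.Modules}
    (Φ : M ⟶ (Scheme.Modules.pushforward f).obj N) {U : X.Opens} {s : Γ(M, U)}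
    (h : pullbackSection f M U s = 0) : Φ.app U s = 0 := by
  let adj := Scheme.Modules.pullbackPushforwardAdjunction f
  let Ψ := (Scheme.Modules.pushforward f).map ((adj.homEquiv _ _).symm Φ)
  have hΦ : Φ = adj.unit.app M ≫ Ψ :=
    ((adj.homEquiv M N).apply_symm_apply Φ).symm.trans (adj.homEquiv_unit _ _ _)
  rw [hΦ]
  exact (congrArg (Ψ.app U) h).trans (map_zero (Ψ.app U).hom)

/-- The comorphism of a morphism of schemes, as a morphism of sheaves of modules. -/
noncomputable def structureModuleHom {Z T : Scheme.{u}} (g : T ⟶ Z) :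
    structureModule Z ⟶ (Scheme.Modules.pushforward g).obj (structureModule T) :=
  SheafOfModules.unitToPushforwardObjUnit g.toRingCatSheafHom

theorem structureModuleHom_oneSection {Z T : Scheme.{u}} (g : T ⟶ Z) (V : Z.Opens) :
    (structureModuleHom g).app V (oneSection Z V) = oneSection T (g ⁻¹ᵁ V) :=
  map_one (g.app V).hom

variable {U : X.Opens} (θ : M.restrict U.ι ≅ structureModule U.toScheme)

/-- The morphism from a trivialized module to the pushforward of the structure sheaf. -/
noncomputable def trivializationHom : M ⟶ (Scheme.Modules.pushforward f).obj
    ((Scheme.Modules.pushforward (f ⁻¹ᵁ U).ι).obj (structureModule (f ⁻¹ᵁ U).toScheme)) :=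
  (Scheme.Modules.restrictAdjunction U.ι).unit.app M ≫
  (Scheme.Modules.pushforward U.ι).map (θ.hom ≫ structureModuleHom (f ∣_ U)) ≫
  (Scheme.Modules.pushforwardComp (f ∣_ U) U.ι).hom.app _ ≫
  (Scheme.Modules.pushforwardCongr (morphismRestrict_ι f U)).hom.app _ ≫
  (Scheme.Modules.pushforwardComp (f ⁻¹ᵁ U).ι f).inv.app _

theorem hom_app_res_frameOf {V : X.Opens} (hV : V ≤ U.ι ''ᵁ ⊤) :
    θ.hom.app (U.ι ⁻¹ᵁ V) (res M (U.ι.image_preimage_le V) (res M hV (frameOf θ))) =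
      oneSection _ _ := by
  rw [res_res, res_frameOf]
  exact ConcreteCategory.congr_hom (congrArg (fun g => Scheme.Modules.Hom.app g _) θ.inv_hom_id)
    (oneSection _ _)

theorem trivializationHom_frameOf {V : X.Opens} (hV : V ≤ U.ι ''ᵁ ⊤) :
    (trivializationHom f θ).app V (res M hV (frameOf θ)) =
      oneSection (f ⁻¹ᵁ U).toScheme ((f ⁻¹ᵁ U).ι ⁻¹ᵁ f ⁻¹ᵁ V) := by
  refine Eq.trans ?_ (map_oneSection (eqToHom (by rw [← Scheme.Hom.comp_preimage,
    ← Scheme.Hom.comp_preimage, morphismRestrict_ι]) :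
      (f ⁻¹ᵁ U).ι ⁻¹ᵁ f ⁻¹ᵁ V ⟶ (f ∣_ U) ⁻¹ᵁ U.ι ⁻¹ᵁ V))
  refine congrArg ((structureModule (f ⁻¹ᵁ U).toScheme).presheaf.map _) ?_
  exact (congrArg ((structureModuleHom (f ∣_ U)).app _) (hom_app_res_frameOf θ hV)).trans
    (structureModuleHom_oneSection _ _)

theorem app_eq_zero_of_pullbackSection_smul_frameOf {V : X.Opens} (hV : V ≤ U.ι ''ᵁ ⊤)
    {a : Γ(X, V)} (h : pullbackSection f M V (a • res M hV (frameOf θ)) = 0) :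
    f.app V a = 0 := by
  have hmap := app_eq_zero_of_pullbackSection_eq_zero f (trivializationHom f θ) h
  rw [Scheme.Modules.Hom.app_smul, trivializationHom_frameOf] at hmap
  have hι : (f ⁻¹ᵁ U).ι.app (f ⁻¹ᵁ V) (f.app V a) = 0 := (mul_one _).symm.trans hmap
  have hres : resO ((f ⁻¹ᵁ U).ι.image_preimage_le (f ⁻¹ᵁ V)) (f.app V a) = 0 := by
    rwa [Scheme.Opens.ι_app] at hι
  have hVU : f ⁻¹ᵁ V ≤ (f ⁻¹ᵁ U).ι ''ᵁ (f ⁻¹ᵁ U).ι ⁻¹ᵁ f ⁻¹ᵁ V := by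
    rw [Scheme.Hom.image_preimage_eq_opensRange_inf]
    refine le_inf ?_ le_rfl
    simpa using f.preimage_mono (hV.trans (by simp))
  simpa only [resO_resO, resO_self, map_zero] using congrArg (resO hVU) hres

theorem IsLineBundle.exists_isFrame_pullback (hM : IsLineBundle M) (x : X) :
    ∃ (U : X.Opens) (e : Γ(M, U)), x ∈ U ∧ IsFrame e ∧
      ∀ (V : X.Opens) (hV : V ≤ U) (a : Γ(X, V)),
        pullbackSection f M V (a • res M hV e) = 0 → f.app V a = 0 := by
  obtain ⟨U, hxU, ⟨θ⟩⟩ := hM x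
  exact ⟨U.ι ''ᵁ ⊤, frameOf θ, by simpa using hxU, isFrame_frameOf θ,
    fun V hV a => app_eq_zero_of_pullbackSection_smul_frameOf f θ hV⟩

end PullbackSections

section Residual

section

variable {A B : Type*} [CommRing A] [CommRing B] [Algebra A B]

theorem map_colon_le (I J : Ideal A) :
    (I.colon (J : Set A)).map (algebraMap A B) ≤
      (I.map (algebraMap A B)).colon (J.map (algebraMap A B) : Set B) := by
  have hJ : J.map (algebraMap A B) = Ideal.span (algebraMap A B '' J) := rfl
  rw [Ideal.map_le_iff_le_comap, hJ, Ideal.colon_span]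
  refine fun a ha => Submodule.mem_colon.2 ?_
  rintro _ ⟨j, hj, rfl⟩
  rw [smul_eq_mul, ← map_mul]
  exact Ideal.mem_map_of_mem _ (Submodule.mem_colon.1 ha j hj)

theorem exists_pow_mul_mem_of_mk'_mem_colon {f : A} [IsLocalization.Away f B] {I : Ideal A}
    {x : A} {s : Submonoid.powers f} {S : Set B}
    (hx : IsLocalization.mk' B x s ∈ (I.map (algebraMap A B)).colon S) {j : A}
    (hj : algebraMap A B j ∈ S) : ∃ n : ℕ, f ^ n * (x * j) ∈ I := by
  have hxj := Submodule.mem_colon.1 hx _ hj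
  rw [smul_eq_mul, mul_comm, IsLocalization.mul_mk'_eq_mk'_of_mul,
    IsLocalization.mk'_mem_map_algebraMap_iff] at hxj
  obtain ⟨_, ⟨n, rfl⟩, hn⟩ := hxj
  exact ⟨n, by rwa [mul_comm x j]⟩

theorem map_colon_of_fg (f : A) [IsLocalization.Away f B] (I : Ideal A) {J : Ideal A}
    (hJ : J.FG) :
    (I.colon (J : Set A)).map (algebraMap A B) =
      (I.map (algebraMap A B)).colon (J.map (algebraMap A B) : Set B) := by
  refine le_antisymm (map_colon_le I J) fun b hb => ?_
  obtain ⟨x, s, rfl⟩ := IsLocalization.exists_mk'_eq (.powers f) b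
  rw [IsLocalization.mk'_mem_map_algebraMap_iff]
  have hpow (j : A) (hj : j ∈ J) : ∃ n : ℕ, f ^ n * (x * j) ∈ I :=
    exists_pow_mul_mem_of_mk'_mem_colon hb (Ideal.mem_map_of_mem _ hj)
  obtain ⟨t, rfl⟩ := hJ
  choose! n hn using hpow
  refine ⟨f ^ t.sup n, ⟨_, rfl⟩, ?_⟩
  rw [Ideal.colon_span]
  refine Submodule.mem_colon.2 fun j hj => ?_
  obtain ⟨d, hd⟩ := Nat.exists_eq_add_of_le' (Finset.le_sup (f := n) hj)
  rw [hd, pow_add, smul_eq_mul, mul_assoc, mul_assoc]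
  exact I.mul_mem_left _ (hn j (Ideal.subset_span hj))

end

theorem colon_le_residualScheme {X : Scheme.{u}} [IsLocallyNoetherian X]
    (H W : X.IdealSheafData) (U : X.affineOpens) :
    (W.ideal U).colon (H.ideal U : Set Γ(X, U.1)) ≤ (residualScheme H W).ideal U := by
  let J : X.IdealSheafData :=
    { ideal := fun U => (W.ideal U).colon (H.ideal U : Set Γ(X, U.1))
      map_ideal_basicOpen := fun U f => by
        have := U.2.isLocalization_basicOpen f
        have := IsLocallyNoetherian.component_noetherian U
        rw [← W.map_ideal_basicOpen, ← H.map_ideal_basicOpen]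
        exact map_colon_of_fg f _ (IsNoetherian.noetherian _) }
  have : J ≤ residualScheme H W := Scheme.IdealSheafData.le_ofIdeals_iff.2 le_rfl
  exact this U

end Residual

section Evaluation

variable {k : Type u} [Field k] {X Y : Scheme.{u}}

theorem eq_closedPoint (x : Spec (.of k)) : x = IsLocalRing.closedPoint k :=
  Subsingleton.elim (α := PrimeSpectrum k) _ _

theorem top_le_preimage {p : Spec (.of k) ⟶ X} {U : X.Opens}
    (hp : p (IsLocalRing.closedPoint k) ∈ U) : ⊤ ≤ p ⁻¹ᵁ U := fun x _ =>
  eq_closedPoint x ▸ hp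

/-- The value of a function at a point with values in `k`. -/
noncomputable def evalAt (p : Spec (.of k) ⟶ X) {U : X.Opens}
    (hp : p (IsLocalRing.closedPoint k) ∈ U) : Γ(X, U) →+* k :=
  (p.appLE U ⊤ (top_le_preimage hp) ≫ (Scheme.ΓSpecIso (.of k)).hom).hom

theorem evalAt_appLE (p : Spec (.of k) ⟶ Y) (g : Y ⟶ X) {U : X.Opens} {V : Y.Opens}
    (e : V ≤ g ⁻¹ᵁ U) (hp : p (IsLocalRing.closedPoint k) ∈ V)
    (hp' : (p ≫ g) (IsLocalRing.closedPoint k) ∈ U) (a : Γ(X, U)) :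
    evalAt p hp (g.appLE U V e a) = evalAt (p ≫ g) hp' a := by
  simp only [evalAt, ← Scheme.Hom.appLE_comp_appLE p g U V ⊤ e (top_le_preimage hp)]
  rfl

theorem evalAt_app (p : Spec (.of k) ⟶ Y) (g : Y ⟶ X) {U : X.Opens}
    (hp : p (IsLocalRing.closedPoint k) ∈ g ⁻¹ᵁ U)
    (hp' : (p ≫ g) (IsLocalRing.closedPoint k) ∈ U) (a : Γ(X, U)) :
    evalAt p hp (g.app U a) = evalAt (p ≫ g) hp' a := by
  rw [Scheme.Hom.app_eq_appLE]
  exact evalAt_appLE p g le_rfl hp hp' a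

theorem mem_basicOpen_iff_evalAt_ne_zero (p : Spec (.of k) ⟶ X) {U : X.Opens}
    (hp : p (IsLocalRing.closedPoint k) ∈ U) (a : Γ(X, U)) :
    p (IsLocalRing.closedPoint k) ∈ X.basicOpen a ↔ evalAt p hp a ≠ 0 := by
  calc p (IsLocalRing.closedPoint k) ∈ X.basicOpen a
    _ ↔ IsLocalRing.closedPoint k ∈
        (Spec (.of k)).basicOpen (p.appLE U ⊤ (top_le_preimage hp) a) := by
      rw [Scheme.basicOpen_appLE, top_inf_eq]
      rfl
    _ ↔ evalAt p hp a ∉ IsLocalRing.maximalIdeal k := by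
      rw [basicOpen_eq_of_affine']
      rfl
    _ ↔ evalAt p hp a ≠ 0 := by
      rw [IsLocalRing.notMem_maximalIdeal, isUnit_iff_ne_zero]

theorem ker_ideal_of_mem (p : Spec (.of k) ⟶ X) (U : X.affineOpens)
    (hp : p (IsLocalRing.closedPoint k) ∈ U.1) :
    p.ker.ideal U = RingHom.ker (evalAt p hp) := by
  rw [Scheme.Hom.ker_apply]
  ext a
  have hinj : Function.Injective ((Spec (.of k)).presheaf.map
      (homOfLE (top_le_preimage hp)).op ≫ (Scheme.ΓSpecIso (.of k)).hom) := by
    have : p ⁻¹ᵁ U.1 = ⊤ := top_le_iff.1 (top_le_preimage hp)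
    have : IsIso (homOfLE (top_le_preimage hp)).op := by
      rw [Subsingleton.elim (homOfLE (top_le_preimage hp)) (eqToHom this.symm)]
      infer_instance
    exact (ConcreteCategory.bijective_of_isIso _).1
  rw [RingHom.mem_ker, RingHom.mem_ker]
  exact (map_eq_zero_iff (CommRingCat.Hom.hom _) hinj).symm

theorem ker_ideal_of_notMem (p : Spec (.of k) ⟶ X) (U : X.affineOpens)
    (hp : p (IsLocalRing.closedPoint k) ∉ U.1) : p.ker.ideal U = ⊤ := by
  rw [Scheme.Hom.ker_apply]
  have hbot : p ⁻¹ᵁ U.1 = ⊥ := le_bot_iff.1 fun x hx => hp (eq_closedPoint x ▸ hx)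
  have : Subsingleton Γ(Spec (.of k), p ⁻¹ᵁ U.1) := by
    rw [hbot]
    infer_instance
  exact (Ideal.eq_top_iff_one _).2 (Subsingleton.elim _ _)

theorem fatPoint_ideal_of_mem (p : Spec (.of k) ⟶ X) (m : ℕ) (U : X.affineOpens)
    (hp : p (IsLocalRing.closedPoint k) ∈ U.1) :
    (fatPoint p m).ideal U = RingHom.ker (evalAt p hp) ^ m := by
  rw [← ker_ideal_of_mem]
  rfl

theorem fatPoint_ideal_of_notMem (p : Spec (.of k) ⟶ X) (m : ℕ) (U : X.affineOpens)
    (hp : p (IsLocalRing.closedPoint k) ∉ U.1) : (fatPoint p m).ideal U = ⊤ := by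
  change p.ker.ideal U ^ m = ⊤
  rw [ker_ideal_of_notMem p U hp, ← Ideal.one_eq_top, one_pow]

variable (f : X ⟶ Spec (.of k))

theorem le_preimage_top (U : X.Opens) : U ≤ f ⁻¹ᵁ ⊤ := fun _ _ => trivial

/-- The `k`-algebra structure on the functions on an open subset of a `k`-scheme. -/
noncomputable abbrev sectionAlgebra (U : X.Opens) : Algebra k Γ(X, U) :=
  ((Scheme.ΓSpecIso (.of k)).inv ≫ f.appLE ⊤ U (le_preimage_top f U)).hom.toAlgebra

theorem resO_sectionAlgebra {U V : X.Opens} (h : V ≤ U) (c : k) :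
    resO h ((sectionAlgebra f U).algebraMap c) = (sectionAlgebra f V).algebraMap c := by
  change ((Scheme.ΓSpecIso (.of k)).inv ≫ f.appLE ⊤ U (le_preimage_top f U) ≫
    X.presheaf.map _) c = _
  rw [Scheme.Hom.appLE_map]
  rfl

theorem appLE_sectionAlgebra (g : Y ⟶ X) {f' : Y ⟶ Spec (.of k)} (hg : g ≫ f = f') {U : X.Opens}
    {V : Y.Opens} (e : V ≤ g ⁻¹ᵁ U) (c : k) :
    g.appLE U V e ((sectionAlgebra f U).algebraMap c) = (sectionAlgebra f' V).algebraMap c := by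
  subst hg
  change ((Scheme.ΓSpecIso (.of k)).inv ≫ f.appLE ⊤ U (le_preimage_top f U) ≫ g.appLE U V e) c = _
  rw [Scheme.Hom.appLE_comp_appLE]
  rfl

theorem evalAt_sectionAlgebra (p : RatPoint f) {U : X.Opens}
    (hp : p.1 (IsLocalRing.closedPoint k) ∈ U) (c : k) :
    evalAt p.1 hp ((sectionAlgebra f U).algebraMap c) = c := by
  change (Scheme.ΓSpecIso (.of k)).hom (p.1.appLE U ⊤ _ _) = c
  rw [appLE_sectionAlgebra f p.1 p.2]
  change ((Scheme.ΓSpecIso (.of k)).inv ≫ (𝟙 (Spec (.of k)) :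
    Spec (.of k) ⟶ Spec (.of k)).appLE ⊤ ⊤ le_top ≫ (Scheme.ΓSpecIso (.of k)).hom) c = c
  simp [Scheme.Hom.appLE]

/-- The value of a function at a rational point, as a homomorphism of `k`-algebras. -/
noncomputable def evalAlgHom (p : RatPoint f) {U : X.Opens}
    (hp : p.1 (IsLocalRing.closedPoint k) ∈ U) :
    letI := sectionAlgebra f U
    Γ(X, U) →ₐ[k] k :=
  letI := sectionAlgebra f U
  { evalAt p.1 hp with commutes' := evalAt_sectionAlgebra f p hp }

section Character

variable {U : X.Opens}

theorem fromSpec_appLE_top (hU : IsAffineOpen U) :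
    hU.fromSpec.appLE U ⊤ hU.fromSpec_preimage_self.ge = (Scheme.ΓSpecIso Γ(X, U)).inv := by
  rw [Scheme.Hom.appLE, hU.fromSpec_app_self, Category.assoc, ← Functor.map_comp]
  exact (congrArg _ ((Spec Γ(X, U)).presheaf.map_id _)).trans (Category.comp_id _)

theorem evalAt_specMap_fromSpec (hU : IsAffineOpen U) (φ : Γ(X, U) →+* k)
    (hp : (Spec.map (CommRingCat.ofHom φ) ≫ hU.fromSpec) (IsLocalRing.closedPoint k) ∈ U) :
    evalAt (Spec.map (CommRingCat.ofHom φ) ≫ hU.fromSpec) hp = φ := by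
  have happ : (Spec.map (CommRingCat.ofHom φ) ≫ hU.fromSpec).appLE U ⊤ (top_le_preimage hp) =
      (Scheme.ΓSpecIso Γ(X, U)).inv ≫ (Spec.map (CommRingCat.ofHom φ)).appTop := by
    rw [← fromSpec_appLE_top hU, Scheme.Hom.appTop, Scheme.Hom.app_eq_appLE]
    exact (Scheme.Hom.appLE_comp_appLE _ _ _ _ _ _ _).symm
  rw [evalAt, happ, Category.assoc, Scheme.ΓSpecIso_naturality]
  exact congrArg CommRingCat.Hom.hom
    ((Scheme.ΓSpecIso Γ(X, U)).inv_hom_id_assoc (CommRingCat.ofHom φ))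

theorem specMap_fromSpec_comp (hU : IsAffineOpen U) :
    letI := sectionAlgebra f U
    ∀ φ : Γ(X, U) →ₐ[k] k,
      (Spec.map (CommRingCat.ofHom (φ : Γ(X, U) →+* k)) ≫ hU.fromSpec) ≫ f = 𝟙 _ := by
  let := sectionAlgebra f U
  intro φ
  have hφ : (Scheme.ΓSpecIso (.of k)).inv ≫ f.appLE ⊤ U (le_preimage_top f U) ≫
      CommRingCat.ofHom (φ : Γ(X, U) →+* k) = 𝟙 _ := by
    ext c
    exact φ.commutes c
  rw [Category.assoc, ← IsAffineOpen.SpecMap_appLE_fromSpec f (isAffineOpen_top _) hU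
    (le_preimage_top f U), IsAffineOpen.fromSpec_top, Scheme.isoSpec_Spec_inv,
    ← Spec.map_comp, ← Spec.map_comp, Category.assoc, hφ, Spec.map_id]

theorem exists_ratPoint_evalAlgHom_eq (hU : IsAffineOpen U) :
    letI := sectionAlgebra f U
    ∀ φ : Γ(X, U) →ₐ[k] k, ∃ (p : RatPoint f) (hp : p.1 (IsLocalRing.closedPoint k) ∈ U),
      evalAlgHom f p hp = φ := by
  let := sectionAlgebra f U
  intro φ
  have hp : (Spec.map (CommRingCat.ofHom (φ : Γ(X, U) →+* k)) ≫ hU.fromSpec)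
      (IsLocalRing.closedPoint k) ∈ U :=
    hU.range_fromSpec.le ⟨_, rfl⟩
  exact ⟨⟨_, specMap_fromSpec_comp f hU φ⟩, hp,
    AlgHom.ext fun a => congr($(evalAt_specMap_fromSpec hU _ hp) a)⟩

end Character

theorem finiteType_sectionAlgebra [LocallyOfFiniteType f] {U : X.Opens} (hU : IsAffineOpen U) :
    letI := sectionAlgebra f U
    Algebra.FiniteType k Γ(X, U) := by
  let := sectionAlgebra f U
  have happ : (f.appLE ⊤ U (le_preimage_top f U)).hom.FiniteType :=
    f.finiteType_appLE (isAffineOpen_top _) hU _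
  exact RingHom.finiteType_algebraMap.1 <| happ.comp <| .of_surjective _
    (Scheme.ΓSpecIso (.of k)).commRingCatIsoToRingEquiv.symm.surjective

theorem isClosed_ratPoint [IsAlgClosed k] [LocallyOfFiniteType f] (p : RatPoint f) :
    IsClosed {p.1 (IsLocalRing.closedPoint k)} :=
  (pointEquivClosedPoint f p).2

end Evaluation

section GlobalSections

variable {X : Scheme.{u}} {M : X.Modules}

theorem exists_affineOpens_mem_le {O : X.Opens} {x : X} (hx : x ∈ O) :
    ∃ V : X.affineOpens, x ∈ V.1 ∧ V.1 ≤ O := by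
  obtain ⟨_, ⟨V, hV, rfl⟩, hxV, hVO⟩ :=
    X.isBasis_affineOpens.exists_subset_of_mem_open hx O.2
  exact ⟨⟨V, hV⟩, hxV, hVO⟩

theorem resO_injective [IsIntegral X] {U V : X.Opens} (hVU : V ≤ U)
    (hV : (V : Set X).Nonempty) : Function.Injective (resO hVU) :=
  have : Nonempty V := hV.to_subtype
  map_injective_of_isIntegral X (homOfLE hVU)

theorem mem_ideal_inf_iInf_iff {ι : Type*} [Finite ι] {W : X.IdealSheafData}
    {J : ι → X.IdealSheafData} {U : X.affineOpens} {a : Γ(X, U.1)} :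
    a ∈ (W ⊓ ⨅ i, J i).ideal U ↔ a ∈ W.ideal U ∧ ∀ i, a ∈ (J i).ideal U := by
  rw [Scheme.IdealSheafData.ideal_inf, Scheme.IdealSheafData.ideal_iInf, Pi.inf_apply,
    iInf_apply, Submodule.mem_inf, Ideal.mem_iInf]

theorem mem_H0_of_le {I J : X.IdealSheafData} (hIJ : I ≤ J) {s : Γ(M, ⊤)} (hs : s ∈ H0 I M) :
    s ∈ H0 J M :=
  fun U => Submodule.smul_mono_left (hIJ U) (hs U)

theorem IsFrame.mem_ideal_of_mem_H0 {U : X.affineOpens} {e : Γ(M, U.1)} (he : IsFrame e)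
    {I : X.IdealSheafData} {s : Γ(M, ⊤)} (hs : s ∈ H0 I M) {a : Γ(X, U.1)}
    (ha : res M (le_top : U.1 ≤ ⊤) s = a • e) : a ∈ I.ideal U := by
  rw [← he.smul_mem_iff, ← ha]
  exact hs U

theorem IsLineBundle.mem_H0_of_local (hM : IsLineBundle M) (I : X.IdealSheafData) (s : Γ(M, ⊤))
    (h : ∀ x : X, ∃ V : X.affineOpens, x ∈ V.1 ∧
      res M (le_top : V.1 ≤ ⊤) s ∈ I.ideal V • (⊤ : Submodule Γ(X, V.1) Γ(M, V.1))) :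
    s ∈ H0 I M := by
  intro U
  refine hM.mem_smul_top_of_local (s := res M le_top s) I U fun x hx => ?_
  obtain ⟨V, hxV, hV⟩ := h x
  obtain ⟨T, hxT, hT⟩ := exists_affineOpens_mem_le (O := U.1 ⊓ V.1) ⟨hx, hxV⟩
  refine ⟨T, hT.trans inf_le_left, hxT, ?_⟩
  have hres := res_mem_smul_top I (hT.trans inf_le_right) hV
  rwa [res_res] at hres ⊢

theorem IsLineBundle.eq_zero_of_res_eq_zero [IsIntegral X] (hM : IsLineBundle M) {O : X.Opens}
    (hO : (O : Set X).Nonempty) {s : Γ(M, ⊤)} (hs : res M (le_top : O ≤ ⊤) s = 0) : s = 0 := by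
  choose U e hxU he using hM.exists_isFrame
  refine eq_of_res_eq M (fun _ => le_top)
    (fun x _ => TopologicalSpace.Opens.mem_iSup.2 ⟨x, hxU x⟩) fun x => ?_
  obtain ⟨a, ha⟩ := (he x).exists_eq_smul (res M le_top s)
  have hres : resO (inf_le_left : U x ⊓ O ≤ U x) a = 0 := by
    apply ((he x).restrict (inf_le_left : U x ⊓ O ≤ U x)).smul_injective
    rw [← res_smul, ← ha, res_res, ← res_res M (le_top : O ≤ ⊤) inf_le_right, hs, map_zero,
      zero_smul]
  have ha0 : a = 0 := (map_eq_zero_iff _ (resO_injective _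
    (nonempty_preirreducible_inter (U x).2 O.2 ⟨x, hxU x⟩ hO))).1 hres
  rw [ha, ha0, zero_smul, map_zero]

end GlobalSections

section PullbackFrames

variable {X Y : Scheme.{u}} (f : Y ⟶ X) {M : X.Modules}

/-- A frame `e` whose pullback along `f` has no torsion: if the pullback of `a • e` vanishes, then
so does the pullback of the function `a`. -/
def IsPullbackFrame {U : X.Opens} (e : Γ(M, U)) : Prop :=
  IsFrame e ∧ ∀ (V : X.Opens) (hV : V ≤ U) (a : Γ(X, V)),
    pullbackSection f M V (a • res M hV e) = 0 → f.app V a = 0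

variable {f}

theorem IsPullbackFrame.restrict {U V : X.Opens} {e : Γ(M, U)} (he : IsPullbackFrame f e)
    (h : V ≤ U) : IsPullbackFrame f (res M h e) :=
  ⟨he.1.restrict h, fun W hW a h0 => he.2 W (hW.trans h) a (by rwa [res_res] at h0)⟩

theorem IsPullbackFrame.app_eq_zero {U : X.Opens} {e : Γ(M, U)} (he : IsPullbackFrame f e)
    {a : Γ(X, U)} (h : pullbackSection f M U (a • e) = 0) : f.app U a = 0 :=
  he.2 U le_rfl a (by rwa [res_self])

end PullbackFrames

section Divisor

variable {X : Scheme.{u}} {H : X.IdealSheafData} {M : X.Modules}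

theorem subschemeι_app_eq_zero_iff {U : X.affineOpens} {a : Γ(X, U.1)} :
    H.subschemeι.app U.1 a = 0 ↔ a ∈ H.ideal U := by
  rw [← Scheme.IdealSheafData.ker_subschemeι_app]
  rfl

theorem ideal_eq_span_resO {U V : X.affineOpens} (hVU : V.1 ≤ U.1) {h : Γ(X, U.1)}
    (hU : H.ideal U = Ideal.span {h}) : H.ideal V = Ideal.span {resO hVU h} := by
  rw [← H.map_ideal (U := V) (V := U) hVU, hU, Ideal.map_span, Set.image_singleton]
  rfl

theorem IsEffectiveCartier.exists_affineOpens (hH : IsEffectiveCartier H) (hM : IsLineBundle M)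
    [IsIntegral X] {O : X.Opens} {x : X} (hx : x ∈ O) :
    ∃ V : X.affineOpens, x ∈ V.1 ∧ V.1 ≤ O ∧
      (∃ e : Γ(M, V.1), IsPullbackFrame H.subschemeι e) ∧
      ∃ h : Γ(X, V.1), h ≠ 0 ∧ H.ideal V = Ideal.span {h} := by
  obtain ⟨U, hxU, h, hh, hU⟩ := hH x
  obtain ⟨T, e, hxT, he⟩ := hM.exists_isFrame_pullback H.subschemeι x
  obtain ⟨V, hxV, hV⟩ := exists_affineOpens_mem_le (O := U.1 ⊓ (T ⊓ O)) ⟨hxU, hxT, hx⟩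
  have hVU : V.1 ≤ U.1 := hV.trans inf_le_left
  have hVT : V.1 ≤ T := hV.trans (inf_le_right.trans inf_le_left)
  have : Nonempty U.1 := ⟨⟨x, hxU⟩⟩
  refine ⟨V, hxV, hV.trans (inf_le_right.trans inf_le_right),
    ⟨res M hVT e, IsPullbackFrame.restrict he hVT⟩, resO hVU h, ?_, ideal_eq_span_resO hVU hU⟩
  exact (map_ne_zero_iff _ (resO_injective hVU ⟨x, hxV⟩)).2 (nonZeroDivisors.ne_zero hh)

theorem IsPullbackFrame.mem_ideal_of_pullbackSection_eq_zero {U : X.affineOpens} {e : Γ(M, U.1)}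
    (he : IsPullbackFrame H.subschemeι e) {s : Γ(M, ⊤)} {a : Γ(X, U.1)}
    (ha : res M (le_top : U.1 ≤ ⊤) s = a • e) (hs : pullbackSection H.subschemeι M ⊤ s = 0) :
    a ∈ H.ideal U := by
  refine subschemeι_app_eq_zero_iff.1 (he.app_eq_zero ?_)
  rw [← ha, pullbackSection_res, hs, map_zero]

theorem IsLineBundle.pullbackSection_eq_zero [IsIntegral H.subscheme] (hM : IsLineBundle M)
    {U : X.affineOpens}
    (hne : ((H.subschemeι ⁻¹ᵁ U.1 : H.subscheme.Opens) : Set H.subscheme).Nonempty)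
    {s : Γ(M, ⊤)} {a : Γ(X, U.1)} {e : Γ(M, U.1)} (ha : res M (le_top : U.1 ≤ ⊤) s = a • e)
    (haH : a ∈ H.ideal U) : pullbackSection H.subschemeι M ⊤ s = 0 := by
  refine (hM.pullback H.subschemeι).eq_zero_of_res_eq_zero hne ?_
  refine (pullbackSection_res H.subschemeι M (le_top : U.1 ≤ ⊤) s).symm.trans ?_
  rw [ha, pullbackSection_smul, subschemeι_app_eq_zero_iff.2 haH, zero_smul]

theorem app_mem_traceScheme_ideal {W : X.IdealSheafData} {U : X.affineOpens} {a : Γ(X, U.1)}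
    (ha : a ∈ W.ideal U) :
    H.subschemeι.app U.1 a ∈ (traceScheme H W).ideal ⟨_, U.2.preimage H.subschemeι⟩ := by
  have hle := Scheme.IdealSheafData.le_map_comap (J := W) H.subschemeι U ha
  rwa [Scheme.IdealSheafData.ideal_map_of_isAffineHom] at hle

theorem mem_residualScheme_ideal [IsLocallyNoetherian X] {W : X.IdealSheafData}
    {U : X.affineOpens} {h b : Γ(X, U.1)} (hU : H.ideal U = Ideal.span {h})
    (hb : h * b ∈ W.ideal U) : b ∈ (residualScheme H W).ideal U := by
  refine colon_le_residualScheme H W U (Submodule.mem_colon.2 fun c hc => ?_)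
  rw [SetLike.mem_coe, hU, Ideal.mem_span_singleton] at hc
  obtain ⟨d, rfl⟩ := hc
  rw [smul_eq_mul, ← mul_assoc, mul_comm b h]
  exact Ideal.mul_mem_right d _ hb

variable {k : Type u} [Field k] {U : X.affineOpens}

theorem evalAt_eq_zero_of_mem_ideal {p : Spec (.of k) ⟶ H.subscheme}
    (hp : (p ≫ H.subschemeι) (IsLocalRing.closedPoint k) ∈ U.1) {a : Γ(X, U.1)}
    (ha : a ∈ H.ideal U) : evalAt (p ≫ H.subschemeι) hp a = 0 := by
  rw [← evalAt_app p H.subschemeι hp hp, subschemeι_app_eq_zero_iff.2 ha, map_zero]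

theorem simpleResidue_ideal_of_mem (z : Spec (.of k) ⟶ X) (m : ℕ) {h : Γ(X, U.1)}
    (hU : H.ideal U = Ideal.span {h}) (hz : z (IsLocalRing.closedPoint k) ∈ U.1) :
    (simpleResidue H z m).ideal U =
      RingHom.ker (evalAt z hz) ^ m ⊔ Ideal.span {h ^ (m - 1)} := by
  rw [← Ideal.span_singleton_pow, ← hU, ← fatPoint_ideal_of_mem]
  rfl

theorem simpleResidue_ideal_of_notMem (z : Spec (.of k) ⟶ X) (m : ℕ)
    (hz : z (IsLocalRing.closedPoint k) ∉ U.1) : (simpleResidue H z m).ideal U = ⊤ := by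
  refine top_le_iff.1 ?_
  rw [← fatPoint_ideal_of_notMem z m U hz]
  exact le_sup_left (a := (fatPoint z m).ideal U)

end Divisor

section Horace

variable {k : Type u} [Field k] {X : Scheme.{u}} (f : X ⟶ Spec (.of k)) {L : X.Modules}
  (hL : IsLineBundle L) {H W : X.IdealSheafData} {r : ℕ} (Q : Fin r → RatPoint (H.subschemeι ≫ f))

theorem exists_open_notMem [IsAlgClosed k] [LocallyOfFiniteType f] {x : X} {O : X.Opens}
    (hx : x ∉ O) (hQ : ∀ i, (Q i).1 (IsLocalRing.closedPoint k) ∈ H.subschemeι ⁻¹ᵁ O) :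
    ∃ T : X.Opens, x ∈ T ∧ ∀ i, (Q i).1 (IsLocalRing.closedPoint k) ∉ H.subschemeι ⁻¹ᵁ T := by
  let q (i : Fin r) : X := H.subschemeι ((Q i).1 (IsLocalRing.closedPoint k))
  have hclosed : IsClosed (Set.range q) := by
    rw [← Set.iUnion_singleton_eq_range]
    exact isClosed_iUnion_of_finite fun i => isClosed_ratPoint f
      ⟨(Q i).1 ≫ H.subschemeι, by rw [Category.assoc, (Q i).2]⟩
  refine ⟨⟨(Set.range q)ᶜ, hclosed.isOpen_compl⟩, ?_, fun i hi => hi ⟨i, rfl⟩⟩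
  rintro ⟨i, rfl⟩
  exact hx (hQ i)

theorem res_pullbackSection_mem_smul_top {s : Γ(L, ⊤)} {V : X.affineOpens} {e : Γ(L, V.1)}
    {a : Γ(X, V.1)} (ha : res L (le_top : V.1 ≤ ⊤) s = a • e) (J : H.subscheme.IdealSheafData)
    (haJ : H.subschemeι.app V.1 a ∈ J.ideal ⟨_, V.2.preimage H.subschemeι⟩) :
    res (restrictTo L H) (le_top : H.subschemeι ⁻¹ᵁ V.1 ≤ ⊤) (pullbackSection H.subschemeι L ⊤ s) ∈
      J.ideal ⟨_, V.2.preimage H.subschemeι⟩ • (⊤ : Submodule Γ(H.subscheme, H.subschemeι ⁻¹ᵁ V.1)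
        Γ(restrictTo L H, H.subschemeι ⁻¹ᵁ V.1)) := by
  have hres := pullbackSection_res H.subschemeι L (le_top : V.1 ≤ ⊤) s
  rw [ha, pullbackSection_smul] at hres
  exact Set.mem_of_eq_of_mem hres.symm (Submodule.smul_mem_smul haJ trivial)

theorem mul_mem_residualScheme_inf_mul_ideal [IsLocallyNoetherian X] {V : X.affineOpens}
    {J : Fin r → X.IdealSheafData} {h b : Γ(X, V.1)} (hV : H.ideal V = Ideal.span {h})
    (hbW : h * b ∈ W.ideal V) (hbJ : ∀ i, b ∈ (J i).ideal V) :
    h * b ∈ ((residualScheme H W ⊓ ⨅ i, J i) * H).ideal V := by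
  rw [mul_comm h b]
  exact Ideal.mul_mem_mul (mem_ideal_inf_iInf_iff.2 ⟨mem_residualScheme_ideal hV hbW, hbJ⟩)
    (hV ▸ Ideal.mem_span_singleton_self h)

variable [IsAlgClosed k] [LocallyOfFiniteType f] {s : Γ(L, ⊤)} (hs : s ∈ H0 W L)
  {U : X.affineOpens} (hQ : ∀ i, (Q i).1 (IsLocalRing.closedPoint k) ∈ H.subschemeι ⁻¹ᵁ U.1)
  {e : Γ(L, U.1)}

include hL hs hQ

theorem pullbackSection_mem_H0 (he : IsFrame e) {a : Γ(X, U.1)}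
    (ha : res L (le_top : U.1 ≤ ⊤) s = a • e)
    (haQ : ∀ i, evalAt ((Q i).1 ≫ H.subschemeι) (hQ i) a = 0) :
    (pullbackSection H.subschemeι L ⊤ s : Γ(restrictTo L H, ⊤)) ∈
      H0 (traceScheme H W ⊓ ⨅ i, fatPoint (Q i).1 1) (restrictTo L H) := by
  refine (hL.pullback H.subschemeι).mem_H0_of_local _ _ fun y => ?_
  suffices ∃ (V : X.affineOpens) (e : Γ(L, V.1)) (a : Γ(X, V.1)), H.subschemeι y ∈ V.1 ∧
      IsFrame e ∧ res L (le_top : V.1 ≤ ⊤) s = a • e ∧ ∀ i, H.subschemeι.app V.1 a ∈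
        (fatPoint (Q i).1 1).ideal ⟨_, V.2.preimage H.subschemeι⟩ by
    obtain ⟨V, e, a, hyV, he, ha, haQ⟩ := this
    exact ⟨⟨_, V.2.preimage H.subschemeι⟩, hyV, res_pullbackSection_mem_smul_top ha _ <|
      mem_ideal_inf_iInf_iff.2 ⟨app_mem_traceScheme_ideal (he.mem_ideal_of_mem_H0 hs ha), haQ⟩⟩
  by_cases hy : H.subschemeι y ∈ U.1
  · refine ⟨U, e, a, hy, he, ha, fun i => ?_⟩
    rw [fatPoint_ideal_of_mem _ _ _ (hQ i), pow_one, RingHom.mem_ker]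
    exact (evalAt_app _ _ _ (hQ i) a).trans (haQ i)
  · obtain ⟨T, hyT, hT⟩ := exists_open_notMem f Q hy hQ
    obtain ⟨O, e₁, hyO, he₁⟩ := hL.exists_isFrame (H.subschemeι y)
    obtain ⟨V, hyV, hV⟩ := exists_affineOpens_mem_le (O := T ⊓ O) ⟨hyT, hyO⟩
    have heV := he₁.restrict (hV.trans inf_le_right)
    obtain ⟨c, hc⟩ := heV.exists_eq_smul (res L (le_top : V.1 ≤ ⊤) s)
    refine ⟨V, _, c, hyV, heV, hc, fun i => ?_⟩
    rw [fatPoint_ideal_of_notMem _ _ _ fun h => hT i (hV.trans inf_le_left h)]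
    trivial

theorem mem_H0Twist [IsIntegral X] [IsIntegral H.subscheme] (hH : IsEffectiveCartier H)
    (hne : ((H.subschemeι ⁻¹ᵁ U.1 : H.subscheme.Opens) : Set H.subscheme).Nonempty)
    (he : IsFrame e) {h b : Γ(X, U.1)} (hU : H.ideal U = Ideal.span {h})
    (hb : res L (le_top : U.1 ≤ ⊤) s = (h * b) • e) (m : Fin r → ℕ)
    (hbQ : ∀ i, b ∈ RingHom.ker (evalAt ((Q i).1 ≫ H.subschemeι) (hQ i)) ^ m i ⊔
      Ideal.span {h ^ (m i - 1)}) :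
    s ∈ H0Twist (residualScheme H W ⊓ ⨅ i, simpleResidue H ((Q i).1 ≫ H.subschemeι) (m i)) L H := by
  have : IsLocallyNoetherian X := LocallyOfFiniteType.isLocallyNoetherian f
  refine hL.mem_H0_of_local _ _ fun x => ?_
  suffices ∃ (V : X.affineOpens) (e : Γ(L, V.1)) (h b : Γ(X, V.1)), x ∈ V.1 ∧
      IsFrame e ∧ res L (le_top : V.1 ≤ ⊤) s = (h * b) • e ∧ H.ideal V = Ideal.span {h} ∧
      ∀ i, b ∈ (simpleResidue H ((Q i).1 ≫ H.subschemeι) (m i)).ideal V by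
    obtain ⟨V, e, h, b, hxV, he, hb, hV, hbQ⟩ := this
    refine ⟨V, hxV, ?_⟩
    rw [hb, he.smul_mem_iff]
    exact mul_mem_residualScheme_inf_mul_ideal hV (he.mem_ideal_of_mem_H0 hs hb) hbQ
  by_cases hx : x ∈ U.1
  · refine ⟨U, e, h, b, hx, he, hb, hU, fun i => ?_⟩
    rw [simpleResidue_ideal_of_mem ((Q i).1 ≫ H.subschemeι) _ hU (hQ i)]
    exact hbQ i
  · obtain ⟨T, hxT, hT⟩ := exists_open_notMem f Q hx hQ
    obtain ⟨V, hxV, hVT, ⟨e₁, he₁⟩, h₁, -, hV⟩ := hH.exists_affineOpens hL hxT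
    obtain ⟨c, hc⟩ := he₁.1.exists_eq_smul (res L (le_top : V.1 ≤ ⊤) s)
    have hcH : c ∈ H.ideal V := he₁.mem_ideal_of_pullbackSection_eq_zero hc <|
      hL.pullbackSection_eq_zero hne hb <|
        hU ▸ Ideal.mul_mem_right _ _ (Ideal.mem_span_singleton_self h)
    rw [hV, Ideal.mem_span_singleton] at hcH
    obtain ⟨d, rfl⟩ := hcH
    refine ⟨V, e₁, h₁, d, hxV, he₁.1, hc, hV, fun i => ?_⟩
    rw [simpleResidue_ideal_of_notMem _ _ fun h => hT i (hVT h)]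
    trivial

end Horace

section GenericOpens

variable {k : Type u} [Field k] {X : Scheme.{u}} (f : X ⟶ Spec (.of k)) {r : ℕ}

/-- The power `U ×_k ⋯ ×_k U` of an open subset, as an open subset of the fibre power. -/
noncomputable def openPower (r : ℕ) (U : X.Opens) : (fibrePower f r).Opens :=
  ⟨⋂ i : Fin r, (WidePullback.π (fun _ : Fin r => f) i ⁻¹ᵁ U : (fibrePower f r).Opens),
    isOpen_iInter_of_finite fun i => (WidePullback.π (fun _ : Fin r => f) i ⁻¹ᵁ U).2⟩

theorem openPower_le (U : X.Opens) (i : Fin r) :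
    openPower f r U ≤ WidePullback.π (fun _ : Fin r => f) i ⁻¹ᵁ U :=
  fun _ hx => Set.mem_iInter.1 hx i

theorem tuplePoint_mem_openPower_iff {U : X.Opens} {p : Fin r → RatPoint f} :
    tuplePoint f p (IsLocalRing.closedPoint k) ∈ openPower f r U ↔
      ∀ i, (p i).1 (IsLocalRing.closedPoint k) ∈ U := by
  refine Set.mem_iInter.trans (forall_congr' fun i => ?_)
  rw [← tuplePoint_π f p i]
  rfl

/-- The function on `U ×_k ⋯ ×_k U` given by a polynomial in the pullbacks of the functions on `U`
along the projections: the variable `(i, a)` stands for `a`, evaluated at the `i`-th point. -/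
noncomputable def tupleFunction {U : X.Opens} (D : MvPolynomial (Fin r × Γ(X, U)) k) :
    Γ(fibrePower f r, openPower f r U) :=
  letI := sectionAlgebra (WidePullback.base fun _ : Fin r => f) (openPower f r U)
  MvPolynomial.aeval (fun l : Fin r × Γ(X, U) =>
    (WidePullback.π (fun _ : Fin r => f) l.1).appLE U _ (openPower_le f U l.1) l.2) D

theorem evalAt_tuplePoint_tupleFunction {U : X.Opens} (D : MvPolynomial (Fin r × Γ(X, U)) k)
    {p : Fin r → RatPoint f} (hp : ∀ i, (p i).1 (IsLocalRing.closedPoint k) ∈ U) :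
    evalAt (tuplePoint f p) ((tuplePoint_mem_openPower_iff f).2 hp) (tupleFunction f D) =
      MvPolynomial.aeval (fun l : Fin r × Γ(X, U) => evalAt (p l.1).1 (hp l.1) l.2) D := by
  let b := WidePullback.base fun _ : Fin r => f
  let := sectionAlgebra b (openPower f r U)
  have hq := (tuplePoint_mem_openPower_iff f).2 hp
  let ev : Γ(fibrePower f r, openPower f r U) →ₐ[k] k :=
    evalAlgHom b ⟨tuplePoint f p, tuplePoint_base f p⟩ hq
  change ev (MvPolynomial.aeval _ D) = _
  rw [← AlgHom.comp_apply, MvPolynomial.comp_aeval]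
  congr 2
  funext l
  refine (evalAt_appLE (tuplePoint f p) (WidePullback.π (fun _ : Fin r => f) l.1)
    (openPower_le f U l.1) hq (by rw [tuplePoint_π]; exact hp l.1) l.2).trans ?_
  simp only [tuplePoint_π]

theorem tuplePoint_mem_basicOpen_tupleFunction_iff {U : X.Opens}
    (D : MvPolynomial (Fin r × Γ(X, U)) k) {p : Fin r → RatPoint f}
    (hp : ∀ i, (p i).1 (IsLocalRing.closedPoint k) ∈ U) :
    tuplePoint f p (IsLocalRing.closedPoint k) ∈ (fibrePower f r).basicOpen (tupleFunction f D) ↔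
      MvPolynomial.aeval (fun l : Fin r × Γ(X, U) => evalAt (p l.1).1 (hp l.1) l.2) D ≠ 0 := by
  rw [mem_basicOpen_iff_evalAt_ne_zero _ ((tuplePoint_mem_openPower_iff f).2 hp),
    evalAt_tuplePoint_tupleFunction]

variable [IsAlgClosed k] [LocallyOfFiniteType f]

theorem ForGeneric.exists_forall_mem {f : X ⟶ Spec (.of k)} [LocallyOfFiniteType f]
    {Φ Ψ : (Fin r → RatPoint f) → Prop}
    (hΦ : ForGeneric f r Φ) (hΨ : ForGeneric f r Ψ) {U : X.Opens} (hU : (U : Set X).Nonempty) :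
    ∃ p : Fin r → RatPoint f, (∀ i, (p i).1 (IsLocalRing.closedPoint k) ∈ U) ∧ Φ p ∧ Ψ p := by
  obtain ⟨O₁, hd₁, h₁⟩ := hΦ
  obtain ⟨O₂, hd₂, h₂⟩ := hΨ
  obtain ⟨p, hp⟩ := exists_ratPoint_mem f U hU
  have hne : (openPower f r U : Set (fibrePower f r)).Nonempty :=
    ⟨_, (tuplePoint_mem_openPower_iff f (p := fun _ => p)).2 fun _ => hp⟩
  obtain ⟨x, hxU, hx₁, hx₂⟩ := (hd₁.inter_of_isOpen_left hd₂ O₁.2).inter_open_nonempty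
    _ (openPower f r U).2 hne
  obtain ⟨q, hqU, hq₁, hq₂⟩ := exists_tuplePoint_mem f (openPower f r U ⊓ (O₁ ⊓ O₂))
    ⟨x, hxU, hx₁, hx₂⟩
  exact ⟨q, (tuplePoint_mem_openPower_iff f).1 hqU, h₁ q hq₁, h₂ q hq₂⟩

theorem forGeneric_of_aeval_ne_zero [IrreducibleSpace X] {Φ : (Fin r → RatPoint f) → Prop}
    {U : X.Opens} (hU : IsAffineOpen U) (D : MvPolynomial (Fin r × Γ(X, U)) k) :
    letI := sectionAlgebra f U
    (∃ P : Fin r → Γ(X, U) →ₐ[k] k, MvPolynomial.aeval (fun l => P l.1 l.2) D ≠ 0) →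
    (∀ (p : Fin r → RatPoint f) (hp : ∀ i, (p i).1 (IsLocalRing.closedPoint k) ∈ U),
      MvPolynomial.aeval (fun l : Fin r × Γ(X, U) => evalAt (p l.1).1 (hp l.1) l.2) D ≠ 0 →
      Φ p) → ForGeneric f r Φ := by
  let := sectionAlgebra f U
  intro ⟨P, hP⟩ hΦ
  choose p hp hpP using fun i => exists_ratPoint_evalAlgHom_eq f hU (P i)
  obtain rfl : (fun i => evalAlgHom f (p i) (hp i)) = P := funext hpP
  refine ⟨(fibrePower f r).basicOpen (tupleFunction f D), dense_of_tuplePoint_mem f _ p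
    ((tuplePoint_mem_basicOpen_tupleFunction_iff f D hp).2 hP), fun q hq => ?_⟩
  have hqU := (tuplePoint_mem_openPower_iff f).1 ((fibrePower f r).basicOpen_le _ hq)
  exact hΦ q hqU ((tuplePoint_mem_basicOpen_tupleFunction_iff f D hqU).1 hq)

end GenericOpens

section EtaleChart

variable {X : Scheme.{u}} {H : X.IdealSheafData}

theorem isDomain_section [IsIntegral X] {U : X.Opens}
    (hU : (U : Set X).Nonempty) : IsDomain Γ(X, U) :=
  haveI : Nonempty U := hU.to_subtype
  inferInstance

theorem preimage_affineBasicOpen_nonempty [IsReduced H.subscheme] {V : X.affineOpens}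
    {g : Γ(X, V.1)} (hg : g ∉ H.ideal V) :
    ((H.subschemeι ⁻¹ᵁ (X.affineBasicOpen g).1 : H.subscheme.Opens) :
      Set H.subscheme).Nonempty := by
  change ((H.subschemeι ⁻¹ᵁ X.basicOpen g : H.subscheme.Opens) : Set H.subscheme).Nonempty
  rw [Scheme.preimage_basicOpen, Set.nonempty_iff_ne_empty]
  exact fun hempty => hg <| subschemeι_app_eq_zero_iff.1 <|
    (basicOpen_eq_bot_iff _).1 (TopologicalSpace.Opens.ext hempty)

theorem exists_etale_chart {k : Type u} [Field k] [IsAlgClosed k] (f : X ⟶ Spec (.of k))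
    [LocallyOfFiniteType f] [IsIntegral X] [IsIntegral H.subscheme] {L : X.Modules}
    (hL : IsLineBundle L) (hH : IsEffectiveCartier H) :
    ∃ U : X.affineOpens, ((H.subschemeι ⁻¹ᵁ U.1 : H.subscheme.Opens) : Set H.subscheme).Nonempty ∧
      (∃ e : Γ(L, U.1), IsPullbackFrame H.subschemeι e) ∧
      letI := sectionAlgebra f U.1
      ∃ (σ : Type u) (_ : Finite σ) (z : Option σ → Γ(X, U.1)),
        z none ≠ 0 ∧ H.ideal U = Ideal.span {z none} ∧ IsEtaleCoordinates k z := by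
  obtain ⟨y⟩ : Nonempty H.subscheme := inferInstance
  obtain ⟨V, hyV, -, ⟨e, he⟩, h, h0, hV⟩ :=
    hH.exists_affineOpens hL (x := H.subschemeι y) (O := ⊤) trivial
  have : IsDomain Γ(X, V.1) := isDomain_section ⟨_, hyV⟩
  have : IsDomain Γ(H.subscheme, H.subschemeι ⁻¹ᵁ V.1) := isDomain_section ⟨y, hyV⟩
  let := sectionAlgebra f V.1
  have : Algebra.FiniteType k Γ(X, V.1) := finiteType_sectionAlgebra f V.2
  have : (Ideal.span {h}).IsPrime := by
    rw [← hV, ← Scheme.IdealSheafData.ker_subschemeι_app]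
    exact RingHom.ker_isPrime _
  obtain ⟨g, hg, hcoord⟩ := exists_isEtaleCoordinates (k := k) h0
  let U := X.affineBasicOpen g
  have hUV : U.1 ≤ V.1 := X.basicOpen_le g
  let := sectionAlgebra f U.1
  let : Algebra Γ(X, V.1) Γ(X, U.1) := (resO hUV).toAlgebra
  have : IsScalarTower k Γ(X, V.1) Γ(X, U.1) :=
    .of_algebraMap_eq fun c => (resO_sectionAlgebra f hUV c).symm
  have : IsLocalization.Away g Γ(X, U.1) := V.2.isLocalization_basicOpen g
  obtain ⟨σ, hσ, z, hzh, hz⟩ := hcoord Γ(X, U.1)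
  have hne := preimage_affineBasicOpen_nonempty (hV ▸ hg)
  refine ⟨U, hne, ⟨_, he.restrict hUV⟩, σ, hσ, z, ?_, ?_, hz⟩ <;> rw [hzh]
  · exact (map_ne_zero_iff _ (resO_injective hUV (hne.elim fun y hy => ⟨_, hy⟩))).2 h0
  · exact ideal_eq_span_resO hUV hV

end EtaleChart

section LocalExpressions

variable {k : Type u} [Field k] {X : Scheme.{u}} (f : X ⟶ Spec (.of k)) {L : X.Modules}

/-- The `k`-space of local expressions `a`, in a frame `e` over an open set, of the global sections
of `𝓘_W ⊗ L`: those sections restrict to `a • e`. -/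
noncomputable def localExpressions (W : X.IdealSheafData) {U : X.Opens} (e : Γ(L, U)) :
    letI := sectionAlgebra f U
    Submodule k Γ(X, U) :=
  letI := sectionAlgebra f U
  { carrier := {a | ∃ s ∈ H0 W L, res L (le_top : U ≤ ⊤) s = a • e}
    add_mem' := by
      rintro a b ⟨s, hs, ha⟩ ⟨t, ht, hb⟩
      exact ⟨s + t, add_mem hs ht, by rw [map_add, ha, hb, add_smul]⟩
    zero_mem' := ⟨0, zero_mem _, by rw [map_zero, zero_smul]⟩
    smul_mem' := by
      rintro c a ⟨s, hs, ha⟩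
      refine ⟨(sectionAlgebra f ⊤).algebraMap c • s, Submodule.smul_mem _ _ hs, ?_⟩
      rw [res_smul, resO_sectionAlgebra, ha, smul_smul, Algebra.smul_def] }

variable (hL : IsLineBundle L) {H W : X.IdealSheafData} {U : X.affineOpens} {e : Γ(L, U.1)} {r : ℕ}
  {s : Γ(L, ⊤)}

include hL

section Divisor

variable [IsAlgClosed k] [LocallyOfFiniteType f] {Q : Fin r → RatPoint (H.subschemeι ≫ f)}
  (hQ : ∀ i, (Q i).1 (IsLocalRing.closedPoint k) ∈ H.subschemeι ⁻¹ᵁ U.1)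

theorem mem_ideal_of_H0_traceScheme_eq_bot (hs : s ∈ H0 W L)
    (hdime : H0 (traceScheme H W ⊓ ⨅ i, fatPoint (Q i).1 1) (restrictTo L H) = ⊥)
    (he : IsPullbackFrame H.subschemeι e) {a : Γ(X, U.1)}
    (ha : res L (le_top : U.1 ≤ ⊤) s = a • e)
    (haQ : ∀ i, evalAt ((Q i).1 ≫ H.subschemeι) (hQ i) a = 0) : a ∈ H.ideal U :=
  he.mem_ideal_of_pullbackSection_eq_zero ha <| (Submodule.eq_bot_iff _).1 hdime _ <|
    pullbackSection_mem_H0 f hL Q hs hQ he.1 ha haQ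

theorem mul_eq_zero_of_H0Twist_eq_bot [IsIntegral X] [IsIntegral H.subscheme]
    (hs : s ∈ H0 W L) (hH : IsEffectiveCartier H)
    (hne : ((H.subschemeι ⁻¹ᵁ U.1 : H.subscheme.Opens) : Set H.subscheme).Nonempty)
    {m : Fin r → ℕ} (hdegue : H0Twist (residualScheme H W ⊓
      ⨅ i, simpleResidue H ((Q i).1 ≫ H.subschemeι) (m i)) L H = ⊥)
    (he : IsFrame e) {h b : Γ(X, U.1)} (hU : H.ideal U = Ideal.span {h})
    (hb : res L (le_top : U.1 ≤ ⊤) s = (h * b) • e)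
    (hbQ : ∀ i, b ∈ RingHom.ker (evalAt ((Q i).1 ≫ H.subschemeι) (hQ i)) ^ m i ⊔
      Ideal.span {h ^ (m i - 1)}) : h * b = 0 := by
  have hs0 : s = 0 := (Submodule.eq_bot_iff _).1 hdegue s <|
    mem_H0Twist f hL Q hs hQ hH hne he hU hb m hbQ
  exact he.smul_injective (by rw [← hb, hs0, map_zero, zero_smul])

end Divisor

theorem H0_inf_iInf_fatPoint_eq_bot [IsIntegral X] (hU : (U.1 : Set X).Nonempty) (he : IsFrame e)
    {p : Fin r → RatPoint f} (hp : ∀ i, (p i).1 (IsLocalRing.closedPoint k) ∈ U.1) {m : Fin r → ℕ}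
    (h : ∀ s ∈ H0 W L, ∀ a : Γ(X, U.1), res L (le_top : U.1 ≤ ⊤) s = a • e →
      (∀ i, a ∈ RingHom.ker (evalAt (p i).1 (hp i)) ^ m i) → a = 0) :
    H0 (W ⊓ ⨅ i, fatPoint (p i).1 (m i)) L = ⊥ := by
  refine (Submodule.eq_bot_iff _).2 fun s hs => hL.eq_zero_of_res_eq_zero hU ?_
  obtain ⟨a, ha⟩ := he.exists_eq_smul (res L (le_top : U.1 ≤ ⊤) s)
  have haP := (mem_ideal_inf_iInf_iff.1 (he.mem_ideal_of_mem_H0 hs ha)).2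
  rw [ha, h s (mem_H0_of_le inf_le_left hs) a ha fun i =>
    fatPoint_ideal_of_mem _ _ _ (hp i) ▸ haP i, zero_smul]

end LocalExpressions

end DiffHorace

theorem statement_17_general {k : Type u} [Field k] [IsAlgClosed k]
    (X : Scheme.{u}) (f : X ⟶ Spec (.of k)) [LocallyOfFiniteType f] [IsIntegral X]
    (L : X.Modules) (hL : IsLineBundle L)
    (H : X.IdealSheafData) (hH : IsEffectiveCartier H) [IsIntegral H.subscheme]
    (W : X.IdealSheafData) (r : ℕ) (m : Fin r → ℕ) (hm : ∀ i, 0 < m i)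
    (dime : ForGeneric (H.subschemeι ≫ f) r fun Q =>
      H0 (traceScheme H W ⊓ ⨅ i, fatPoint (Q i).1 1) (restrictTo L H) = ⊥)
    (degue : ForGeneric (H.subschemeι ≫ f) r fun Q =>
      H0Twist (residualScheme H W ⊓ ⨅ i, simpleResidue H ((Q i).1 ≫ H.subschemeι) (m i)) L H = ⊥) :
    ForGeneric f r fun P =>
      H0 (W ⊓ ⨅ i, fatPoint (P i).1 (m i)) L = ⊥ := by
  obtain ⟨U, hne, ⟨e, he⟩, σ, _, z, hz0, hHz, hz⟩ := exists_etale_chart f hL hH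
  let := sectionAlgebra f U.1
  have hU : (U.1 : Set X).Nonempty := hne.elim fun y hy => ⟨_, hy⟩
  have : IsDomain Γ(X, U.1) := isDomain_section hU
  have : Algebra.FiniteType k Γ(X, U.1) := finiteType_sectionAlgebra f U.2
  obtain ⟨Q, hQ, hdime, hdegue⟩ := dime.exists_forall_mem degue hne
  let q (i : Fin r) : RatPoint f := ⟨(Q i).1 ≫ H.subschemeι, (Category.assoc _ _ _).trans (Q i).2⟩
  have hqz (i : Fin r) : evalAlgHom f (q i) (hQ i) (z none) = 0 :=
    evalAt_eq_zero_of_mem_ideal (hQ i) (hHz ▸ Ideal.mem_span_singleton_self _)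
  obtain ⟨D, hD, hDV⟩ := exists_generic_polynomial hz none (localExpressions f W e) hm hqz
    (fun a ⟨s, hs, ha⟩ haQ => Ideal.mem_span_singleton.1 <| hHz ▸
      mem_ideal_of_H0_traceScheme_eq_bot f hL hQ hs hdime he ha haQ)
    (fun b ⟨s, hs, hb⟩ hbQ => (mul_eq_zero.1 <|
      mul_eq_zero_of_H0Twist_eq_bot f hL hQ hs hH hne hdegue he.1 hHz hb hbQ).resolve_left hz0)
  exact forGeneric_of_aeval_ne_zero f U.2 D hD fun p hp hpD =>
    H0_inf_iInf_fatPoint_eq_bot f hL hU he.1 hp fun s hs a ha =>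
      hDV (fun i => evalAlgHom f (p i) (hp i)) hpD a ⟨s, hs, ha⟩

theorem statement_17 {k : Type u} [Field k] [IsAlgClosed k]
    (X : Scheme.{u}) (f : X ⟶ Spec (.of k)) (hf : IsProjective f) [IsIntegral X]
    (n : ℕ) (hn : topologicalKrullDim X = n)
    (L : X.Modules) (hL : IsLineBundle L)
    (H : X.IdealSheafData) (hH : IsEffectiveCartier H) [IsIntegral H.subscheme]
    (hHsing : ¬ (H.support : Set X) ⊆ singularLocus X)
    (W : X.IdealSheafData) (hW : ¬ W ≤ H)
    (r : ℕ) (m : Fin r → ℕ) (hm : ∀ i, 0 < m i)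
    -- (Dime)
    (dime : ForGeneric (H.subschemeι ≫ f) r fun Q =>
      H0 (traceScheme H W ⊓ ⨅ i, fatPoint (Q i).1 1) (restrictTo L H) = ⊥)
    -- (Degue)
    (degue : ForGeneric (H.subschemeι ≫ f) r fun Q =>
      H0Twist (residualScheme H W ⊓ ⨅ i, simpleResidue H ((Q i).1 ≫ H.subschemeι) (m i)) L H = ⊥) :
    ForGeneric f r fun P =>
      H0 (W ⊓ ⨅ i, fatPoint (P i).1 (m i)) L = ⊥ := by
  have := hf.locallyOfFiniteType
  exact statement_17_general X f L hL H hH W r m hm dime degue
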